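/- Let α,β>−1 and let φ∈L^∞(0,∞). Define, for θ,φ'∈(0,π) with θ≠φ', the Laplace-transform-type multiplier kernel M̃_φ^{α,β}(θ,φ')=−∫₀^∞ ∂_t H̃_t^{α,β}(θ,φ')·φ(t) dt (the integral converges absolutely). Then there exists a constant C=C(α,β) such that for all θ,φ'∈(0,π) with θ≠φ': |M̃_φ^{α,β}(θ,φ')| ≤ C‖φ‖_{L^∞}/μ⁺_{α,β}(B(θ,|θ−φ'|)) and |∂_θ M̃_φ^{α,β}(θ,φ')|+|∂_{φ'} M̃_φ^{α,β}(θ,φ')| ≤ C‖φ‖_{L^∞}/(|θ−φ'|·μ⁺_{α,β}(B(θ,|θ−φ'|))). -/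

import Mathlib

open MeasureTheory Real Set
open scoped ENNReal

noncomputable section

/-- The classical Jacobi polynomial `P_n^{α,β}`. -/
def jacobiP (α β : ℝ) (n : ℕ) (x : ℝ) : ℝ :=
  ∑ m ∈ Finset.range (n + 1),
    (Real.Gamma (α + n + 1) * Real.Gamma (α + β + n + m + 1)) /
      ((m.factorial : ℝ) * ((n - m).factorial : ℝ) * Real.Gamma (α + β + n + 1) *
        Real.Gamma (α + m + 1)) * ((x - 1) / 2) ^ m

/-- `Ψ^{α,β}(θ) = |sin(θ/2)|^{α+1/2} (cos(θ/2))^{β+1/2}`. -/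
def jPsi (α β θ : ℝ) : ℝ := |Real.sin (θ / 2)| ^ (α + 1 / 2) * Real.cos (θ / 2) ^ (β + 1 / 2)

/-- The measure `μ_{α,β}` on `(−π, π)`, with density `(Ψ^{α,β})²` w.r.t. Lebesgue measure. -/
def jacobiMeasure (α β : ℝ) : Measure ℝ :=
  (volume.restrict (Ioo (-π) π)).withDensity fun θ => ENNReal.ofReal (jPsi α β θ ^ 2)

/-- The restriction `μ⁺_{α,β}` of `μ_{α,β}` to `(0, π)`. -/
def jacobiMeasurePlus (α β : ℝ) : Measure ℝ := (jacobiMeasure α β).restrict (Ioo 0 π)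

/-- The normalizing constant `c_n^{α,β}` making `𝒫_n^{α,β}` have unit `L²(μ⁺)` norm. -/
def cJ (α β : ℝ) (n : ℕ) : ℝ :=
  (∫ θ, jacobiP α β n (Real.cos θ) ^ 2 ∂(jacobiMeasurePlus α β)) ^ (-(1 / 2) : ℝ)

/-- The normalized trigonometric Jacobi polynomial `𝒫_n^{α,β}(θ)`. -/
def trigP (α β : ℝ) (n : ℕ) (θ : ℝ) : ℝ := cJ α β n * jacobiP α β n (Real.cos θ)

/-- The eigenvalue `λ_n^{α,β} = (n + (α+β+1)/2)²`. -/
def jLam (α β : ℝ) (n : ℕ) : ℝ := ((n : ℝ) + (α + β + 1) / 2) ^ 2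

/-- The symmetrized system `Φ_n^{α,β}`. -/
def symPhi (α β : ℝ) (n : ℕ) (θ : ℝ) : ℝ :=
  if Even n then (Real.sqrt 2)⁻¹ * trigP α β (n / 2) θ
  else (Real.sqrt 2)⁻¹ * (Real.sin θ / 2) * trigP (α + 1) (β + 1) ((n - 1) / 2) θ

/-- The Jacobi functions `φ_n^{α,β} = Ψ^{α,β} 𝒫_n^{α,β}`. -/
def phiFun (α β : ℝ) (n : ℕ) (θ : ℝ) : ℝ := jPsi α β θ * trigP α β n θ

/-- The symmetrized Jacobi function system `Θ_n^{α,β}`. -/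
def jTheta (α β : ℝ) (n : ℕ) (θ : ℝ) : ℝ :=
  if Even n then (Real.sqrt 2)⁻¹ * phiFun α β (n / 2) θ
  else (Real.sqrt 2)⁻¹ * Real.sign θ * phiFun (α + 1) (β + 1) ((n - 1) / 2) θ

/-- The symmetrized Jacobi–Poisson semigroup `ℍ_t^{α,β}f(θ)` (polynomial setting). -/
def symH (α β : ℝ) (f : ℝ → ℝ) (t θ : ℝ) : ℝ :=
  ∑' n : ℕ, Real.exp (-t * Real.sqrt (jLam α β ((n + 1) / 2))) *
    (∫ φ, f φ * symPhi α β n φ ∂(jacobiMeasure α β)) * symPhi α β n θ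

/-- The symmetrized Jacobi–Poisson semigroup `H̄_t^{α,β}f(θ)` (function setting). -/
def symHbar (α β : ℝ) (f : ℝ → ℝ) (t θ : ℝ) : ℝ :=
  ∑' n : ℕ, Real.exp (-t * Real.sqrt (jLam α β ((n + 1) / 2))) *
    (∫ φ in Ioo (-π) π, f φ * jTheta α β n φ) * jTheta α β n θ

/-- The non-symmetrized Jacobi–Poisson semigroup `ℋ_t^{α,β}f(θ)` (polynomial setting). -/
def jacH (α β : ℝ) (f : ℝ → ℝ) (t θ : ℝ) : ℝ :=
  ∑' n : ℕ, Real.exp (-t * Real.sqrt (jLam α β n)) *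
    (∫ φ, f φ * trigP α β n φ ∂(jacobiMeasurePlus α β)) * trigP α β n θ

/-- The non-symmetrized Jacobi–Poisson semigroup `𝓗̄_t^{α,β}f(θ)` (function setting). -/
def jacHbar (α β : ℝ) (f : ℝ → ℝ) (t θ : ℝ) : ℝ :=
  ∑' n : ℕ, Real.exp (-t * Real.sqrt (jLam α β n)) *
    (∫ φ in Ioo 0 π, f φ * phiFun α β n φ) * phiFun α β n θ

/-- The symmetrized derivative `𝔻_{α,β}`. -/
def symD (α β : ℝ) (f : ℝ → ℝ) : ℝ → ℝ := fun θ =>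
  deriv f θ + (α - β + (α + β + 1) * Real.cos θ) / Real.sin θ * ((f θ - f (-θ)) / 2)

/-- The symmetrized derivative `D̄_{α,β}` (function setting). -/
def symDbar (α β : ℝ) (f : ℝ → ℝ) : ℝ → ℝ := fun θ =>
  deriv f θ -
    ((2 * α + 1) / 4 * (Real.cos (θ / 2) / Real.sin (θ / 2)) -
      (2 * β + 1) / 4 * Real.tan (θ / 2)) * f (-θ)

/-- The derivative `D_{α,β}` (non-symmetrized function setting). -/
def jacD (α β : ℝ) (f : ℝ → ℝ) : ℝ → ℝ := fun θ =>
  deriv f θ - (2 * α + 1) / 4 * (Real.cos (θ / 2) / Real.sin (θ / 2)) * f θ +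
    (2 * β + 1) / 4 * Real.tan (θ / 2) * f θ

/-- `δ*_{α,β} = −d/dθ − (α+1/2)cot(θ/2) + (β+1/2)tan(θ/2)`. -/
def delStar (α β : ℝ) (f : ℝ → ℝ) : ℝ → ℝ := fun θ =>
  -deriv f θ - (α + 1 / 2) * (Real.cos (θ / 2) / Real.sin (θ / 2)) * f θ +
    (β + 1 / 2) * Real.tan (θ / 2) * f θ

/-- `δ_N^even`: `N` alternating factors, rightmost (first applied) one being `δ = d/dθ`. -/
def deltaEven (α β : ℝ) : ℕ → (ℝ → ℝ) → ℝ → ℝ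
  | 0 => fun f => f
  | N + 1 => fun f => (if N % 2 = 0 then deriv else delStar α β) (deltaEven α β N f)

/-- `δ_N^odd`: `N` alternating factors, rightmost (first applied) one being `δ*_{α,β}`. -/
def deltaOdd (α β : ℝ) : ℕ → (ℝ → ℝ) → ℝ → ℝ
  | 0 => fun f => f
  | N + 1 => fun f => (if N % 2 = 0 then delStar α β else deriv) (deltaOdd α β N f)

/-- The Jacobi–Poisson kernel `H_t^{α,β}(θ,φ)` (even part of the symmetrized kernel). -/
def jHker (α β t θ φ : ℝ) : ℝ :=
  (1 / 2) * ∑' n : ℕ, Real.exp (-t * Real.sqrt (jLam α β n)) * trigP α β n θ * trigP α β n φ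

/-- The kernel `H̃_t^{α,β}(θ,φ)` (odd part of the symmetrized kernel). -/
def jHtil (α β t θ φ : ℝ) : ℝ :=
  (1 / 8) * Real.sin θ * Real.sin φ *
    ∑' n : ℕ, Real.exp (-t * Real.sqrt (jLam α β (n + 1))) *
      trigP (α + 1) (β + 1) n θ * trigP (α + 1) (β + 1) n φ

/-- `μ⁺_{α,β}(B(θ,r))` where `B(θ,r) = (θ−r, θ+r) ∩ (0,π)`. -/
def ballMeasure (α β θ r : ℝ) : ℝ≥0∞ := jacobiMeasurePlus α β (Ioo (θ - r) (θ + r))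

/-- The Muckenhoupt class `A_p^{α,β}` (`1 < p < ∞`) on `(−π,π)` w.r.t. `μ_{α,β}`. -/
def IsApWeight (α β p : ℝ) (w : ℝ → ℝ) : Prop :=
  (∀ θ, 0 ≤ w θ) ∧
    ∃ C : ℝ, ∀ a b : ℝ, -π ≤ a → a ≤ b → b ≤ π →
      (∫⁻ θ in Ioo a b, ENNReal.ofReal (w θ) ∂(jacobiMeasure α β)) *
          (∫⁻ θ in Ioo a b, ENNReal.ofReal (w θ ^ (-1 / (p - 1))) ∂(jacobiMeasure α β)) ^
            (p - 1) ≤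
        ENNReal.ofReal C * jacobiMeasure α β (Ioo a b) ^ p

/-- The Muckenhoupt class `A_1^{α,β}` on `(−π,π)` w.r.t. `μ_{α,β}`. -/
def IsA1Weight (α β : ℝ) (w : ℝ → ℝ) : Prop :=
  (∀ θ, 0 ≤ w θ) ∧
    ∃ C : ℝ, ∀ a b : ℝ, -π ≤ a → a ≤ b → b ≤ π →
      ∫⁻ θ in Ioo a b, ENNReal.ofReal (w θ) ∂(jacobiMeasure α β) ≤
        ENNReal.ofReal C *
          essInf (fun θ => ENNReal.ofReal (w θ)) ((jacobiMeasure α β).restrict (Ioo a b)) *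
          jacobiMeasure α β (Ioo a b)

/-- The Muckenhoupt class `(A_p^{α,β})⁺` (`1 < p < ∞`) on `(0,π)` w.r.t. `μ⁺_{α,β}`. -/
def IsApWeightPlus (α β p : ℝ) (w : ℝ → ℝ) : Prop :=
  (∀ θ, 0 ≤ w θ) ∧
    ∃ C : ℝ, ∀ a b : ℝ, 0 ≤ a → a ≤ b → b ≤ π →
      (∫⁻ θ in Ioo a b, ENNReal.ofReal (w θ) ∂(jacobiMeasurePlus α β)) *
          (∫⁻ θ in Ioo a b, ENNReal.ofReal (w θ ^ (-1 / (p - 1))) ∂(jacobiMeasurePlus α β)) ^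
            (p - 1) ≤
        ENNReal.ofReal C * jacobiMeasurePlus α β (Ioo a b) ^ p

/-- The Muckenhoupt class `(A_1^{α,β})⁺` on `(0,π)` w.r.t. `μ⁺_{α,β}`. -/
def IsA1WeightPlus (α β : ℝ) (w : ℝ → ℝ) : Prop :=
  (∀ θ, 0 ≤ w θ) ∧
    ∃ C : ℝ, ∀ a b : ℝ, 0 ≤ a → a ≤ b → b ≤ π →
      ∫⁻ θ in Ioo a b, ENNReal.ofReal (w θ) ∂(jacobiMeasurePlus α β) ≤
        ENNReal.ofReal C *
          essInf (fun θ => ENNReal.ofReal (w θ)) ((jacobiMeasurePlus α β).restrict (Ioo a b)) *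
          jacobiMeasurePlus α β (Ioo a b)

/-- The double power weight `w_{r,s}(θ) = |sin(θ/2)|^r (cos(θ/2))^s`. -/
def wrs (r s θ : ℝ) : ℝ := |Real.sin (θ / 2)| ^ r * Real.cos (θ / 2) ^ s


/-- The Laplace-transform-type multiplier kernel `M̃_φ^{α,β}(θ,ψ)`. -/
def lapKer (α β : ℝ) (φfun : ℝ → ℝ) (θ ψ : ℝ) : ℝ :=
  -∫ t in Ioi (0 : ℝ), deriv (fun s => jHtil α β s θ ψ) t * φfun t

namespace JK

/-- Pochhammer symbol. -/
def poch (x : ℝ) (m : ℕ) : ℝ := ∏ i ∈ Finset.range m, (x + i)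

lemma poch_zero (x : ℝ) : poch x 0 = 1 := by simp [poch]
lemma poch_succ (x : ℝ) (m : ℕ) : poch x (m + 1) = poch x m * (x + m) := by
  simp [poch, Finset.prod_range_succ]
lemma poch_succ' (x : ℝ) (m : ℕ) : poch x (m + 1) = x * poch (x + 1) m := by
  simp only [poch, Finset.prod_range_succ']
  rw [mul_comm]
  congr 1
  · simp
  · refine Finset.prod_congr rfl fun i _ => ?_
    push_cast; ring
lemma poch_pos {x : ℝ} (hx : 0 < x) (m : ℕ) : 0 < poch x m :=
  Finset.prod_pos fun i _ => by positivity
lemma poch_neg (n : ℕ) : ∀ k : ℕ, n < k → poch (-(n : ℝ)) k = 0 := by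
  intro k hk
  refine Finset.prod_eq_zero (i := n) (Finset.mem_range.2 hk) (by simp)

/-- Coefficients of the normalized Jacobi polynomial in the variable `(1-x)/2`. -/
def rc (a b : ℝ) (n m : ℕ) : ℝ :=
  poch (-(n : ℝ)) m * poch (n + a + b + 1) m / (m.factorial * poch (a + 1) m)

lemma rc_zero (a b : ℝ) (n : ℕ) : rc a b n 0 = 1 := by simp [rc, poch_zero]

lemma rc_succ (a b : ℝ) (ha : -1 < a) (n m : ℕ) :
    ((m : ℝ) + 1) * (m + a + 1) * rc a b n (m + 1) =
      (m * (m + a + b + 1) - n * (n + a + b + 1)) * rc a b n m := by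
  have h1 : poch (a + 1) m ≠ 0 := (poch_pos (by linarith) m).ne'
  have h2 : (a + 1 + m) ≠ 0 := by have : (0 : ℝ) ≤ m := by positivity
                                  linarith
  have h3 : ((m : ℝ) + 1) ≠ 0 := by positivity
  have h4 : (m.factorial : ℝ) ≠ 0 := by positivity
  simp only [rc, poch_succ, Nat.factorial_succ]
  push_cast
  field_simp
  ring

open Polynomial in
/-- The normalized Jacobi polynomial. -/
def RP (a b : ℝ) (n : ℕ) : ℝ[X] := ∑ m ∈ Finset.range (n + 1), C (rc a b n m) * X ^ m

open Polynomial in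
lemma RP_coeff (a b : ℝ) (n m : ℕ) : (RP a b n).coeff m = rc a b n m := by
  simp only [RP, finsetSum_coeff, coeff_C_mul, coeff_X_pow]
  by_cases h : m < n + 1
  · rw [Finset.sum_eq_single m] <;> simp +contextual [h]
    intro b _ h1 h2; exact absurd h2.symm h1
  · rw [Finset.sum_eq_zero]
    · rw [rc, poch_neg n m (by omega)]; simp
    · intro i hi
      have := Finset.mem_range.1 hi
      rw [if_neg (by omega)]; simp

open Polynomial in
/-- Jacobi operator on polynomials. -/
def LJ (a b : ℝ) (f : ℝ[X]) : ℝ[X] :=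
  X * (1 - X) * derivative (derivative f) + (C (a + 1) - C (a + b + 2) * X) * derivative f

open Polynomial in
lemma LJ_coeff (a b : ℝ) (f : ℝ[X]) (m : ℕ) : (LJ a b f).coeff m =
    (m + 1) * (m + a + 1) * f.coeff (m + 1) - m * (m + a + b + 1) * f.coeff m := by
  have : LJ a b f = X * derivative (derivative f) - X * (X * derivative (derivative f))
     + C (a + 1) * derivative f - C (a + b + 2) * (X * derivative f) := by
    rw [LJ]; ring
  rw [this]
  simp only [coeff_add, coeff_sub, coeff_C_mul]
  rcases m with _ | _ | m
  · simp [coeff_derivative, coeff_X_mul_zero]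
  · simp [coeff_derivative, coeff_X_mul, coeff_X_mul_zero]; ring
  · simp [coeff_derivative, coeff_X_mul]; ring

open Polynomial in
lemma LJ_uniq (a b : ℝ) (ha : -1 < a) (n : ℕ) (f : ℝ[X])
    (h : LJ a b f = C (-((n : ℝ) * (n + a + b + 1))) * f) :
    f = C (f.coeff 0) * RP a b n := by
  ext m
  rw [coeff_C_mul, RP_coeff]
  induction m with
  | zero => rw [rc_zero, mul_one]
  | succ m ih =>
    have h1 := congrArg (fun p => p.coeff m) h
    simp only [LJ_coeff, coeff_C_mul] at h1
    have h2 := rc_succ a b ha n m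
    have h3 : ((m : ℝ) + 1) * (m + a + 1) ≠ 0 := by
      have : (0 : ℝ) ≤ m := by positivity
      have : 0 < (m : ℝ) + a + 1 := by linarith
      positivity
    apply mul_left_cancel₀ h3
    rw [show ((m : ℝ) + 1) * (m + a + 1) * (f.coeff 0 * rc a b n (m + 1)) =
      f.coeff 0 * (((m : ℝ) + 1) * (m + a + 1) * rc a b n (m + 1)) by ring, h2]
    rw [ih] at h1
    linear_combination h1

open Polynomial in
lemma LJ_RP (a b : ℝ) (ha : -1 < a) (n : ℕ) :
    LJ a b (RP a b n) = C (-((n : ℝ) * (n + a + b + 1))) * RP a b n := by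
  ext m
  rw [LJ_coeff, coeff_C_mul, RP_coeff, RP_coeff]
  linear_combination rc_succ a b ha n m

open Polynomial in
lemma RP_derivative (a b : ℝ) (ha : -1 < a) (n : ℕ) :
    derivative (RP a b (n + 1)) =
      C (-(((n : ℝ) + 1) * (n + a + b + 2) / (a + 1))) * RP (a + 1) (b + 1) n := by
  ext m
  rw [coeff_derivative, coeff_C_mul, RP_coeff, RP_coeff]
  simp only [rc]
  rw [poch_succ', poch_succ', poch_succ', Nat.factorial_succ]
  have h1 : poch (a + 1 + 1) m ≠ 0 := (poch_pos (by linarith) m).ne'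
  have h2 : (a + 1) ≠ 0 := by linarith
  have h3 : ((m : ℝ) + 1) ≠ 0 := by positivity
  have h4 : (m.factorial : ℝ) ≠ 0 := by positivity
  push_cast
  rw [show -((n : ℝ) + 1) + 1 = -n by ring,
    show (n : ℝ) + 1 + a + b + 1 + 1 = n + (a + 1) + (b + 1) + 1 by ring]
  field_simp
  ring

open Polynomial in
/-- `∑ T_{jl}` polynomial in the first variable. -/
def TP (a b Y : ℝ) (j l : ℕ) : ℝ[X] :=
  C (Y ^ j * (1 - Y) ^ l / (j.factorial * l.factorial * poch (a + 1) j * poch (b + 1) l)) *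
    (X ^ j * (1 - X) ^ l)

open Polynomial in
lemma LJ_base (a b : ℝ) (j l : ℕ) : LJ a b (X ^ j * (1 - X) ^ l) =
    C ((j : ℝ) * (j + a)) * (X ^ (j - 1) * (1 - X) ^ l)
    + C ((l : ℝ) * (l + b)) * (X ^ j * (1 - X) ^ (l - 1))
    - C (((j : ℝ) + l) * (j + l + a + b + 1)) * (X ^ j * (1 - X) ^ l) := by
  have d1 : derivative (1 - X : ℝ[X]) = -1 := by simp
  have c2 : (C 2 : ℝ[X]) = 2 := rfl
  rcases j with _ | j
  · rcases l with _ | l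
    · simp [c2, LJ]
    · rcases l with _ | l
      · simp [c2, LJ, d1]; ring
      · simp [c2, LJ, derivative_pow, d1]; ring
  · rcases j with _ | j
    · rcases l with _ | l
      · simp [c2, LJ]; ring
      · rcases l with _ | l
        · simp [c2, LJ, d1]; ring
        · simp [c2, LJ, derivative_pow, d1, derivative_mul]; ring
    · rcases l with _ | l
      · simp [c2, LJ, derivative_pow]; ring
      · rcases l with _ | l
        · simp [c2, LJ, derivative_pow, d1, derivative_mul]; ring
        · simp [c2, LJ, derivative_pow, d1, derivative_mul]; ring

open Polynomial in
lemma LJ_C_mul (a b c : ℝ) (f : ℝ[X]) : LJ a b (C c * f) = C c * LJ a b f := by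
  simp [LJ]; ring

open Polynomial in
lemma LJ_add (a b : ℝ) (f g : ℝ[X]) : LJ a b (f + g) = LJ a b f + LJ a b g := by
  simp [LJ]; ring

open Polynomial in
lemma LJ_sum {ι : Type*} (a b : ℝ) (s : Finset ι) (f : ι → ℝ[X]) :
    LJ a b (∑ i ∈ s, f i) = ∑ i ∈ s, LJ a b (f i) := by
  classical
  induction s using Finset.induction_on with
  | empty => simp [LJ]
  | insert i s hi ih => rw [Finset.sum_insert hi, Finset.sum_insert hi, LJ_add, ih]

open Polynomial in
/-- shifted in first index -/
def TPl (a b Y : ℝ) : ℕ → ℕ → ℝ[X]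
  | 0, _ => 0
  | j + 1, l => TP a b Y j l
open Polynomial in
/-- shifted in second index -/
def TPr (a b Y : ℝ) : ℕ → ℕ → ℝ[X]
  | _, 0 => 0
  | j, l + 1 => TP a b Y j l

open Polynomial in
lemma LJ_TP (a b Y : ℝ) (ha : -1 < a) (hb : -1 < b) (j l : ℕ) :
    LJ a b (TP a b Y j l) = C Y * TPl a b Y j l + C (1 - Y) * TPr a b Y j l
      - C (((j : ℝ) + l) * (j + l + a + b + 1)) * TP a b Y j l := by
  have e1 : C (Y ^ j * (1 - Y) ^ l / (j.factorial * l.factorial * poch (a + 1) j * poch (b + 1) l))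
      * (C ((j : ℝ) * (j + a)) * (X ^ (j - 1) * (1 - X) ^ l)) = C Y * TPl a b Y j l := by
    rcases j with _ | j
    · simp [TPl]
    · simp only [TPl, TP, add_tsub_cancel_right]
      rw [← mul_assoc (C _), ← mul_assoc (C _), ← C_mul, ← C_mul]
      congr 2
      have h1 : poch (a + 1) j ≠ 0 := (poch_pos (by linarith) j).ne'
      have h1' : poch (b + 1) l ≠ 0 := (poch_pos (by linarith) l).ne'
      have h2 : a + 1 + j ≠ 0 := by
        have : (0 : ℝ) ≤ j := by positivity
        linarith
      rw [poch_succ, Nat.factorial_succ]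
      have h4 : (j.factorial : ℝ) ≠ 0 := by positivity
      have h5 : (l.factorial : ℝ) ≠ 0 := by positivity
      push_cast
      field_simp
      ring
  have e2 : C (Y ^ j * (1 - Y) ^ l / (j.factorial * l.factorial * poch (a + 1) j * poch (b + 1) l))
      * (C ((l : ℝ) * (l + b)) * (X ^ j * (1 - X) ^ (l - 1))) = C (1 - Y) * TPr a b Y j l := by
    rcases l with _ | l
    · simp [TPr]
    · simp only [TPr, TP, add_tsub_cancel_right]
      rw [← mul_assoc (C _), ← mul_assoc (C _), ← C_mul, ← C_mul]
      congr 2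
      have h1 : poch (a + 1) j ≠ 0 := (poch_pos (by linarith) j).ne'
      have h1' : poch (b + 1) l ≠ 0 := (poch_pos (by linarith) l).ne'
      have h2 : b + 1 + l ≠ 0 := by
        have : (0 : ℝ) ≤ l := by positivity
        linarith
      rw [poch_succ, Nat.factorial_succ]
      have h4 : (j.factorial : ℝ) ≠ 0 := by positivity
      have h5 : (l.factorial : ℝ) ≠ 0 := by positivity
      push_cast
      field_simp
      ring
  rw [← e1, ← e2, TP, LJ_C_mul, LJ_base]
  ring

open Polynomial in
/-- `τ_k` as a polynomial in the first variable. -/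
def tauP (a b Y : ℝ) (k : ℕ) : ℝ[X] := ∑ p ∈ Finset.HasAntidiagonal.antidiagonal k, TP a b Y p.1 p.2

open Polynomial in
lemma LJ_tauP_succ (a b Y : ℝ) (ha : -1 < a) (hb : -1 < b) (k : ℕ) :
    LJ a b (tauP a b Y (k + 1)) = tauP a b Y k
      - C (((k : ℝ) + 1) * (k + 1 + a + b + 1)) * tauP a b Y (k + 1) := by
  have h1 : ∑ p ∈ Finset.HasAntidiagonal.antidiagonal (k + 1), TPl a b Y p.1 p.2 = tauP a b Y k := by
    rw [Finset.Nat.antidiagonal_succ]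
    simp [TPl, tauP]
  have h2 : ∑ p ∈ Finset.HasAntidiagonal.antidiagonal (k + 1), TPr a b Y p.1 p.2 = tauP a b Y k := by
    rw [Finset.Nat.antidiagonal_succ']
    simp [TPr, tauP]
  have : LJ a b (tauP a b Y (k + 1)) = ∑ p ∈ Finset.HasAntidiagonal.antidiagonal (k + 1),
      (C Y * TPl a b Y p.1 p.2 + C (1 - Y) * TPr a b Y p.1 p.2
      - C (((k : ℝ) + 1) * (k + 1 + a + b + 1)) * TP a b Y p.1 p.2) := by
    rw [tauP, LJ_sum]
    refine Finset.sum_congr rfl fun p hp => ?_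
    rw [LJ_TP a b Y ha hb]
    have : ((p.1 : ℝ) + p.2) = k + 1 := by
      exact_mod_cast (Finset.HasAntidiagonal.mem_antidiagonal.1 hp)
    rw [this]
  rw [this, Finset.sum_sub_distrib, Finset.sum_add_distrib, ← Finset.mul_sum, ← Finset.mul_sum,
    ← Finset.mul_sum, h1, h2]
  change C Y * tauP a b Y k + C (1 - Y) * tauP a b Y k - C _ * tauP a b Y (k + 1) = _
  simp only [C_sub, C_1]
  ring

open Polynomial in
lemma LJ_tauP_zero (a b Y : ℝ) : LJ a b (tauP a b Y 0) = 0 := by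
  simp [tauP, LJ, TP, poch_zero]

/-- coefficients `(-n)_k (n+a+b+1)_k`. -/
def ec (a b : ℝ) (n k : ℕ) : ℝ := poch (-(n : ℝ)) k * poch (n + a + b + 1) k

lemma ec_succ (a b : ℝ) (n k : ℕ) : ec a b n (k + 1) =
    (k * (k + a + b + 1) - n * (n + a + b + 1)) * ec a b n k := by
  simp only [ec, poch_succ]; ring

lemma ec_big (a b : ℝ) (n : ℕ) : ec a b n (n + 1) = 0 := by
  simp [ec, poch_neg n (n + 1) (by omega)]

open Polynomial in
/-- The terminating `F₄` polynomial. -/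
def WP (a b Y : ℝ) (n : ℕ) : ℝ[X] := ∑ k ∈ Finset.range (n + 1), C (ec a b n k) * tauP a b Y k

open Polynomial in
lemma LJ_WP (a b Y : ℝ) (ha : -1 < a) (hb : -1 < b) (n : ℕ) :
    LJ a b (WP a b Y n) = C (-((n : ℝ) * (n + a + b + 1))) * WP a b Y n := by
  have key : ∀ N : ℕ, ∑ k ∈ Finset.range (N + 1), C (ec a b n k) * LJ a b (tauP a b Y k) =
      C (-((n : ℝ) * (n + a + b + 1))) * (∑ k ∈ Finset.range (N + 1), C (ec a b n k) * tauP a b Y k)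
      - C (ec a b n (N + 1)) * tauP a b Y N := by
    intro N
    induction N with
    | zero =>
      simp only [zero_add, Finset.sum_range_one, LJ_tauP_zero, ec_succ a b n 0]
      simp
      ring
    | succ N ih =>
      rw [Finset.sum_range_succ, ih, Finset.sum_range_succ _ (N + 1), LJ_tauP_succ a b Y ha hb,
        ec_succ a b n (N + 1)]
      simp only [C_mul, C_sub, C_neg]
      push_cast
      simp only [C_mul, C_add, C_1]
      ring
  rw [WP, LJ_sum]
  simp only [LJ_C_mul]
  rw [key, ec_big]
  simp

/-- `τ_k(X,Y)`. -/
def tau (a b x y : ℝ) (k : ℕ) : ℝ := ∑ p ∈ Finset.HasAntidiagonal.antidiagonal k,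
  (x * y) ^ p.1 * ((1 - x) * (1 - y)) ^ p.2 /
    (p.1.factorial * p.2.factorial * poch (a + 1) p.1 * poch (b + 1) p.2)

lemma eval_tauP (a b x y : ℝ) (k : ℕ) : (tauP a b y k).eval x = tau a b x y k := by
  simp only [tauP, TP, tau, Polynomial.eval_finsetSum]
  refine Finset.sum_congr rfl fun p _ => ?_
  simp [mul_pow]; ring

lemma tau_symm (a b x y : ℝ) (k : ℕ) : tau a b x y k = tau a b y x k := by
  simp only [tau, mul_comm x y, mul_comm (1 - x) (1 - y)]

/-- `F₄` value. -/
def WV (a b : ℝ) (n : ℕ) (x y : ℝ) : ℝ := ∑ k ∈ Finset.range (n + 1), ec a b n k * tau a b x y k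

lemma eval_WP (a b x y : ℝ) (n : ℕ) : (WP a b y n).eval x = WV a b n x y := by
  simp [WP, WV, Polynomial.eval_finsetSum, eval_tauP]

lemma WV_symm (a b x y : ℝ) (n : ℕ) : WV a b n x y = WV a b n y x := by
  simp only [WV, tau_symm a b x y]

lemma eval_RP_zero (a b : ℝ) (n : ℕ) : (RP a b n).eval 0 = 1 := by
  rw [← Polynomial.coeff_zero_eq_eval_zero, RP_coeff, rc_zero]

lemma WV_fact1 (a b : ℝ) (ha : -1 < a) (hb : -1 < b) (n : ℕ) (x y : ℝ) :
    WV a b n x y = WV a b n 0 y * (RP a b n).eval x := by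
  have := LJ_uniq a b ha n _ (LJ_WP a b y ha hb n)
  rw [← eval_WP, this, Polynomial.eval_mul, Polynomial.eval_C, Polynomial.coeff_zero_eq_eval_zero,
    eval_WP]

lemma WV_zero_one (a b : ℝ) (n : ℕ) : WV a b n 0 1 = 1 := by
  rw [WV, Finset.sum_eq_single 0]
  · simp [ec, tau, poch_zero]
  · intro k _ hk
    rw [tau, Finset.sum_eq_zero, mul_zero]
    intro p hp
    have := Finset.HasAntidiagonal.mem_antidiagonal.1 hp
    have h : p.1 ≠ 0 ∨ p.2 ≠ 0 := by omega
    rcases h with h | h <;> simp [h]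
  · simp

/-- The product formula. -/
lemma WV_product (a b : ℝ) (ha : -1 < a) (hb : -1 < b) (n : ℕ) (x y : ℝ) :
    (RP a b n).eval 1 * WV a b n x y = (RP a b n).eval x * (RP a b n).eval y := by
  have h1 := WV_fact1 a b ha hb n
  have h2 : ∀ y, WV a b n 0 y = WV a b n 0 0 * (RP a b n).eval y := by
    intro y; rw [WV_symm, h1]
  have h3 := WV_zero_one a b n
  rw [h2] at h3
  rw [h1, h2]
  linear_combination ((RP a b n).eval x * (RP a b n).eval y) * h3

lemma RP_one_ne (a b : ℝ) (ha : -1 < a) (hb : -1 < b) (n : ℕ) : (RP a b n).eval 1 ≠ 0 := by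
  have h3 := WV_zero_one a b n
  rw [WV_symm, WV_fact1 a b ha hb] at h3
  intro h
  rw [h] at h3; simp at h3

lemma RP_one_succ (a b : ℝ) (ha : -1 < a) (hb : -1 < b) (n : ℕ) :
    (RP a b (n + 1)).eval 1 = -((b + 1) / (a + 1)) * (RP (a + 1) (b + 1) n).eval 1 := by
  have h := congrArg (Polynomial.eval 1) (LJ_RP a b ha (n + 1))
  rw [LJ, RP_derivative a b ha] at h
  simp at h
  have h1 : (n : ℝ) + 1 ≠ 0 := by positivity
  have h2 : (n : ℝ) + a + b + 2 ≠ 0 := by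
    have : (0 : ℝ) ≤ n := by positivity
    linarith
  have h3 : a + 1 ≠ 0 := by linarith
  rw [show (n : ℝ) + 1 + a + b + 1 = n + a + b + 2 by ring] at h
  have h4 : ((n : ℝ) + 1) * (n + a + b + 2) ≠ 0 := mul_ne_zero h1 h2
  apply mul_left_cancel₀ h4
  field_simp at h ⊢
  linear_combination -h

end JK

namespace JK

/-- Weight in the angular variable. -/
def wt (a b θ : ℝ) : ℝ := sin (θ / 2) ^ (2 * a + 1) * cos (θ / 2) ^ (2 * b + 1)

/-- Integral of a polynomial in `sin²(θ/2)` against the weight. -/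
def IP (a b : ℝ) (f : Polynomial ℝ) : ℝ :=
  ∫ θ in (0 : ℝ)..π, wt a b θ * f.eval (sin (θ / 2) ^ 2)

lemma wt_continuous {a b : ℝ} (ha : 0 < a) (hb : 0 < b) : Continuous (wt a b) := by
  unfold wt
  refine Continuous.mul ?_ ?_
  · exact Continuous.rpow_const (by fun_prop) (fun x => Or.inr (by linarith))
  · exact Continuous.rpow_const (by fun_prop) (fun x => Or.inr (by linarith))

lemma IP_cont {a b : ℝ} (ha : 0 < a) (hb : 0 < b) (f : Polynomial ℝ) :
    Continuous fun θ => wt a b θ * f.eval (sin (θ / 2) ^ 2) := by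
  refine (wt_continuous ha hb).mul ?_
  exact f.continuous.comp (by fun_prop)

lemma IP_add {a b : ℝ} (ha : 0 < a) (hb : 0 < b) (f g : Polynomial ℝ) :
    IP a b (f + g) = IP a b f + IP a b g := by
  unfold IP
  rw [← intervalIntegral.integral_add ((IP_cont ha hb f).intervalIntegrable _ _)
    ((IP_cont ha hb g).intervalIntegrable _ _)]
  simp [mul_add]

lemma IP_C_mul (a b c : ℝ) (f : Polynomial ℝ) :
    IP a b (Polynomial.C c * f) = c * IP a b f := by
  unfold IP
  rw [← intervalIntegral.integral_const_mul]
  congr 1; ext θ; simp; ring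

lemma sin_half_nonneg {θ : ℝ} (h : θ ∈ Icc 0 π) : 0 ≤ sin (θ / 2) :=
  sin_nonneg_of_nonneg_of_le_pi (by linarith [h.1]) (by linarith [h.2, pi_pos])
lemma cos_half_nonneg {θ : ℝ} (h : θ ∈ Icc 0 π) : 0 ≤ cos (θ / 2) :=
  cos_nonneg_of_mem_Icc ⟨by linarith [h.1, pi_pos], by linarith [h.2]⟩
lemma sin_half_pos {θ : ℝ} (h : θ ∈ Ioo 0 π) : 0 < sin (θ / 2) :=
  sin_pos_of_pos_of_lt_pi (by linarith [h.1]) (by linarith [h.2, pi_pos])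
lemma cos_half_pos {θ : ℝ} (h : θ ∈ Ioo 0 π) : 0 < cos (θ / 2) :=
  cos_pos_of_mem_Ioo ⟨by linarith [h.1, pi_pos], by linarith [h.2]⟩

open Polynomial in
lemma IP_parts {a b : ℝ} (ha : 0 < a) (hb : 0 < b) (h : ℝ[X]) :
    IP a b (C (a + 1) * ((1 - X) * h) + C (-(b + 1)) * (X * h) + X * (1 - X) * derivative h) = 0 := by
  have hd : ∀ θ ∈ uIcc 0 π, HasDerivAt
      (fun θ => sin (θ / 2) ^ (2 * a + 2) * cos (θ / 2) ^ (2 * b + 2) * h.eval (sin (θ / 2) ^ 2))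
      (wt a b θ * (C (a + 1) * ((1 - X) * h) + C (-(b + 1)) * (X * h)
        + X * (1 - X) * derivative h).eval (sin (θ / 2) ^ 2)) θ := by
    intro θ hθ
    rw [uIcc_of_le pi_pos.le] at hθ
    have hs := sin_half_nonneg hθ
    have hc := cos_half_nonneg hθ
    have d0 : HasDerivAt (fun θ : ℝ => θ / 2) (1 / 2) θ := (hasDerivAt_id θ).div_const 2
    have d1 : HasDerivAt (fun θ : ℝ => sin (θ / 2)) (cos (θ / 2) * (1 / 2)) θ := d0.sin
    have d2 : HasDerivAt (fun θ : ℝ => cos (θ / 2)) (-sin (θ / 2) * (1 / 2)) θ := d0.cos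
    have d3 := d1.rpow_const (p := 2 * a + 2) (Or.inr (by linarith))
    have d4 := d2.rpow_const (p := 2 * b + 2) (Or.inr (by linarith))
    have d5 : HasDerivAt (fun θ : ℝ => h.eval (sin (θ / 2) ^ 2))
        ((derivative h).eval (sin (θ / 2) ^ 2) * (2 * sin (θ / 2) * (cos (θ / 2) * (1 / 2)))) θ := by
      have := (h.hasDerivAt (sin (θ / 2) ^ 2)).comp θ (d1.fun_pow 2)
      simpa [Function.comp_def] using this
    have d6 := (d3.fun_mul d4).fun_mul d5
    refine d6.congr_deriv ?_
    have e1 : sin (θ / 2) ^ (2 * a + 2) = sin (θ / 2) ^ (2 * a + 1) * sin (θ / 2) := by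
      rw [← rpow_add_one' hs (by linarith)]; ring_nf
    have e2 : cos (θ / 2) ^ (2 * b + 2) = cos (θ / 2) ^ (2 * b + 1) * cos (θ / 2) := by
      rw [← rpow_add_one' hc (by linarith)]; ring_nf
    have e3 : (1 : ℝ) - sin (θ / 2) ^ 2 = cos (θ / 2) ^ 2 := by
      rw [← sin_sq_add_cos_sq (θ / 2)]; ring
    simp only [eval_add, eval_mul, eval_C, eval_sub, eval_one, eval_X, e3, wt]
    rw [show 2 * a + 2 - 1 = 2 * a + 1 by ring, show 2 * b + 2 - 1 = 2 * b + 1 by ring, e1, e2]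
    ring
  unfold IP
  rw [intervalIntegral.integral_eq_sub_of_hasDerivAt hd ((IP_cont ha hb _).intervalIntegrable _ _)]
  rw [cos_pi_div_two, zero_div, sin_zero, zero_rpow (by linarith), zero_rpow (by linarith)]
  simp

open Polynomial in
lemma IP_LJ {a b : ℝ} (ha : 0 < a) (hb : 0 < b) (f g : ℝ[X]) :
    IP a b (LJ a b f * g) + IP a b (X * (1 - X) * (derivative f * derivative g)) = 0 := by
  rw [← IP_add ha hb, ← IP_parts ha hb (derivative f * g), LJ]
  congr 1
  simp only [derivative_mul, C_add, C_neg, C_1]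
  rw [show (C 2 : ℝ[X]) = 2 from rfl]
  ring

open Polynomial in
lemma IP_shift {a b : ℝ} (ha : 0 < a) (hb : 0 < b) (f : ℝ[X]) :
    IP (a + 1) (b + 1) f = IP a b (X * (1 - X) * f) := by
  unfold IP
  refine intervalIntegral.integral_congr fun θ hθ => ?_
  rw [uIcc_of_le pi_pos.le] at hθ
  have hs := sin_half_nonneg hθ
  have hc := cos_half_nonneg hθ
  have e3 : (1 : ℝ) - sin (θ / 2) ^ 2 = cos (θ / 2) ^ 2 := by
    rw [← sin_sq_add_cos_sq (θ / 2)]; ring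
  have e1 : sin (θ / 2) ^ (2 * (a + 1) + 1) = sin (θ / 2) ^ (2 * a + 1) * sin (θ / 2) ^ 2 := by
    rw [← rpow_natCast, ← rpow_add' hs (by push_cast; linarith)]; push_cast; ring_nf
  have e2 : cos (θ / 2) ^ (2 * (b + 1) + 1) = cos (θ / 2) ^ (2 * b + 1) * cos (θ / 2) ^ 2 := by
    rw [← rpow_natCast, ← rpow_add' hc (by push_cast; linarith)]; push_cast; ring_nf
  simp only [wt, e1, e2, eval_mul, eval_sub, eval_one, eval_X, e3]
  ring

/-- Squared norm of the normalized Jacobi polynomial. -/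
def NN (a b : ℝ) (n : ℕ) : ℝ := IP a b (RP a b n * RP a b n)

open Polynomial in
lemma NN_succ {a b : ℝ} (ha : 0 < a) (hb : 0 < b) (n : ℕ) :
    NN a b (n + 1) = ((n + 1) * (n + a + b + 2)) / (a + 1) ^ 2 * NN (a + 1) (b + 1) n := by
  have h := IP_LJ ha hb (RP a b (n + 1)) (RP a b (n + 1))
  rw [LJ_RP a b (by linarith), RP_derivative a b (by linarith), mul_assoc, IP_C_mul] at h
  rw [NN, NN, IP_shift ha hb]
  rw [show ∀ c : ℝ, X * (1 - X) * (C c * RP (a + 1) (b + 1) n * (C c * RP (a + 1) (b + 1) n)) =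
    C (c * c) * (X * (1 - X) * (RP (a + 1) (b + 1) n * RP (a + 1) (b + 1) n)) by
      intro c; rw [C_mul]; ring, IP_C_mul] at h
  have h1 : ((n : ℝ) + 1) * (n + a + b + 2) ≠ 0 := by positivity
  apply mul_left_cancel₀ h1
  push_cast at h
  have h3 : a + 1 ≠ 0 := by linarith
  generalize IP a b (X * (1 - X) * (RP (a + 1) (b + 1) n * RP (a + 1) (b + 1) n)) = u at h ⊢
  generalize IP a b (RP a b (n + 1) * RP a b (n + 1)) = v at h ⊢
  rw [div_mul_eq_mul_div, mul_div_assoc']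
  rw [eq_div_iff (by positivity)]
  field_simp at h
  linear_combination -h

open Polynomial in
lemma NN_zero_shift {a b : ℝ} (ha : 0 < a) (hb : 0 < b) :
    NN (a + 1) (b + 1) 0 = (a + 1) * (b + 1) / ((a + b + 2) * (a + b + 3)) * NN a b 0 := by
  have r0 : ∀ a b : ℝ, RP a b 0 = 1 := by intro a b; simp [RP, rc_zero]
  have h1 := IP_parts ha hb 1
  have h2 := IP_parts ha hb X
  rw [NN, NN, r0, r0, IP_shift ha hb]
  have i1 : IP a b (X * (1 - X) * (1 * 1)) = IP a b X - IP a b (X * X) := by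
    rw [show (X * (1 - X) * (1 * 1) : ℝ[X]) = X + C (-1) * (X * X) by simp; ring,
      IP_add ha hb, IP_C_mul]; ring
  have i2 : (a + 1) * (IP a b 1 - IP a b X) - (b + 1) * IP a b X = 0 := by
    rw [← h1]
    rw [show (C (a + 1) * ((1 - X) * 1) + C (-(b + 1)) * (X * 1) + X * (1 - X) * derivative 1 : ℝ[X])
      = C (a + 1) * 1 + C (-(a + 1) - (b + 1)) * X by simp; ring]
    rw [IP_add ha hb, IP_C_mul, IP_C_mul]; ring
  have i3 : (a + 2) * (IP a b X - IP a b (X * X)) - (b + 1) * IP a b (X * X) = 0 := by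
    rw [← h2]
    rw [show (C (a + 1) * ((1 - X) * X) + C (-(b + 1)) * (X * X) + X * (1 - X) * derivative X : ℝ[X])
      = C (a + 2) * X + C (-(a + 2) - (b + 1)) * (X * X) by
        simp; rw [show (C 2 : ℝ[X]) = 2 from rfl]; ring]
    rw [IP_add ha hb, IP_C_mul, IP_C_mul]; ring
  rw [i1, mul_one]
  field_simp
  have e1 : (a + b + 2) * IP a b X = (a + 1) * IP a b 1 := by linear_combination -i2
  have e2 : (a + b + 3) * IP a b (X * X) = (a + 2) * IP a b X := by linear_combination -i3
  linear_combination (b + 1) * e1 - (a + b + 2) * e2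

lemma NN_formula (n : ℕ) : ∀ {a b : ℝ}, 0 < a → 0 < b →
    NN a b n * (2 * n + a + b + 1) * poch (a + b + 1) n * (-1) ^ n =
      (a + b + 1) * NN a b 0 * (RP a b n).eval 1 * n.factorial := by
  induction n with
  | zero =>
    intro a b ha hb
    simp [poch_zero, RP, rc_zero]; ring
  | succ n ih =>
    intro a b ha hb
    have h := ih (a := a + 1) (b := b + 1) (by linarith) (by linarith)
    rw [NN_zero_shift ha hb] at h
    have h1 := RP_one_succ a b (by linarith) (by linarith) n
    have h2 := NN_succ ha hb n
    have hp1 : poch (a + b + 1) (n + 1) * (n + a + b + 2) =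
        (a + b + 1) * (a + b + 2) * poch (a + 1 + (b + 1) + 1) n := by
      have : poch (a + b + 1) (n + 2) = (a + b + 1) * ((a + b + 2) * poch (a + 1 + (b + 1) + 1) n) := by
        rw [poch_succ', poch_succ']; ring_nf
      rw [poch_succ] at this
      push_cast at this
      linear_combination this
    rw [h1, h2, Nat.factorial_succ, pow_succ (-1 : ℝ) n]
    push_cast
    have h' : NN (a + 1) (b + 1) n * (2 * n + a + b + 3) * poch (a + 1 + (b + 1) + 1) n * (-1) ^ n
        * (a + b + 2) = (a + 1) * (b + 1) * NN a b 0 * (RP (a + 1) (b + 1) n).eval 1 * n.factorial := by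
      have e : (a + 1 + (b + 1) + 1) * ((a + 1) * (b + 1) / ((a + b + 2) * (a + b + 3)) * NN a b 0) *
          (RP (a + 1) (b + 1) n).eval 1 * n.factorial * (a + b + 2) = (a + 1) * (b + 1) * NN a b 0 *
          (RP (a + 1) (b + 1) n).eval 1 * n.factorial := by
        field_simp; ring
      rw [← e, ← h]; ring
    have h3 : a + 1 ≠ 0 := by linarith
    have h4 : (a + 1) ^ 2 ≠ 0 := pow_ne_zero _ h3
    apply mul_left_cancel₀ h4
    have e1 : (a + 1) ^ 2 * (((n : ℝ) + 1) * (n + a + b + 2) / (a + 1) ^ 2 * NN (a + 1) (b + 1) n *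
        (2 * (n + 1) + a + b + 1) * poch (a + b + 1) (n + 1) * ((-1) ^ n * -1)) =
        ((n : ℝ) + 1) * (n + a + b + 2) * NN (a + 1) (b + 1) n *
        (2 * (n + 1) + a + b + 1) * poch (a + b + 1) (n + 1) * ((-1) ^ n * -1) := by
      field_simp
    have e2 : (a + 1) ^ 2 * ((a + b + 1) * NN a b 0 *
        (-((b + 1) / (a + 1)) * (RP (a + 1) (b + 1) n).eval 1) * ((n + 1) * n.factorial)) =
        -(a + 1) * (a + b + 1) * NN a b 0 *
        ((b + 1) * (RP (a + 1) (b + 1) n).eval 1) * ((n + 1) * n.factorial) := by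
      field_simp
    rw [e1, e2]
    linear_combination (-((n : ℝ) + 1) * NN (a + 1) (b + 1) n
      * (2 * (n + 1) + a + b + 1) * (-1) ^ n) * hp1
      - ((n : ℝ) + 1) * (a + b + 1) * h'

lemma NN_zero_pos {a b : ℝ} (ha : 0 < a) (hb : 0 < b) : 0 < NN a b 0 := by
  unfold NN IP
  refine intervalIntegral.intervalIntegral_pos_of_pos_on
    ((IP_cont ha hb _).intervalIntegrable _ _) (fun θ hθ => ?_) pi_pos
  simp only [RP, zero_add, Finset.sum_range_one, rc_zero, Polynomial.C_1, pow_zero, mul_one,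
    Polynomial.eval_one, wt]
  have := sin_half_pos hθ
  have := cos_half_pos hθ
  positivity

lemma NN_ne {a b : ℝ} (ha : 0 < a) (hb : 0 < b) (n : ℕ) : NN a b n ≠ 0 := by
  intro h
  have h1 := NN_formula n ha hb
  rw [h] at h1
  have h2 := RP_one_ne a b (by linarith) (by linarith) n
  have h3 := (NN_zero_pos ha hb).ne'
  have h4 : (a + b + 1) * NN a b 0 * (RP a b n).eval 1 * n.factorial ≠ 0 := by positivity
  apply h4; rw [← h1]; ring

lemma Gamma_poch (x : ℝ) (hx : 0 < x) (m : ℕ) : Gamma (x + m) = poch x m * Gamma x := by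
  induction m with
  | zero => simp [poch_zero]
  | succ m ih =>
    push_cast
    rw [← add_assoc, Gamma_add_one (by positivity), ih, poch_succ]; ring

lemma poch_neg_fact (n m : ℕ) (h : m ≤ n) :
    poch (-(n : ℝ)) m * (n - m).factorial = (-1) ^ m * n.factorial := by
  induction m with
  | zero => simp [poch_zero]
  | succ m ih =>
    have := ih (by omega)
    have e : n - m = (n - (m + 1)) + 1 := by omega
    rw [e, Nat.factorial_succ] at this
    rw [poch_succ, pow_succ]
    have e2 : ((n - (m + 1) : ℕ) : ℝ) + 1 = n - m := by
      rw [Nat.cast_sub h]; push_cast; ring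
    push_cast at this
    rw [e2] at this
    linear_combination -this

/-- Value of the Jacobi polynomial at `1`. -/
def kap (a : ℝ) (n : ℕ) : ℝ := Gamma (a + n + 1) / (n.factorial * Gamma (a + 1))

lemma kap_pos {a : ℝ} (ha : 0 < a) (n : ℕ) : 0 < kap a n := by
  unfold kap
  have := Gamma_pos_of_pos (s := a + n + 1) (by positivity)
  have := Gamma_pos_of_pos (s := a + 1) (by positivity)
  positivity

lemma jacobiP_eq {a b : ℝ} (ha : 0 < a) (hb : 0 < b) (n : ℕ) (θ : ℝ) :
    jacobiP a b n (cos θ) = kap a n * (RP a b n).eval (sin (θ / 2) ^ 2) := by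
  have hc : (cos θ - 1) / 2 = - sin (θ / 2) ^ 2 := by
    have : cos θ = cos (2 * (θ / 2)) := by ring_nf
    rw [this, cos_two_mul, cos_sq']; ring
  rw [jacobiP, RP, Polynomial.eval_finsetSum, Finset.mul_sum, hc]
  refine Finset.sum_congr rfl fun m hm => ?_
  have hm' : m ≤ n := by have := Finset.mem_range.1 hm; omega
  simp only [Polynomial.eval_mul, Polynomial.eval_C, Polynomial.eval_pow, Polynomial.eval_X, rc, kap]
  have g1 := Gamma_poch (a + b + n + 1) (by positivity) m
  have g2 := Gamma_poch (a + 1) (by positivity) m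
  have g3 := poch_neg_fact n m hm'
  have p1 := Gamma_pos_of_pos (s := a + b + n + 1) (by positivity)
  have p2 := Gamma_pos_of_pos (s := a + 1) (by positivity)
  have p3 := poch_pos (x := a + 1) (by positivity) m
  have f1 : (m.factorial : ℝ) ≠ 0 := by positivity
  have f2 : (n.factorial : ℝ) ≠ 0 := by positivity
  have f3 : ((n - m).factorial : ℝ) ≠ 0 := by positivity
  rw [show a + b + n + m + 1 = a + b + n + 1 + m by ring, g1,
    show a + m + 1 = a + 1 + m by ring, g2, show (n : ℝ) + a + b + 1 = a + b + n + 1 by ring,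
    neg_pow]
  have g4 : poch (-(n : ℝ)) m = (-1) ^ m * n.factorial / (n - m).factorial := by
    field_simp; exact g3
  rw [g4]
  field_simp

lemma measurePlus_eq (a b : ℝ) : jacobiMeasurePlus a b =
    (volume.restrict (Ioo 0 π)).withDensity fun θ => ENNReal.ofReal (jPsi a b θ ^ 2) := by
  rw [jacobiMeasurePlus, jacobiMeasure, restrict_withDensity measurableSet_Ioo,
    Measure.restrict_restrict measurableSet_Ioo]
  congr 2
  rw [inter_eq_left]
  exact Ioo_subset_Ioo_left (by linarith [pi_pos])

lemma jPsi_sq (a b : ℝ) {θ : ℝ} (h : θ ∈ Ioo 0 π) : jPsi a b θ ^ 2 = wt a b θ := by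
  have hs := sin_half_pos h
  have hc := cos_half_pos h
  rw [jPsi, abs_of_pos hs, wt, mul_pow, ← rpow_natCast, ← rpow_natCast, ← rpow_mul hs.le,
    ← rpow_mul hc.le]
  push_cast
  ring_nf

lemma jPsi_meas (a b : ℝ) : Measurable fun θ => ENNReal.ofReal (jPsi a b θ ^ 2) := by
  unfold jPsi
  measurability

lemma cJ_sq {a b : ℝ} (ha : 0 < a) (hb : 0 < b) (n : ℕ) :
    cJ a b n ^ 2 = (kap a n ^ 2 * NN a b n)⁻¹ := by
  have h : ∫ θ, jacobiP a b n (cos θ) ^ 2 ∂(jacobiMeasurePlus a b) = kap a n ^ 2 * NN a b n := by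
    rw [measurePlus_eq, integral_withDensity_eq_integral_toReal_smul (jPsi_meas a b)
      (Filter.Eventually.of_forall fun _ => ENNReal.ofReal_lt_top)]
    rw [NN, IP, ← intervalIntegral.integral_const_mul, intervalIntegral.integral_of_le pi_pos.le,
      integral_Ioc_eq_integral_Ioo]
    refine setIntegral_congr_fun measurableSet_Ioo fun θ hθ => ?_
    simp only [smul_eq_mul]
    rw [ENNReal.toReal_ofReal (sq_nonneg _), jPsi_sq a b hθ, jacobiP_eq ha hb, Polynomial.eval_mul]
    ring
  have hnn : 0 ≤ ∫ θ, jacobiP a b n (cos θ) ^ 2 ∂(jacobiMeasurePlus a b) :=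
    integral_nonneg fun _ => sq_nonneg _
  rw [cJ, ← rpow_natCast, ← rpow_mul hnn, ← h, ← rpow_neg_one]
  norm_num

lemma trigP_mul {a b : ℝ} (ha : 0 < a) (hb : 0 < b) (n : ℕ) (θ φ : ℝ) :
    trigP a b n θ * trigP a b n φ =
      (RP a b n).eval (sin (θ / 2) ^ 2) * (RP a b n).eval (sin (φ / 2) ^ 2) / NN a b n := by
  have h1 := cJ_sq ha hb n
  have h2 := (kap_pos ha n).ne'
  have h3 := NN_ne ha hb n
  rw [trigP, trigP, jacobiP_eq ha hb, jacobiP_eq ha hb]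
  have : ∀ x y : ℝ, cJ a b n * (kap a n * x) * (cJ a b n * (kap a n * y)) =
    cJ a b n ^ 2 * kap a n ^ 2 * (x * y) := by intros; ring
  rw [this, h1]
  field_simp

/-- Explicit form of the Poisson coefficients. -/
lemma trigP_mul' {a b : ℝ} (ha : 0 < a) (hb : 0 < b) (n : ℕ) (θ φ : ℝ) :
    trigP a b n θ * trigP a b n φ * ((a + b + 1) * NN a b 0) =
      (-1) ^ n * ((2 * n + a + b + 1) * poch (a + b + 1) n / n.factorial) *
        WV a b n (sin (θ / 2) ^ 2) (sin (φ / 2) ^ 2) := by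
  have h1 := NN_formula n ha hb
  have h2 := WV_product a b (by linarith) (by linarith) n (sin (θ / 2) ^ 2) (sin (φ / 2) ^ 2)
  have h3 := NN_ne ha hb n
  have h4 := RP_one_ne a b (by linarith) (by linarith) n
  rw [trigP_mul ha hb, ← h2]
  have f2 : (n.factorial : ℝ) ≠ 0 := by positivity
  field_simp
  linear_combination (-(WV a b n (sin (θ / 2) ^ 2) (sin (φ / 2) ^ 2))) * h1

end JK

namespace JK

lemma choose_poch (σ : ℝ) (n : ℕ) : Ring.choose (σ + n - 1) n = poch σ n / n.factorial := by
  rw [← Ring.multichoose_eq]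
  have h := Ring.factorial_nsmul_multichoose_eq_ascPochhammer σ n
  have h2 : (ascPochhammer ℕ n).smeval σ = poch σ n := by
    clear h
    rw [← Polynomial.ascPochhammer_smeval_cast ℝ, ← Polynomial.eval_eq_smeval]
    induction n with
    | zero => simp [poch_zero]
    | succ n ih => rw [ascPochhammer_succ_eval, poch_succ, ih]
  rw [h2, nsmul_eq_mul] at h
  rw [eq_div_iff (by positivity), mul_comm]; exact h

lemma binom_hasSum (σ : ℝ) {x : ℝ} (hx : |x| < 1) :
    HasSum (fun j : ℕ => poch σ j / j.factorial * x ^ j) ((1 - x) ^ (-σ)) := by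
  have h := (Real.one_div_one_sub_rpow_hasFPowerSeriesOnBall_zero σ).hasSum (y := x)
    (by simpa [enorm_eq_nnnorm] using! hx)
  simp only [FormalMultilinearSeries.ofScalars_apply_eq, zero_add, smul_eq_mul, choose_poch] at h
  rw [rpow_neg (by linarith [(abs_lt.1 hx).2]), ← one_div]
  exact h

/-- `Σ (σ)_j (σ+2j) x^j / j!`. -/
lemma binom_hasSum2 (σ : ℝ) {x : ℝ} (hx : |x| < 1) :
    HasSum (fun j : ℕ => poch σ j / j.factorial * (σ + 2 * j) * x ^ j)
      (σ * (1 + x) * (1 - x) ^ (-(σ + 1))) := by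
  have h1 := (binom_hasSum σ hx).mul_left σ
  have h2 := ((binom_hasSum (σ + 1) hx).mul_left (2 * σ * x))
  have h3 : HasSum (fun j : ℕ => 2 * j * (poch σ j / j.factorial) * x ^ j)
      (2 * σ * x * (1 - x) ^ (-(σ + 1))) := by
    rw [← hasSum_nat_add_iff' 1]
    simp only [Finset.sum_range_one, CharP.cast_eq_zero, mul_zero, zero_mul, sub_zero]
    refine h2.congr_fun ?_
    intro j
    rw [poch_succ', Nat.factorial_succ]
    push_cast
    field_simp
    ring
  have hpos : 0 < 1 - x := by linarith [(abs_lt.1 hx).2]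
  have e : (1 - x) ^ (-σ) = (1 - x) * (1 - x) ^ (-(σ + 1)) := by
    nth_rewrite 2 [← rpow_one (1 - x)]
    rw [← rpow_add hpos]
    ring_nf
  have h4 := h1.add h3
  rw [e] at h4
  have e5 : σ * (1 + x) * (1 - x) ^ (-(σ + 1)) =
      σ * ((1 - x) * (1 - x) ^ (-(σ + 1))) + 2 * σ * x * (1 - x) ^ (-(σ + 1)) := by ring
  rw [e5]
  refine h4.congr_fun fun j => ?_
  ring

open Polynomial in
lemma sonin {a b : ℝ} (ha : 0 < a) (hb : 0 < b) (n : ℕ) {x : ℝ} (hx : x ∈ Icc (0 : ℝ) 1) :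
    (RP a b n).eval x ^ 2 ≤ 1 + (RP a b n).eval 1 ^ 2 := by
  rcases Nat.eq_zero_or_pos n with rfl | hn
  · simp [RP, rc_zero]
  set R := RP a b n with hR
  set l : ℝ := n * (n + a + b + 1) with hl
  have hn' : (0 : ℝ) < n := by exact_mod_cast hn
  have hlpos : 0 < l := by positivity
  let f : ℝ[X] := C l * R ^ 2 + X * (1 - X) * derivative R ^ 2
  have hder : derivative f = derivative R ^ 2 * (C (-(2 * a + 1)) * (1 - X) + C (2 * b + 1) * X) := by
    have h := LJ_RP a b (by linarith) n
    rw [← hR, LJ, ← hl] at h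
    simp only [f, derivative_add, derivative_mul, derivative_C, derivative_pow, derivative_X,
      derivative_sub, derivative_one]
    simp only [C_add, C_neg, C_mul, C_1] at h ⊢
    rw [show (C 2 : ℝ[X]) = 2 from rfl] at *
    simp only [Nat.cast_ofNat, Nat.add_one_sub_one, pow_one, map_ofNat]
    linear_combination 2 * derivative R * h
  set x0 : ℝ := (2 * a + 1) / (2 * a + 2 * b + 2) with hx0
  have hx0' : x0 * (2 * a + 2 * b + 2) = 2 * a + 1 := by rw [hx0]; field_simp
  have hdf : ∀ y, deriv (fun y => f.eval y) y =
      (derivative R).eval y ^ 2 * ((2 * a + 2 * b + 2) * (y - x0)) := by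
    intro y
    rw [Polynomial.deriv, hder]
    simp only [eval_mul, eval_pow, eval_add, eval_C, eval_sub, eval_one, eval_X]
    congr 1
    linear_combination hx0'
  have hx0p : 0 ≤ x0 := by positivity
  have hx01 : x0 ≤ 1 := by rw [hx0, div_le_one (by positivity)]; linarith
  have anti : AntitoneOn (fun y => f.eval y) (Icc 0 x0) := by
    refine antitoneOn_of_deriv_nonpos (convex_Icc _ _) f.continuous.continuousOn
      f.differentiable.differentiableOn fun y hy => ?_
    rw [interior_Icc] at hy
    rw [hdf]
    refine mul_nonpos_of_nonneg_of_nonpos (sq_nonneg _) ?_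
    exact mul_nonpos_of_nonneg_of_nonpos (by positivity) (by linarith [hy.2])
  have mono : MonotoneOn (fun y => f.eval y) (Icc x0 1) := by
    refine monotoneOn_of_deriv_nonneg (convex_Icc _ _) f.continuous.continuousOn
      f.differentiable.differentiableOn fun y hy => ?_
    rw [interior_Icc] at hy
    rw [hdf]
    refine mul_nonneg (sq_nonneg _) ?_
    exact mul_nonneg (by positivity) (by linarith [hy.1])
  have f0 : f.eval 0 = l := by
    simp [f, hR, eval_RP_zero]
  have f1 : f.eval 1 = l * R.eval 1 ^ 2 := by simp [f]
  have fx : l * R.eval x ^ 2 ≤ f.eval x := by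
    simp only [f, eval_mul, eval_pow, eval_add, eval_C, eval_sub, eval_one, eval_X]
    have : 0 ≤ x * (1 - x) * (derivative R).eval x ^ 2 :=
      mul_nonneg (mul_nonneg hx.1 (by linarith [hx.2])) (sq_nonneg _)
    linarith
  have key : f.eval x ≤ l * (1 + R.eval 1 ^ 2) := by
    rcases le_total x x0 with h | h
    · have := anti (left_mem_Icc.2 hx0p) ⟨hx.1, h⟩ hx.1
      simp only [f0] at this
      nlinarith [sq_nonneg (R.eval 1), mul_nonneg hlpos.le (sq_nonneg (R.eval 1))]
    · have := mono ⟨h, hx.2⟩ (right_mem_Icc.2 hx01) hx.2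
      simp only [f1] at this
      linarith
  exact le_of_mul_le_mul_left (fx.trans key) hlpos

lemma RP_one_eq (n : ℕ) : ∀ {a b : ℝ}, 0 < a → 0 < b →
    (RP a b n).eval 1 = (-1) ^ n * (poch (b + 1) n / poch (a + 1) n) := by
  induction n with
  | zero => intro a b _ _; simp [RP, rc_zero, poch_zero]
  | succ n ih =>
    intro a b ha hb
    rw [RP_one_succ a b (by linarith) (by linarith), ih (by linarith) (by linarith), poch_succ',
      poch_succ', pow_succ]
    have := (poch_pos (x := a + 1 + 1) (by linarith) n).ne'
    field_simp

lemma tendsto_frac (p q r : ℝ) (hp : 0 < p) :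
    Filter.Tendsto (fun n : ℕ => (p * n + q) / (p * n + r)) Filter.atTop (nhds 1) := by
  have h1 : ∀ q : ℝ, Filter.Tendsto (fun n : ℕ => p + q / (n : ℝ)) Filter.atTop (nhds (p + 0)) :=
    fun q => tendsto_const_nhds.add (tendsto_const_div_atTop_nhds_zero_nat q)
  have h := (h1 q).div (h1 r) (by simpa using hp.ne')
  rw [add_zero, div_self hp.ne'] at h
  refine h.congr' ?_
  filter_upwards [Filter.eventually_gt_atTop 0] with n hn
  have : (n : ℝ) ≠ 0 := by positivity
  rw [Pi.div_apply, add_div' _ _ _ this, add_div' _ _ _ this, div_div_div_cancel_right₀ this]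

lemma growth_summable {a b σ z : ℝ} (ha : 0 < a) (hb : 0 < b) (hσ : 0 < σ) (hz : 0 < z) (hz1 : z < 1) :
    Summable fun n : ℕ => poch b n / poch a n * ((2 * n + σ) * poch σ n / n.factorial) * z ^ n := by
  refine summable_of_ratio_test_tendsto_lt_one (l := z) hz1 (Filter.Eventually.of_forall fun n => ?_) ?_
  · have := poch_pos ha n
    have := poch_pos hb n
    have := poch_pos hσ n
    positivity
  · have h := ((((tendsto_frac 1 b a one_pos).mul (tendsto_frac 2 (2 + σ) σ two_pos)).mul
      (tendsto_frac 1 σ 1 one_pos)).mul_const z)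
    simp only [one_mul, mul_one] at h
    refine h.congr fun n => ?_
    have p1 := poch_pos ha n
    have p2 := poch_pos hb n
    have p3 := poch_pos hσ n
    rw [norm_of_nonneg, norm_of_nonneg (by positivity), poch_succ, poch_succ, poch_succ,
      Nat.factorial_succ]
    · push_cast
      field_simp
      ring
    · have p1 := poch_pos ha (n+1)
      have p2 := poch_pos hb (n+1)
      have p3 := poch_pos hσ (n+1)
      positivity

lemma sin_sq_mem (θ : ℝ) : sin θ ^ 2 ∈ Icc (0 : ℝ) 1 := ⟨sq_nonneg _, sin_sq_le_one θ⟩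

lemma trigP_summable {a b : ℝ} (ha : 0 < a) (hb : 0 < b) (θ φ : ℝ) {z : ℝ} (hz : 0 < z) (hz1 : z < 1) :
    Summable fun n : ℕ => |trigP a b n θ * trigP a b n φ| * z ^ n := by
  have s1 := growth_summable (a := a + 1) (b := b + 1) (σ := a + b + 1) (by linarith)
    (by linarith) (by linarith) hz hz1
  have s2 := growth_summable (a := b + 1) (b := a + 1) (σ := a + b + 1) (by linarith)
    (by linarith) (by linarith) hz hz1
  have hN := NN_zero_pos ha hb
  refine Summable.of_nonneg_of_le (fun n => by positivity) (fun n => ?_)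
    ((s1.add s2).mul_left ((a + b + 1) * NN a b 0)⁻¹)
  have p1 := poch_pos (x := a + 1) (by linarith) n
  have p2 := poch_pos (x := b + 1) (by linarith) n
  have p3 := poch_pos (x := a + b + 1) (by linarith) n
  have hf := NN_formula n ha hb
  rw [RP_one_eq n ha hb] at hf
  have hs : ((-1 : ℝ) ^ n) * (-1) ^ n = 1 := by rw [← mul_pow]; norm_num
  set ρ := poch (b + 1) n / poch (a + 1) n with hρ
  have hρ0 : 0 < ρ := by positivity
  have hρ' : poch (a + 1) n / poch (b + 1) n = ρ⁻¹ := by rw [hρ, inv_div]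
  set K := (a + b + 1) * NN a b 0 with hK
  have hK0 : 0 < K := by positivity
  have hNN : NN a b n * ((2 * n + (a + b + 1)) * poch (a + b + 1) n) = K * ρ * n.factorial := by
    have h2 := congrArg (fun x => x * (-1 : ℝ) ^ n) hf
    linear_combination h2 + (K * ρ * n.factorial - NN a b n * ((2 * n + (a + b + 1)) * poch (a + b + 1) n)) * hs
  have hfac : (0 : ℝ) < n.factorial := by positivity
  have hS : 0 < (2 * n + (a + b + 1)) * poch (a + b + 1) n := by positivity
  set S := (2 * n + (a + b + 1)) * poch (a + b + 1) n
  have hNp : 0 < NN a b n := by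
    have : 0 < NN a b n * S := by rw [hNN]; positivity
    exact (pos_iff_pos_of_mul_pos this).2 hS
  have hNe : NN a b n = K * ρ * n.factorial / S := by rw [eq_div_iff hS.ne', hNN]
  have hr : |(RP a b n).eval (sin (θ / 2) ^ 2) * (RP a b n).eval (sin (φ / 2) ^ 2)| ≤ 1 + ρ ^ 2 := by
    have h1 := sonin ha hb n (sin_sq_mem (θ / 2))
    have h2 := sonin ha hb n (sin_sq_mem (φ / 2))
    have h3 : (RP a b n).eval 1 ^ 2 = ρ ^ 2 := by
      rw [RP_one_eq n ha hb, mul_pow, ← pow_mul, mul_comm n 2, pow_mul]; norm_num [hρ]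
    rw [h3] at h1 h2
    rw [abs_le]
    constructor <;> nlinarith [sq_nonneg ((RP a b n).eval (sin (θ / 2) ^ 2) - (RP a b n).eval (sin (φ / 2) ^ 2)),
      sq_nonneg ((RP a b n).eval (sin (θ / 2) ^ 2) + (RP a b n).eval (sin (φ / 2) ^ 2))]
  rw [trigP_mul ha hb, abs_div, abs_of_pos hNp, hρ']
  calc _ ≤ (1 + ρ ^ 2) / NN a b n * z ^ n := by gcongr
    _ = _ := by rw [hNe]; field_simp; ring

end JK

namespace JK

lemma analytic_tsum (c : ℕ → ℝ) (R : ℝ) (h : ∀ r, 0 < r → r < R → Summable fun n => |c n| * r ^ n)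
    {x : ℝ} (hx : |x| < R) : AnalyticAt ℝ (fun x => ∑' n, c n * x ^ n) x := by
  obtain ⟨r, hr1, hr2⟩ := exists_between hx
  have hr0 : 0 < r := (abs_nonneg x).trans_lt hr1
  have hs := h r hr0 hr2
  have hrad : (ENNReal.ofReal r) ≤ (FormalMultilinearSeries.ofScalars ℝ c).radius := by
    have := (FormalMultilinearSeries.ofScalars ℝ c).le_radius_of_summable (r := r.toNNReal) (by
      simpa [FormalMultilinearSeries.ofScalars_norm, Real.coe_toNNReal r hr0.le] using hs)
    exact this
  have hpos : 0 < (FormalMultilinearSeries.ofScalars ℝ c).radius :=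
    (ENNReal.ofReal_pos.2 hr0).trans_le hrad
  have hb := (FormalMultilinearSeries.ofScalars ℝ c).hasFPowerSeriesOnBall hpos
  have ha := hb.analyticAt_of_mem (y := x) (by
    rw [Metric.mem_eball, edist_zero_right]
    refine lt_of_lt_of_le ?_ hrad
    rw [← ofReal_norm, Real.norm_eq_abs]
    exact (ENNReal.ofReal_lt_ofReal_iff hr0).2 hr1)
  refine ha.congr (Filter.Eventually.of_forall fun y => ?_)
  simp [FormalMultilinearSeries.sum, mul_comm]

/-- The measure with density `sin^{2a}` on `(0, π)`. -/
def nu (a : ℝ) : Measure ℝ :=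
  (volume.restrict (Ioo 0 π)).withDensity fun ω => ENNReal.ofReal (sin ω ^ (2 * a))

lemma nu_meas (a : ℝ) : Measurable fun ω => ENNReal.ofReal (sin ω ^ (2 * a)) := by measurability

lemma integral_nu (a : ℝ) (f : ℝ → ℝ) :
    ∫ ω, f ω ∂(nu a) = ∫ ω in Ioo 0 π, sin ω ^ (2 * a) * f ω := by
  rw [nu, integral_withDensity_eq_integral_toReal_smul (nu_meas a)
    (Filter.Eventually.of_forall fun _ => ENNReal.ofReal_lt_top)]
  refine setIntegral_congr_fun measurableSet_Ioo fun ω hω => ?_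
  simp only [smul_eq_mul]
  rw [ENNReal.toReal_ofReal (rpow_nonneg (sin_pos_of_mem_Ioo hω).le _)]

lemma integral_nu' (a : ℝ) (f : ℝ → ℝ) :
    ∫ ω, f ω ∂(nu a) = ∫ ω in (0 : ℝ)..π, sin ω ^ (2 * a) * f ω := by
  rw [integral_nu, intervalIntegral.integral_of_le pi_pos.le, integral_Ioc_eq_integral_Ioo]

instance nu_finite {a : ℝ} [Fact (0 < a)] : IsFiniteMeasure (nu a) := by
  have ha : 0 < a := Fact.out
  refine isFiniteMeasure_withDensity_ofReal ?_
  have hc : Continuous fun ω => sin ω ^ (2 * a) :=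
    Continuous.rpow_const (by fun_prop) (fun x => Or.inr (by linarith))
  have : IntegrableOn (fun ω => sin ω ^ (2 * a)) (Ioo 0 π) :=
    (hc.integrableOn_Icc (a := 0) (b := π)).mono_set Ioo_subset_Icc_self
  exact this.2

/-- Moments. -/
def Mo (a : ℝ) (j : ℕ) : ℝ := ∫ ω, cos ω ^ j ∂(nu a)

lemma sin_pow_cont {a : ℝ} (ha : 0 < a) : Continuous fun ω => sin ω ^ (2 * a) :=
  Continuous.rpow_const (by fun_prop) (fun x => Or.inr (by linarith))

lemma Mo_parts {a : ℝ} (ha : 0 < a) (j : ℕ) (hj : j = 0 → False) :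
    (2 * a + 1) * Mo a (j + 1) = j * (Mo a (j - 1) - Mo a (j + 1)) := by
  have hd : ∀ ω ∈ uIcc 0 π, HasDerivAt (fun ω => sin ω ^ (2 * a + 1) * cos ω ^ j)
      ((2 * a + 1) * (sin ω ^ (2 * a) * cos ω ^ (j + 1)) - j * (sin ω ^ (2 * a) * cos ω ^ (j - 1)
        - sin ω ^ (2 * a) * cos ω ^ (j + 1))) ω := by
    intro ω hω
    rw [uIcc_of_le pi_pos.le] at hω
    have hs : 0 ≤ sin ω := sin_nonneg_of_mem_Icc hω
    have d1 := (hasDerivAt_sin ω).rpow_const (p := 2 * a + 1) (Or.inr (by linarith))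
    have d2 := (hasDerivAt_cos ω).fun_pow j
    refine (d1.fun_mul d2).congr_deriv ?_
    have e1 : sin ω ^ (2 * a + 1) = sin ω ^ (2 * a) * sin ω := by
      rw [rpow_add_one' hs (by linarith)]
    have e2 : sin ω ^ 2 = 1 - cos ω ^ 2 := sin_sq ω
    obtain ⟨i, rfl⟩ := Nat.exists_eq_succ_of_ne_zero hj
    rw [add_sub_cancel_right, e1]
    simp only [Nat.succ_eq_add_one, Nat.add_sub_cancel]
    linear_combination (-(((i + 1 : ℕ) : ℝ)) * sin ω ^ (2 * a) * cos ω ^ i) * e2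
  have hc := sin_pow_cont ha
  have hi : ∀ j : ℕ, IntervalIntegrable (fun ω => sin ω ^ (2 * a) * cos ω ^ j) volume 0 π :=
    fun j => (hc.mul (by fun_prop)).intervalIntegrable _ _
  have h := intervalIntegral.integral_eq_sub_of_hasDerivAt hd
    (((hi _).const_mul _).sub (((hi _).sub (hi _)).const_mul _))
  rw [intervalIntegral.integral_sub ((hi _).const_mul _) (((hi _).sub (hi _)).const_mul _),
    intervalIntegral.integral_const_mul, intervalIntegral.integral_const_mul,
    intervalIntegral.integral_sub (hi _) (hi _), ← integral_nu', ← integral_nu'] at h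
  rw [sin_pi, sin_zero, zero_rpow (by linarith)] at h
  simp only [Mo]
  linarith

lemma Mo_one {a : ℝ} (ha : 0 < a) : Mo a 1 = 0 := by
  have hd : ∀ ω ∈ uIcc 0 π, HasDerivAt (fun ω => sin ω ^ (2 * a + 1))
      ((2 * a + 1) * (sin ω ^ (2 * a) * cos ω ^ 1)) ω := by
    intro ω hω
    have d1 := (hasDerivAt_sin ω).rpow_const (p := 2 * a + 1) (Or.inr (by linarith))
    refine d1.congr_deriv ?_
    rw [add_sub_cancel_right]; ring
  have hc := sin_pow_cont ha
  have h := intervalIntegral.integral_eq_sub_of_hasDerivAt hd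
    ((continuous_const.mul (hc.mul (by fun_prop))).intervalIntegrable _ _)
  rw [intervalIntegral.integral_const_mul, ← integral_nu', sin_pi, sin_zero,
    zero_rpow (by linarith), sub_zero] at h
  exact (mul_eq_zero.1 h).resolve_left (by linarith)

lemma Mo_step {a : ℝ} (ha : 0 < a) (j : ℕ) :
    (j + 2 * a + 2) * Mo a (j + 2) = (j + 1) * Mo a j := by
  have h := Mo_parts ha (j + 1) (by omega)
  push_cast at h
  rw [show j + 1 + 1 = j + 2 from rfl] at h
  linarith

lemma Mo_odd {a : ℝ} (ha : 0 < a) (i : ℕ) : Mo a (2 * i + 1) = 0 := by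
  induction i with
  | zero => exact Mo_one ha
  | succ i ih =>
    have h := Mo_step ha (2 * i + 1)
    rw [ih, mul_zero] at h
    exact (mul_eq_zero.1 h).resolve_left (by positivity)

lemma Mo_even {a : ℝ} (ha : 0 < a) (i : ℕ) :
    Mo a (2 * i) = Mo a 0 * ((2 * i).factorial / (4 ^ i * (i.factorial * poch (a + 1) i))) := by
  induction i with
  | zero => simp [poch_zero]
  | succ i ih =>
    have h := Mo_step ha (2 * i)
    rw [ih] at h
    have h1 : ((2 * i : ℕ) : ℝ) + 2 * a + 2 ≠ 0 := by positivity
    apply mul_left_cancel₀ h1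
    rw [show 2 * (i + 1) = 2 * i + 2 by ring, h, show 2 * i + 2 = (2 * i + 1) + 1 by ring,
      Nat.factorial_succ, Nat.factorial_succ, Nat.factorial_succ, poch_succ, pow_succ]
    have := (poch_pos (x := a + 1) (by linarith) i).ne'
    push_cast
    have h2 : a + 1 + i ≠ 0 := by positivity
    have h3 : 2 * (i : ℝ) + 2 * a + 2 ≠ 0 := by positivity
    field_simp
    ring

lemma Mo_zero_pos {a : ℝ} (ha : 0 < a) : 0 < Mo a 0 := by
  rw [Mo, integral_nu']
  refine intervalIntegral.intervalIntegral_pos_of_pos_on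
    (((sin_pow_cont ha).mul (by fun_prop)).intervalIntegrable _ _) (fun θ hθ => ?_) pi_pos
  have := sin_pos_of_mem_Ioo hθ
  positivity

/-- Product measure. -/
def nuP (a b : ℝ) : Measure (ℝ × ℝ) := (nu a).prod (nu b)

instance nuP_finite {a b : ℝ} [Fact (0 < a)] [Fact (0 < b)] : IsFiniteMeasure (nuP a b) := by
  unfold nuP; infer_instance

/-- The linear form. -/
def Wf (A B : ℝ) (p : ℝ × ℝ) : ℝ := A * cos p.1 + B * cos p.2

lemma Wf_cont (A B : ℝ) : Continuous (Wf A B) := by unfold Wf; fun_prop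

lemma Wf_le {A B : ℝ} (hA : 0 ≤ A) (hB : 0 ≤ B) (hAB : A + B ≤ 1) (p : ℝ × ℝ) : |Wf A B p| ≤ 1 := by
  unfold Wf
  calc _ ≤ |A * cos p.1| + |B * cos p.2| := abs_add_le _ _
    _ ≤ A * 1 + B * 1 := by
      rw [abs_mul, abs_mul, abs_of_nonneg hA, abs_of_nonneg hB]
      gcongr <;> exact abs_cos_le_one _
    _ ≤ 1 := by linarith

lemma Wf_mom {a b : ℝ} [Fact (0 < a)] [Fact (0 < b)] (A B : ℝ) (m : ℕ) :
    ∫ p, Wf A B p ^ m ∂(nuP a b) = ∑ q ∈ Finset.HasAntidiagonal.antidiagonal m,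
      (m.choose q.1 : ℝ) * A ^ q.1 * B ^ q.2 * (Mo a q.1 * Mo b q.2) := by
  have h : ∀ p : ℝ × ℝ, Wf A B p ^ m = ∑ q ∈ Finset.HasAntidiagonal.antidiagonal m,
      (m.choose q.1 : ℝ) * A ^ q.1 * B ^ q.2 * (cos p.1 ^ q.1 * cos p.2 ^ q.2) := by
    intro p
    rw [Wf, add_pow, Finset.Nat.sum_antidiagonal_eq_sum_range_succ_mk]
    refine Finset.sum_congr rfl fun i _ => ?_
    rw [mul_pow, mul_pow]; ring
  simp_rw [h]
  rw [integral_finsetSum]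
  · refine Finset.sum_congr rfl fun q _ => ?_
    rw [integral_const_mul, nuP, integral_prod_mul (fun x => cos x ^ q.1) (fun x => cos x ^ q.2)]
    rfl
  · intro q _
    refine Integrable.const_mul ?_ _
    refine Integrable.mono' (integrable_const (1 : ℝ)) (by fun_prop) (Filter.Eventually.of_forall fun p => ?_)
    rw [norm_mul, norm_pow, norm_pow]
    refine mul_le_one₀ (pow_le_one₀ (norm_nonneg _) (abs_cos_le_one _)) (by positivity)
      (pow_le_one₀ (norm_nonneg _) (abs_cos_le_one _))

lemma Wf_mom_odd {a b : ℝ} [Fact (0 < a)] [Fact (0 < b)] (A B : ℝ) (m : ℕ) :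
    ∫ p, Wf A B p ^ (2 * m + 1) ∂(nuP a b) = 0 := by
  have ha : 0 < a := Fact.out
  have hb : 0 < b := Fact.out
  rw [Wf_mom]
  refine Finset.sum_eq_zero fun q hq => ?_
  rw [Finset.HasAntidiagonal.mem_antidiagonal] at hq
  rcases Nat.even_or_odd' q.1 with ⟨i, h | h⟩
  · have : q.2 = 2 * (m - i) + 1 := by omega
    rw [this, Mo_odd hb]; ring
  · rw [h, Mo_odd ha]; ring

lemma Wf_mom_even {a b : ℝ} [Fact (0 < a)] [Fact (0 < b)] (A B x y : ℝ) (hA : A ^ 2 = x * y)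
    (hB : B ^ 2 = (1 - x) * (1 - y)) (k : ℕ) :
    ∫ p, Wf A B p ^ (2 * k) ∂(nuP a b) =
      Mo a 0 * Mo b 0 * ((2 * k).factorial / 4 ^ k) * tau a b x y k := by
  have ha : 0 < a := Fact.out
  have hb : 0 < b := Fact.out
  rw [Wf_mom, tau, Finset.mul_sum]
  symm
  refine Finset.sum_of_injOn (fun q => (2 * q.1, 2 * q.2)) ?_ ?_ ?_ ?_
  · intro q _ q' _ h
    simp only [Prod.mk.injEq] at h
    ext <;> omega
  · intro q hq
    simp only [Finset.mem_coe, Finset.HasAntidiagonal.mem_antidiagonal] at hq ⊢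
    omega
  · intro q hq hq2
    rw [Finset.HasAntidiagonal.mem_antidiagonal] at hq
    rcases Nat.even_or_odd' q.1 with ⟨i, h | h⟩
    · exfalso
      apply hq2
      refine ⟨(i, k - i), ?_, ?_⟩
      · simp only [Finset.mem_coe, Finset.HasAntidiagonal.mem_antidiagonal]; omega
      · ext
        · simp [h]
        · simp; omega
    · rw [h, Mo_odd ha]; ring
  · intro q hq
    rw [Finset.HasAntidiagonal.mem_antidiagonal] at hq
    obtain ⟨j, l⟩ := q
    simp only at hq ⊢
    subst hq
    rw [Mo_even ha, Mo_even hb, pow_mul, pow_mul, hA, hB, mul_add 2 j l]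
    have hch : ((2 * j + 2 * l).choose (2 * j) : ℝ) * (2 * j).factorial * (2 * l).factorial =
        (2 * j + 2 * l).factorial := by
      have := Nat.choose_mul_factorial_mul_factorial (Nat.le_add_right (2 * j) (2 * l))
      rw [Nat.add_sub_cancel_left] at this
      exact_mod_cast this
    rw [← hch]
    have := (poch_pos (x := a + 1) (by linarith) j).ne'
    have := (poch_pos (x := b + 1) (by linarith) l).ne'
    push_cast
    field_simp
    ring

end JK

namespace JK

lemma tau_nonneg {a b x y : ℝ} (ha : 0 < a) (hb : 0 < b) (hx : x ∈ Icc (0 : ℝ) 1) (hy : y ∈ Icc (0 : ℝ) 1)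
    (k : ℕ) : 0 ≤ tau a b x y k := by
  unfold tau
  refine Finset.sum_nonneg fun p _ => ?_
  have := poch_pos (x := a + 1) (by linarith) p.1
  have := poch_pos (x := b + 1) (by linarith) p.2
  have h1 : 0 ≤ x * y := mul_nonneg hx.1 hy.1
  have h2 : 0 ≤ (1 - x) * (1 - y) := mul_nonneg (by linarith [hx.2]) (by linarith [hy.2])
  positivity

lemma int_hasSum {a b : ℝ} [Fact (0 < a)] [Fact (0 < b)] {A B x y s u : ℝ} (hA : A ^ 2 = x * y)
    (hB : B ^ 2 = (1 - x) * (1 - y)) (hA0 : 0 ≤ A) (hB0 : 0 ≤ B) (hAB : A + B ≤ 1) (hs : 0 < s)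
    (hu : 0 ≤ u) (hu1 : u < 1) :
    HasSum (fun k : ℕ => Mo a 0 * Mo b 0 * (poch s (2 * k) * tau a b x y k * (u ^ 2 / 4) ^ k))
      (∫ p, (1 - u * Wf A B p) ^ (-s) ∂(nuP a b)) := by
  have hW := Wf_le hA0 hB0 hAB
  have hb1 := binom_hasSum s (x := u) (by rw [abs_of_nonneg hu]; exact hu1)
  have hintegr : ∀ j : ℕ, Integrable (fun p => poch s j / j.factorial * (u * Wf A B p) ^ j) (nuP a b) := by
    intro j
    refine Integrable.mono' (integrable_const (poch s j / j.factorial * u ^ j))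
      (by have := Wf_cont A B; fun_prop) (Filter.Eventually.of_forall fun p => ?_)
    have := poch_pos hs j
    rw [norm_mul, norm_pow, norm_mul, norm_of_nonneg (by positivity), norm_of_nonneg hu]
    gcongr
    exact mul_le_of_le_one_right hu (hW p)
  have h := hasSum_integral_of_summable_integral_norm hintegr (by
    refine Summable.of_nonneg_of_le (fun j => by positivity) (fun j => ?_)
      (hb1.summable.mul_right ((nuP a b).real univ))
    calc _ ≤ ∫ p, poch s j / j.factorial * u ^ j ∂(nuP a b) := by
          refine integral_mono (hintegr j).norm (integrable_const _) fun p => ?_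
          have := poch_pos hs j
          rw [norm_mul, norm_pow, norm_mul, norm_of_nonneg (by positivity), norm_of_nonneg hu]
          dsimp only
          gcongr
          exact mul_le_of_le_one_right hu (hW p)
      _ = _ := by rw [integral_const, smul_eq_mul, mul_comm])
  have e1 : ∀ p, ∑' j : ℕ, poch s j / j.factorial * (u * Wf A B p) ^ j = (1 - u * Wf A B p) ^ (-s) := by
    intro p
    refine (binom_hasSum s ?_).tsum_eq
    rw [abs_mul, abs_of_nonneg hu]
    exact (mul_le_of_le_one_right hu (hW p)).trans_lt hu1
  simp_rw [e1] at h
  have e2 : ∀ j : ℕ, ∫ p, poch s j / j.factorial * (u * Wf A B p) ^ j ∂(nuP a b) =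
      poch s j / j.factorial * u ^ j * ∫ p, Wf A B p ^ j ∂(nuP a b) := by
    intro j
    rw [← integral_const_mul]
    congr 1; ext p; ring
  simp_rw [e2] at h
  have hinj : Function.Injective (fun k : ℕ => 2 * k) := fun i j h => by simpa using h
  rw [← hinj.hasSum_iff] at h
  · refine h.congr_fun fun k => ?_
    simp only [Function.comp]
    rw [Wf_mom_even A B x y hA hB]
    have : ((2 * k).factorial : ℝ) ≠ 0 := by positivity
    rw [pow_mul, div_pow]
    field_simp
  · intro j hj
    rcases Nat.even_or_odd' j with ⟨i, hi | hi⟩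
    · exact absurd ⟨i, hi.symm⟩ hj
    · rw [hi, Wf_mom_odd, mul_zero]

lemma poch_add (x : ℝ) (m n : ℕ) : poch x (m + n) = poch x m * poch (x + m) n := by
  induction n with
  | zero => simp [poch_zero]
  | succ n ih => rw [← add_assoc, poch_succ, ih, poch_succ]; push_cast; ring

lemma poch_shift (s : ℝ) (m : ℕ) : poch (s - 1) m * (s - 1 + m) = (s - 1) * poch s m := by
  rw [← poch_succ, poch_succ', sub_add_cancel]

/-- The double series term. -/
def gdt (a b x y z w : ℝ) (q : ℕ × ℕ) : ℝ :=
  (z ^ q.1 * tau a b x y q.1 * poch (a + b + 1) (2 * q.1)) *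
    (poch (a + b + 1 + 2 * q.1) q.2 / q.2.factorial * (a + b + 1 + 2 * q.1 + 2 * q.2) * w ^ q.2)

lemma gdt_fiber {a b x y z w : ℝ} (ha : 0 < a) (hb : 0 < b) (hw : |w| < 1) (k : ℕ) :
    HasSum (fun j => gdt a b x y z w (k, j))
      ((a + b + 1) * (1 + w) * (1 - w) ^ (-(a + b + 2)) *
        (poch (a + b + 2) (2 * k) * tau a b x y k * (z / (1 - w) ^ 2) ^ k)) := by
  have h := (binom_hasSum2 (a + b + 1 + 2 * k) hw).mul_left
    (z ^ k * tau a b x y k * poch (a + b + 1) (2 * k))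
  have hpos : 0 < 1 - w := by linarith [(abs_lt.1 hw).2]
  have e := poch_shift (a + b + 2) (2 * k)
  rw [show a + b + 2 - 1 = a + b + 1 by ring] at e
  push_cast at e
  have e2 : (1 - w) ^ (-(a + b + 1 + 2 * k + 1)) = (1 - w) ^ (-(a + b + 2)) * ((1 - w) ^ (2 * k))⁻¹ := by
    rw [← rpow_natCast (1 - w) (2 * k), ← rpow_neg hpos.le, ← rpow_add hpos]
    push_cast
    ring_nf
  have key : (a + b + 1) * (1 + w) * (1 - w) ^ (-(a + b + 2)) *
        (poch (a + b + 2) (2 * k) * tau a b x y k * (z / (1 - w) ^ 2) ^ k) =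
      z ^ k * tau a b x y k * poch (a + b + 1) (2 * k) *
      ((a + b + 1 + 2 * k) * (1 + w) * (1 - w) ^ (-(a + b + 1 + 2 * (k : ℝ) + 1))) := by
    rw [e2, div_pow, pow_mul (1 - w)]
    generalize (1 - w) ^ (-(a + b + 2)) = Q
    have : ((1 - w) ^ 2) ^ k ≠ 0 := by positivity
    field_simp
    linear_combination (-z ^ k * tau a b x y k * Q * (1 + w)) * e
  rw [key]
  exact h

lemma gdt_anti {a b : ℝ} (ha : 0 < a) (hb : 0 < b) (θ φ z : ℝ) (n : ℕ) :
    ∑ q ∈ Finset.HasAntidiagonal.antidiagonal n, gdt a b (sin (θ / 2) ^ 2) (sin (φ / 2) ^ 2) z (-z) q =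
      trigP a b n θ * trigP a b n φ * ((a + b + 1) * NN a b 0) * z ^ n := by
  rw [trigP_mul' ha hb, WV, Finset.Nat.sum_antidiagonal_eq_sum_range_succ_mk, Finset.mul_sum, Finset.sum_mul]
  refine Finset.sum_congr rfl fun k hk => ?_
  have hk : k ≤ n := by have := Finset.mem_range.1 hk; omega
  obtain ⟨j, rfl⟩ := Nat.exists_eq_add_of_le hk
  have h1 := poch_neg_fact (k + j) k hk
  rw [Nat.add_sub_cancel_left] at h1
  have h2 := poch_add (a + b + 1) (k + j) k
  have h3 := poch_add (a + b + 1) (2 * k) j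
  rw [show k + j + k = 2 * k + j by ring, h3] at h2
  have hj : (j.factorial : ℝ) ≠ 0 := by positivity
  have hkj : ((k + j).factorial : ℝ) ≠ 0 := by positivity
  have h1' : poch (-((k + j : ℕ) : ℝ)) k = (-1) ^ k * (k + j).factorial / j.factorial := by
    rw [← h1]; field_simp
  simp only [gdt, ec, Nat.add_sub_cancel_left]
  rw [h1']
  have e : poch (((k + j : ℕ) : ℝ) + a + b + 1) k = poch (a + b + 1 + ((k + j : ℕ) : ℝ)) k := by
    congr 1; ring
  rw [e, neg_pow z, pow_add z, pow_add (-1 : ℝ)]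
  have e1 : (-1 : ℝ) ^ k * (-1) ^ k = 1 := by rw [← mul_pow]; simp
  push_cast at h2 ⊢
  field_simp
  linear_combination (z ^ k * z ^ j * tau a b (sin (θ / 2) ^ 2) (sin (φ / 2) ^ 2) k * (a + b + 1 + 2 * k + 2 * j)) * h2
    - (z ^ k * z ^ j * tau a b (sin (θ / 2) ^ 2) (sin (φ / 2) ^ 2) k * (a + b + 1 + 2 * k + 2 * j)) *
      (poch (a + b + 1) (k + j) * poch (a + b + 1 + (k + j)) k) * e1

lemma AB_facts {θ φ : ℝ} (hθ : θ ∈ Icc (0 : ℝ) π) (hφ : φ ∈ Icc (0 : ℝ) π) :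
    0 ≤ sin (θ / 2) * sin (φ / 2) ∧ 0 ≤ cos (θ / 2) * cos (φ / 2) ∧
    sin (θ / 2) * sin (φ / 2) + cos (θ / 2) * cos (φ / 2) = cos ((θ - φ) / 2) := by
  refine ⟨mul_nonneg (sin_half_nonneg hθ) (sin_half_nonneg hφ),
    mul_nonneg (cos_half_nonneg hθ) (cos_half_nonneg hφ), ?_⟩
  rw [sub_div, cos_sub]; ring

section rep
variable {a b : ℝ} [Fact (0 < a)] [Fact (0 < b)] {θ φ : ℝ}

lemma int_hasSum2 (hθ : θ ∈ Icc (0 : ℝ) π) (hφ : φ ∈ Icc (0 : ℝ) π) {u : ℝ}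
    (hu : 0 ≤ u) (hu1 : u < 1) :
    HasSum (fun k : ℕ => poch (a + b + 2) (2 * k) * tau a b (sin (θ / 2) ^ 2) (sin (φ / 2) ^ 2) k * (u ^ 2 / 4) ^ k)
      ((Mo a 0 * Mo b 0)⁻¹ * ∫ p, (1 - u * Wf (sin (θ / 2) * sin (φ / 2)) (cos (θ / 2) * cos (φ / 2)) p) ^ (-(a + b + 2)) ∂(nuP a b)) := by
  have ha : 0 < a := Fact.out
  have hb : 0 < b := Fact.out
  obtain ⟨h1, h2, h3⟩ := AB_facts hθ hφ
  have h := (int_hasSum (a := a) (b := b) (s := a + b + 2) (u := u)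
    (x := sin (θ / 2) ^ 2) (y := sin (φ / 2) ^ 2) (by ring)
    (by rw [← cos_sq', ← cos_sq']; ring) h1 h2 (by rw [h3]; exact cos_le_one _) (by linarith) hu hu1).mul_left
    ((Mo a 0 * Mo b 0)⁻¹)
  refine h.congr_fun fun k => ?_
  have := (Mo_zero_pos ha).ne'
  have := (Mo_zero_pos hb).ne'
  field_simp

lemma G_summable (hθ : θ ∈ Icc (0 : ℝ) π) (hφ : φ ∈ Icc (0 : ℝ) π) {r : ℝ} (hr : 0 ≤ r) (hr1 : r < 1 / 4) :
    Summable (fun k : ℕ => poch (a + b + 2) (2 * k) * tau a b (sin (θ / 2) ^ 2) (sin (φ / 2) ^ 2) k * r ^ k) := by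
  have h := (int_hasSum2 (a := a) (b := b) hθ hφ (u := √(4 * r)) (by positivity)
    (by rw [Real.sqrt_lt' one_pos]; linarith)).summable
  rw [sq_sqrt (by positivity)] at h
  simpa using h

lemma poisson_small (hθ : θ ∈ Icc (0 : ℝ) π) (hφ : φ ∈ Icc (0 : ℝ) π) {z : ℝ} (hz : 0 < z) (hz1 : z < 1 / 10) :
    ∑' n, trigP a b n θ * trigP a b n φ * ((a + b + 1) * NN a b 0) * z ^ n =
      (a + b + 1) * (1 - z) * (1 + z) ^ (-(a + b + 2)) *
        ∑' k : ℕ, poch (a + b + 2) (2 * k) * tau a b (sin (θ / 2) ^ 2) (sin (φ / 2) ^ 2) k * (z / (1 + z) ^ 2) ^ k := by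
  have ha : 0 < a := Fact.out
  have hb : 0 < b := Fact.out
  have hzabs : |z| < 1 := by rw [abs_of_pos hz]; linarith
  have hg : Summable (gdt a b (sin (θ / 2) ^ 2) (sin (φ / 2) ^ 2) z z) := by
    rw [summable_prod_of_nonneg]
    · refine ⟨fun k => (gdt_fiber ha hb hzabs k).summable, ?_⟩
      simp_rw [fun k => (gdt_fiber (x := sin (θ / 2) ^ 2) (y := sin (φ / 2) ^ 2) (z := z) ha hb hzabs k).tsum_eq]
      refine Summable.mul_left _ (G_summable hθ hφ (by positivity) ?_)
      rw [div_lt_iff₀ (by nlinarith)]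
      nlinarith
    · intro q
      have := tau_nonneg ha hb (sin_sq_mem (θ / 2)) (sin_sq_mem (φ / 2)) q.1
      have := poch_pos (x := a + b + 1) (by linarith) (2 * q.1)
      have := poch_pos (x := a + b + 1 + 2 * q.1) (by positivity) (q.2)
      unfold gdt
      simp only [Pi.zero_apply]
      positivity
  have hg2 : Summable (gdt a b (sin (θ / 2) ^ 2) (sin (φ / 2) ^ 2) z (-z)) := by
    refine Summable.of_norm_bounded hg fun q => ?_
    have := tau_nonneg ha hb (sin_sq_mem (θ / 2)) (sin_sq_mem (φ / 2)) q.1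
    have := poch_pos (x := a + b + 1) (by linarith) (2 * q.1)
    have := poch_pos (x := a + b + 1 + 2 * q.1) (by positivity) (q.2)
    unfold gdt
    rw [norm_mul, norm_mul _ ((-z) ^ q.2), norm_pow, norm_neg, norm_of_nonneg hz.le,
      norm_of_nonneg (by positivity), norm_of_nonneg (by positivity)]
  have h1 := hg2.hasSum.prod_fiberwise fun k => gdt_fiber (w := -z) ha hb (by rwa [abs_neg]) k
  have h2 := ((Equiv.hasSum_iff Finset.HasAntidiagonal.sigmaAntidiagonalEquivProd).2 hg2.hasSum).sigma
    (g := fun n => trigP a b n θ * trigP a b n φ * ((a + b + 1) * NN a b 0) * z ^ n) (fun n => by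
      rw [← gdt_anti ha hb]
      convert Finset.hasSum _ _ using 1
      · rfl)
  rw [h2.tsum_eq, ← h1.tsum_eq, tsum_mul_left, sub_neg_eq_add, ← sub_eq_add_neg]

lemma poisson_all (hθ : θ ∈ Icc (0 : ℝ) π) (hφ : φ ∈ Icc (0 : ℝ) π) {z : ℝ} (hz : 0 < z) (hz1 : z < 1) :
    ∑' n, trigP a b n θ * trigP a b n φ * ((a + b + 1) * NN a b 0) * z ^ n =
      (a + b + 1) * (1 - z) * (1 + z) ^ (-(a + b + 2)) *
        ∑' k : ℕ, poch (a + b + 2) (2 * k) * tau a b (sin (θ / 2) ^ 2) (sin (φ / 2) ^ 2) k * (z / (1 + z) ^ 2) ^ k := by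
  have ha : 0 < a := Fact.out
  have hb : 0 < b := Fact.out
  have hL : AnalyticOnNhd ℝ (fun z : ℝ => ∑' n, trigP a b n θ * trigP a b n φ * ((a + b + 1) * NN a b 0) * z ^ n) (Ioo 0 1) := by
    intro z hz
    refine analytic_tsum _ 1 (fun r hr hr1 => ?_) (by rw [abs_of_pos hz.1]; exact hz.2)
    refine ((trigP_summable ha hb θ φ hr hr1).mul_left |(a + b + 1) * NN a b 0|).congr fun n => ?_
    rw [abs_mul _ ((a + b + 1) * NN a b 0)]; ring
  have hR : AnalyticOnNhd ℝ (fun z : ℝ => (a + b + 1) * (1 - z) * (1 + z) ^ (-(a + b + 2)) *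
        ∑' k : ℕ, poch (a + b + 2) (2 * k) * tau a b (sin (θ / 2) ^ 2) (sin (φ / 2) ^ 2) k * (z / (1 + z) ^ 2) ^ k) (Ioo 0 1) := by
    intro z hz
    have hz0 := hz.1
    have e1 : AnalyticAt ℝ (fun z : ℝ => 1 + z) z := analyticAt_const.add analyticAt_id
    refine ((analyticAt_const.mul (analyticAt_const.sub analyticAt_id)).mul
      ((contDiffAt_rpow_const_of_ne (by linarith)).analyticAt.fun_comp e1)).mul ?_
    have e2 : AnalyticAt ℝ (fun z : ℝ => z / (1 + z) ^ 2) z := analyticAt_id.div (e1.pow 2) (by positivity)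
    refine AnalyticAt.fun_comp (g := fun y : ℝ => ∑' k : ℕ, poch (a + b + 2) (2 * k) * tau a b (sin (θ / 2) ^ 2) (sin (φ / 2) ^ 2) k * y ^ k) ?_ e2
    refine analytic_tsum _ (1 / 4) (fun r hr hr1 => ?_) ?_
    · refine (G_summable (a := a) (b := b) hθ hφ hr.le hr1).congr fun k => ?_
      rw [abs_of_nonneg]
      exact mul_nonneg (poch_pos (by linarith) _).le (tau_nonneg ha hb (sin_sq_mem (θ / 2)) (sin_sq_mem (φ / 2)) k)
    · rw [abs_of_pos (by positivity), div_lt_iff₀ (by positivity)]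
      nlinarith [hz.2, sq_pos_of_pos (sub_pos.2 hz.2)]
  refine hL.eqOn_of_preconnected_of_eventuallyEq hR isPreconnected_Ioo (z₀ := 1 / 20) (by norm_num) ?_ ⟨hz, hz1⟩
  filter_upwards [Ioo_mem_nhds (show (0 : ℝ) < 1 / 20 by norm_num) (show (1 / 20 : ℝ) < 1 / 10 by norm_num)] with w hw
  exact poisson_small hθ hφ hw.1 hw.2

/-- Constant in the Poisson kernel representation. -/
def C0 (a b : ℝ) : ℝ := ((a + b + 1) * NN a b 0)⁻¹ * ((a + b + 1) * 2 ^ (-(a + b + 1))) * (Mo a 0 * Mo b 0)⁻¹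

lemma poisson_rep (hθ : θ ∈ Icc (0 : ℝ) π) (hφ : φ ∈ Icc (0 : ℝ) π) {t : ℝ} (ht : 0 < t) :
    ∑' n : ℕ, exp (-t * (n + (a + b + 1) / 2)) * trigP a b n θ * trigP a b n φ =
      C0 a b * ∫ p, sinh (t / 2) * (cosh (t / 2) -
        Wf (sin (θ / 2) * sin (φ / 2)) (cos (θ / 2) * cos (φ / 2)) p) ^ (-(a + b + 2)) ∂(nuP a b) := by
  have ha : 0 < a := Fact.out
  have hb : 0 < b := Fact.out
  have hz : 0 < exp (-t) := exp_pos _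
  have hz1 : exp (-t) < 1 := by rw [exp_lt_one_iff]; linarith
  have hK : (a + b + 1) * NN a b 0 ≠ 0 := mul_ne_zero (by positivity) (NN_zero_pos (by linarith) (by linarith)).ne'
  have hch : 0 < cosh (t / 2) := cosh_pos _
  have hch1 : 1 < cosh (t / 2) := one_lt_cosh.2 (by positivity)
  have hzc : 1 + exp (-t) = 2 * exp (-(t / 2)) * cosh (t / 2) := by
    rw [cosh_eq, show -t = -(t / 2) + -(t / 2) by ring, exp_add]
    have : exp (-(t / 2)) * exp (t / 2) = 1 := by rw [← exp_add]; simp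
    linear_combination -this
  have hzs : 1 - exp (-t) = 2 * exp (-(t / 2)) * sinh (t / 2) := by
    rw [sinh_eq, show -t = -(t / 2) + -(t / 2) by ring, exp_add]
    have : exp (-(t / 2)) * exp (t / 2) = 1 := by rw [← exp_add]; simp
    linear_combination -this
  have hu : exp (-t) / (1 + exp (-t)) ^ 2 = (1 / cosh (t / 2)) ^ 2 / 4 := by
    rw [hzc, show -t = -(t / 2) + -(t / 2) by ring, exp_add]
    have := exp_pos (-(t / 2))
    field_simp
    norm_num
  have h1 := poisson_all (a := a) (b := b) hθ hφ hz hz1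
  rw [hu, (int_hasSum2 (a := a) (b := b) hθ hφ (u := 1 / cosh (t / 2)) (by positivity)
    (by rw [div_lt_one hch]; exact hch1)).tsum_eq] at h1
  have hL : ∑' n : ℕ, exp (-t * (n + (a + b + 1) / 2)) * trigP a b n θ * trigP a b n φ =
      exp (-t * ((a + b + 1) / 2)) * ((a + b + 1) * NN a b 0)⁻¹ *
      ∑' n, trigP a b n θ * trigP a b n φ * ((a + b + 1) * NN a b 0) * exp (-t) ^ n := by
    rw [← tsum_mul_left]
    refine tsum_congr fun n => ?_
    rw [mul_add, exp_add, ← exp_nat_mul, mul_comm (n : ℝ) (-t)]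
    generalize (a + b + 1) * NN a b 0 = K at hK
    field_simp
  have hI : ∫ p, sinh (t / 2) * (cosh (t / 2) -
        Wf (sin (θ / 2) * sin (φ / 2)) (cos (θ / 2) * cos (φ / 2)) p) ^ (-(a + b + 2)) ∂(nuP a b) =
      sinh (t / 2) * cosh (t / 2) ^ (-(a + b + 2)) *
        ∫ p, (1 - 1 / cosh (t / 2) * Wf (sin (θ / 2) * sin (φ / 2)) (cos (θ / 2) * cos (φ / 2)) p) ^ (-(a + b + 2)) ∂(nuP a b) := by
    rw [← integral_const_mul]
    refine integral_congr_ae (Filter.Eventually.of_forall fun p => ?_)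
    obtain ⟨h1, h2, h3⟩ := AB_facts hθ hφ
    have hW := Wf_le h1 h2 (by rw [h3]; exact cos_le_one _) p
    dsimp only
    generalize Wf (sin (θ / 2) * sin (φ / 2)) (cos (θ / 2) * cos (φ / 2)) p = w at hW ⊢
    have hw := (abs_le.1 hW).2
    rw [mul_assoc, ← mul_rpow hch.le]
    · congr 2
      field_simp
    · rw [sub_nonneg, div_mul_eq_mul_div, one_mul, div_le_one hch]
      linarith
  rw [hL, h1, hI, hzs, hzc, C0, mul_rpow (by positivity) hch.le, mul_rpow two_pos.le (exp_pos _).le,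
    ← exp_mul]
  have e1 : (2 : ℝ) * 2 ^ (-(a + b + 2)) = 2 ^ (-(a + b + 1)) := by
    nth_rewrite 1 [← rpow_one 2]
    rw [← rpow_add two_pos]; ring_nf
  have e2 : exp (-t * ((a + b + 1) / 2)) * exp (-(t / 2)) * exp (-(t / 2) * -(a + b + 2)) = 1 := by
    rw [← exp_add, ← exp_add, exp_eq_one_iff]; ring
  rw [← e1]
  generalize (∫ p, (1 - 1 / cosh (t / 2) * Wf (sin (θ / 2) * sin (φ / 2)) (cos (θ / 2) * cos (φ / 2)) p) ^ (-(a + b + 2)) ∂(nuP a b)) = I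
  generalize (2 : ℝ) ^ (-(a + b + 2)) = Q
  generalize cosh (t / 2) ^ (-(a + b + 2)) = Q2
  linear_combination (((a + b + 1) * NN a b 0)⁻¹ * (a + b + 1) * 2 * Q * Q2 * sinh (t / 2) * (Mo a 0 * Mo b 0)⁻¹ * I) * e2

end rep

end JK

namespace JK

/-- Integrand of the Poisson kernel. -/
def Fk (s t w : ℝ) : ℝ := sinh (t / 2) * (cosh (t / 2) - w) ^ (-s)
/-- Its `t`-derivative. -/
def dF (s t w : ℝ) : ℝ :=
  cosh (t / 2) / 2 * (cosh (t / 2) - w) ^ (-s) - s / 2 * sinh (t / 2) ^ 2 * (cosh (t / 2) - w) ^ (-s - 1)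
/-- The mixed derivative. -/
def dFw (s t w : ℝ) : ℝ :=
  s / 2 * cosh (t / 2) * (cosh (t / 2) - w) ^ (-s - 1) -
    s * (s + 1) / 2 * sinh (t / 2) ^ 2 * (cosh (t / 2) - w) ^ (-s - 2)

lemma D_pos {t w : ℝ} (ht : 0 < t) (hw : w ≤ 1) : 0 < cosh (t / 2) - w := by
  have : 1 < cosh (t / 2) := one_lt_cosh.2 (by positivity)
  linarith

lemma Fk_deriv (s : ℝ) {t w : ℝ} (ht : 0 < t) (hw : w ≤ 1) : HasDerivAt (fun t => Fk s t w) (dF s t w) t := by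
  have hD := D_pos ht hw
  have h2 : HasDerivAt (fun t : ℝ => t / 2) (1 / 2) t := (hasDerivAt_id t).div_const 2
  have h1 := ((h2.cosh.sub_const w).rpow_const (p := -s) (Or.inl hD.ne'))
  refine (h2.sinh.fun_mul h1).congr_deriv ?_
  rw [dF]; ring

lemma dF_deriv (s : ℝ) {t w : ℝ} (ht : 0 < t) (hw : w ≤ 1) : HasDerivAt (fun w => dF s t w) (dFw s t w) w := by
  have hD := D_pos ht hw
  have h2 := (hasDerivAt_id w).const_sub (cosh (t / 2))
  have h3 := (h2.rpow_const (p := -s) (Or.inl hD.ne')).const_mul (cosh (t / 2) / 2)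
  have h4 := (h2.rpow_const (p := -s - 1) (Or.inl hD.ne')).const_mul (s / 2 * sinh (t / 2) ^ 2)
  refine (h3.fun_sub h4).congr_deriv ?_
  simp only [id]
  rw [dFw, show -s - 1 - 1 = -s - 2 by ring]; ring

lemma sinh_sq_le {t w : ℝ} (hw : w ≤ 1) : sinh (t / 2) ^ 2 ≤ 2 * cosh (t / 2) * (cosh (t / 2) - w) := by
  have h := cosh_sq (t / 2)
  have h1 := one_le_cosh (t / 2)
  nlinarith

lemma dF_le {s t w : ℝ} (hs : 0 < s) (ht : 0 < t) (hw : w ≤ 1) :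
    |dF s t w| ≤ (1 / 2 + s) * (cosh (t / 2) * (cosh (t / 2) - w) ^ (-s)) := by
  have hD := D_pos ht hw
  have hc := cosh_pos (t / 2)
  have h1 := sinh_sq_le (t := t) hw
  have e : (cosh (t / 2) - w) ^ (-s) = (cosh (t / 2) - w) * (cosh (t / 2) - w) ^ (-s - 1) := by
    nth_rewrite 2 [← rpow_one (cosh (t / 2) - w)]
    rw [← rpow_add hD]; ring_nf
  rw [dF]
  have hP : 0 < (cosh (t / 2) - w) ^ (-s - 1) := rpow_pos_of_pos hD _
  rw [e]
  generalize (cosh (t / 2) - w) ^ (-s - 1) = P at hP ⊢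
  generalize cosh (t / 2) - w = D at *
  have h0 : 0 ≤ sinh (t / 2) ^ 2 := sq_nonneg _
  generalize sinh (t / 2) ^ 2 = S at *
  rw [abs_le]
  have e1 : S * (s * P) ≤ (2 * cosh (t / 2) * D) * (s * P) := by gcongr
  have e2 : 0 ≤ S * (s * P) := by positivity
  have e3 : 0 < cosh (t / 2) * (D * P) := by positivity
  have e4 : 0 < s * (cosh (t / 2) * (D * P)) := by positivity
  constructor <;> nlinarith

lemma dFw_le {s t w : ℝ} (hs : 0 < s) (ht : 0 < t) (hw : w ≤ 1) :
    |dFw s t w| ≤ (s / 2 + s * (s + 1)) * (cosh (t / 2) * (cosh (t / 2) - w) ^ (-(s + 1))) := by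
  have h := dF_le (s := s + 1) (by linarith) ht hw
  have e : dFw s t w = s * (dF (s + 1) t w) := by
    rw [dF, dFw, show -(s + 1) = -s - 1 by ring, show -s - 1 - 1 = -s - 2 by ring]; ring
  rw [e, abs_mul, abs_of_pos hs]
  exact (mul_le_mul_of_nonneg_left h hs.le).trans_eq (by ring)

lemma sqrt_cosh_le {t : ℝ} (ht : 0 < t) : t ^ 2 * √(cosh (t / 2)) ≤ 32 * (cosh (t / 2) - 1) := by
  obtain ⟨v, rfl⟩ : ∃ v, t = 8 * v := ⟨t / 8, by ring⟩
  have hv : 0 < v := by linarith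
  have e1 : cosh (8 * v / 2) = 2 * cosh (2 * v) ^ 2 - 1 := by
    rw [show 8 * v / 2 = 2 * (2 * v) by ring, cosh_two_mul (2 * v), sinh_sq]; ring
  have e2 : cosh (2 * v) = 2 * cosh v ^ 2 - 1 := by rw [cosh_two_mul, sinh_sq]; ring
  have h1 := one_le_cosh v
  have h2 : √(cosh (8 * v / 2)) ≤ 3 / 2 * cosh (2 * v) := by
    rw [sqrt_le_left (by positivity), e1]; nlinarith [one_le_cosh (2 * v)]
  have h3 : cosh (2 * v) ^ 2 - 1 = 4 * sinh v ^ 2 * cosh v ^ 2 := by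
    rw [e2, sinh_sq]; ring
  have h4 : v < sinh v := self_lt_sinh_iff.2 hv
  have h5 : v ^ 2 ≤ sinh v ^ 2 := by gcongr
  calc _ ≤ (8 * v) ^ 2 * (3 / 2 * cosh (2 * v)) := by gcongr
    _ ≤ (8 * v) ^ 2 * (3 / 2 * (2 * cosh v ^ 2)) := by gcongr; linarith
    _ = 192 * (v ^ 2 * cosh v ^ 2) := by ring
    _ ≤ 192 * (sinh v ^ 2 * cosh v ^ 2) := by gcongr
    _ ≤ 32 * (cosh (8 * v / 2) - 1) := by
      rw [e1]
      nlinarith [mul_nonneg (sq_nonneg (sinh v)) (sq_nonneg (cosh v))]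

lemma cosh_bound {p t w : ℝ} (hp : 2 ≤ p) (ht : 0 < t) (hw : w ≤ 1) (hw1 : -1 ≤ w) :
    cosh (t / 2) * (cosh (t / 2) - w) ^ (-p) ≤ 34 ^ p * (t ^ 2 + (1 - w)) ^ (-p) := by
  have h1 := sqrt_cosh_le ht
  have hc := one_le_cosh (t / 2)
  have hsq : √(cosh (t / 2)) ^ 2 = cosh (t / 2) := sq_sqrt (by linarith)
  have hs1 : 1 ≤ √(cosh (t / 2)) := by rw [one_le_sqrt]; exact hc
  generalize √(cosh (t / 2)) = r at *
  rw [← hsq] at h1 hc ⊢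
  have hr : r ≤ r ^ 2 := by nlinarith
  have h2 : r * (t ^ 2 + (1 - w)) / 34 ≤ r ^ 2 - w := by
    rw [div_le_iff₀ (by norm_num)]
    nlinarith [mul_nonneg (sub_nonneg.2 hr) (sub_nonneg.2 hw),
      mul_nonneg (sub_nonneg.2 hc) (show 0 ≤ 1 + w by linarith)]
  have hq : 0 < t ^ 2 + (1 - w) := by nlinarith [sq_pos_of_pos ht]
  have h3 : (r ^ 2 - w) ^ (-p) ≤ (r * (t ^ 2 + (1 - w)) / 34) ^ (-p) :=
    rpow_le_rpow_of_nonpos (by positivity) h2 (by linarith)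
  have h4 : (r * (t ^ 2 + (1 - w)) / 34) ^ (-p) = r ^ (-p) * (34 ^ p * (t ^ 2 + (1 - w)) ^ (-p)) := by
    rw [div_rpow (by positivity) (by norm_num), mul_rpow (by positivity) (by positivity), rpow_neg (x := 34) (by norm_num)]
    field_simp
  have h5 : r ^ (-p) ≤ r ^ (-2 : ℝ) := rpow_le_rpow_of_exponent_le hs1 (by linarith)
  have h6 : r ^ 2 * r ^ (-2 : ℝ) = 1 := by
    rw [rpow_neg (by positivity), rpow_two]; field_simp
  have hP : 0 < 34 ^ p * (t ^ 2 + (1 - w)) ^ (-p) := by positivity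
  calc _ ≤ r ^ 2 * (r ^ (-2 : ℝ) * (34 ^ p * (t ^ 2 + (1 - w)) ^ (-p))) := by
        gcongr
        rw [h4] at h3
        exact h3.trans (by gcongr)
    _ = _ := by rw [← mul_assoc, h6, one_mul]

/-- The basic one dimensional constant. -/
lemma base_int {a p : ℝ} (ha : 0 < a) (hp : a + 1 / 2 < p) :
    IntegrableOn (fun v : ℝ => v ^ (2 * a) * (1 + v ^ 2) ^ (-p)) (Ioi 0) := by
  have hc : Continuous (fun v : ℝ => v ^ (2 * a) * (1 + v ^ 2) ^ (-p)) := by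
    refine (continuous_id.rpow_const (fun x => Or.inr (by linarith))).mul
      (Continuous.rpow_const (by fun_prop) (fun x => Or.inl (by positivity)))
  rw [← Ioc_union_Ioi_eq_Ioi (zero_le_one (α := ℝ)), integrableOn_union]
  refine ⟨(hc.integrableOn_Icc (a := 0) (b := 1)).mono_set Ioc_subset_Icc_self, ?_⟩
  have h := integrableOn_Ioi_rpow_of_lt (a := 2 * a - 2 * p) (by linarith) one_pos
  refine Integrable.mono' h hc.aestronglyMeasurable ?_
  refine (ae_restrict_iff' measurableSet_Ioi).2 (Filter.Eventually.of_forall fun v hv => ?_)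
  have hv0 : (0 : ℝ) < v := lt_trans one_pos hv
  rw [norm_of_nonneg (by positivity), sub_eq_add_neg, rpow_add hv0]
  gcongr
  calc (1 + v ^ 2) ^ (-p) ≤ (v ^ 2) ^ (-p) := rpow_le_rpow_of_nonpos (by positivity) (by linarith) (by linarith)
    _ = v ^ (-(2 * p)) := by rw [← rpow_two, ← rpow_mul hv0.le]; ring_nf

lemma base_scale {a p δ σ : ℝ} (ha : 0 < a) (hp : a + 1 / 2 < p) (hδ : 0 < δ) (hσ : 0 < σ) :
    IntegrableOn (fun v : ℝ => v ^ (2 * a) * (δ + σ * v ^ 2) ^ (-p)) (Ioi 0) ∧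
    ∫ v in Ioi (0 : ℝ), v ^ (2 * a) * (δ + σ * v ^ 2) ^ (-p) =
      (∫ v in Ioi (0 : ℝ), v ^ (2 * a) * (1 + v ^ 2) ^ (-p)) * (δ ^ (-(p - a - 1 / 2)) * σ ^ (-(a + 1 / 2))) := by
  set k := √(σ / δ) with hk
  have hk0 : 0 < k := by positivity
  have hk2 : k ^ 2 = σ / δ := sq_sqrt (by positivity)
  have e : ∀ v ∈ Ioi (0 : ℝ), v ^ (2 * a) * (δ + σ * v ^ 2) ^ (-p) =
      δ ^ (-p) * k ^ (-(2 * a)) * ((k * v) ^ (2 * a) * (1 + (k * v) ^ 2) ^ (-p)) := by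
    intro v hv
    have hv : 0 < v := hv
    have e1 : δ + σ * v ^ 2 = δ * (1 + (k * v) ^ 2) := by rw [mul_pow, hk2]; field_simp
    rw [e1, mul_rpow hδ.le (by positivity), mul_rpow hk0.le hv.le, rpow_neg hk0.le]
    field_simp
  have hI := (integrableOn_Ioi_comp_mul_left_iff (fun v : ℝ => v ^ (2 * a) * (1 + v ^ 2) ^ (-p)) 0 hk0).2
    (by rw [mul_zero]; exact base_int ha hp)
  constructor
  · exact (integrableOn_congr_fun e measurableSet_Ioi).2 (hI.const_mul _)
  · rw [setIntegral_congr_fun measurableSet_Ioi e, integral_const_mul,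
      integral_comp_mul_left_Ioi (fun v : ℝ => v ^ (2 * a) * (1 + v ^ 2) ^ (-p)) 0 hk0, mul_zero, smul_eq_mul]
    have e2 : δ ^ (-p) * k ^ (-(2 * a)) * k⁻¹ = δ ^ (-(p - a - 1 / 2)) * σ ^ (-(a + 1 / 2)) := by
      rw [mul_assoc, ← rpow_neg_one k, ← rpow_add hk0, hk, sqrt_eq_rpow, ← rpow_mul (by positivity),
        div_rpow hσ.le hδ.le, show -(p - a - 1 / 2) = -p - 1 / 2 * (-(2 * a) + -1) by ring,
        show -(a + 1 / 2) = 1 / 2 * (-(2 * a) + -1) by ring, rpow_sub hδ]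
      ring
    rw [← e2]; ring

lemma one_dim {a p : ℝ} (ha : 0 < a) (hp : a + 1 / 2 < p) : ∃ C : ℝ, 0 ≤ C ∧ ∀ δ A : ℝ, 0 < δ → 0 ≤ A →
    ∫ ω, (δ + A * (1 - cos ω)) ^ (-p) ∂(nu a) ≤ C * (δ ^ (-(p - a - 1 / 2)) * (δ + A) ^ (-(a + 1 / 2))) := by
  refine ⟨20 ^ p * ∫ v in Ioi (0 : ℝ), v ^ (2 * a) * (1 + v ^ 2) ^ (-p), ?_, fun δ A hδ hA => ?_⟩
  · refine mul_nonneg (by positivity) (setIntegral_nonneg measurableSet_Ioi fun v hv => ?_)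
    have hv : 0 < v := hv
    positivity
  have hσ : 0 < δ + A := by linarith
  obtain ⟨h1, h2⟩ := base_scale ha hp hδ hσ
  rw [mul_assoc, ← h2, integral_nu, ← integral_const_mul]
  have hsub : Ioo 0 π ⊆ Ioi 0 := Ioo_subset_Ioi_self
  have hpos : ∀ v : ℝ, 0 < v → 0 ≤ 20 ^ p * (v ^ (2 * a) * (δ + (δ + A) * v ^ 2) ^ (-p)) := by
    intro v hv; positivity
  calc _ ≤ ∫ v in Ioo 0 π, 20 ^ p * (v ^ (2 * a) * (δ + (δ + A) * v ^ 2) ^ (-p)) := by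
        refine integral_mono_of_nonneg ((ae_restrict_iff' measurableSet_Ioo).2 (Filter.Eventually.of_forall ?_)) ?_
          ((ae_restrict_iff' measurableSet_Ioo).2 (Filter.Eventually.of_forall ?_))
        · intro ω hω
          simp only [Pi.zero_apply]
          have := sin_pos_of_mem_Ioo hω
          have := cos_le_one ω
          have : 0 ≤ A * (1 - cos ω) := mul_nonneg hA (by linarith)
          positivity
        · exact (h1.mono_set hsub).const_mul _
        · intro ω hω
          have hs := sin_pos_of_mem_Ioo hω
          have hω0 := hω.1
          have hcos := cos_le_one_sub_mul_cos_sq (x := ω) (by rw [abs_of_pos hω.1]; exact hω.2.le)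
          have hpi := pi_lt_d2
          have hpi0 := pi_pos
          have hc2 : ω ^ 2 / 20 ≤ 1 - cos ω := by
            have : ω ^ 2 / 20 ≤ 2 / π ^ 2 * ω ^ 2 := by
              rw [div_eq_mul_inv, mul_comm]; gcongr
              rw [le_div_iff₀ (by positivity)]; nlinarith
            linarith
          have hω2 : ω ^ 2 ≤ 10 := by nlinarith [hω.2]
          have key : (δ + (δ + A) * ω ^ 2) / 20 ≤ δ + A * (1 - cos ω) := by
            have := mul_le_mul_of_nonneg_left hc2 hA
            have := mul_le_mul_of_nonneg_left hω2 hδ.le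
            linarith
          calc sin ω ^ (2 * a) * (δ + A * (1 - cos ω)) ^ (-p) ≤
                ω ^ (2 * a) * ((δ + (δ + A) * ω ^ 2) / 20) ^ (-p) := by
                refine mul_le_mul (rpow_le_rpow hs.le (sin_le hω0.le) (by linarith))
                  (rpow_le_rpow_of_nonpos (by positivity) key (by linarith)) ?_ (by positivity)
                exact rpow_nonneg (le_trans (by positivity) key) _
            _ = _ := by
                rw [div_rpow (by positivity) (by norm_num), rpow_neg (x := 20) (by norm_num)]
                field_simp
    _ ≤ _ := by
        refine setIntegral_mono_set (h1.const_mul _) ?_ hsub.eventuallyLE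
        exact (ae_restrict_iff' measurableSet_Ioi).2 (Filter.Eventually.of_forall fun v hv => hpos v hv)

lemma two_dim {a b p : ℝ} [Fact (0 < a)] [Fact (0 < b)] (hp : a + b + 2 ≤ p) :
    ∃ C : ℝ, 0 ≤ C ∧ ∀ δ A B : ℝ, 0 < δ → 0 ≤ A → 0 ≤ B →
    ∫ q, (δ + A * (1 - cos q.1) + B * (1 - cos q.2)) ^ (-p) ∂(nuP a b) ≤
      C * (δ ^ (-(p - a - b - 1)) * (δ + A) ^ (-(a + 1 / 2)) * (δ + B) ^ (-(b + 1 / 2))) := by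
  have ha : 0 < a := Fact.out
  have hb : 0 < b := Fact.out
  obtain ⟨C1, hC1, H1⟩ := one_dim (a := b) (p := p) hb (by linarith)
  obtain ⟨C2, hC2, H2⟩ := one_dim (a := a) (p := p - b - 1 / 2) ha (by linarith)
  refine ⟨C1 * C2, by positivity, fun δ A B hδ hA hB => ?_⟩
  have hcos : ∀ A : ℝ, 0 ≤ A → ∀ ω : ℝ, 0 ≤ A * (1 - cos ω) := fun A hA ω =>
    mul_nonneg hA (by linarith [cos_le_one ω])
  have hintegr : Integrable (fun q : ℝ × ℝ => (δ + A * (1 - cos q.1) + B * (1 - cos q.2)) ^ (-p)) (nuP a b) := by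
    refine Integrable.mono' (integrable_const (δ ^ (-p))) ?_ (Filter.Eventually.of_forall fun q => ?_)
    · refine Continuous.aestronglyMeasurable (Continuous.rpow_const (by fun_prop) fun q => Or.inl ?_)
      have := hcos A hA q.1
      have := hcos B hB q.2
      positivity
    · have := hcos A hA q.1
      have := hcos B hB q.2
      rw [norm_of_nonneg (by positivity)]
      exact rpow_le_rpow_of_nonpos hδ (by linarith) (by linarith)
  have hint2 : Integrable (fun x : ℝ => (δ + A * (1 - cos x)) ^ (-(p - b - 1 / 2))) (nu a) := by
    refine Integrable.mono' (integrable_const (δ ^ (-(p - b - 1 / 2)))) ?_ (Filter.Eventually.of_forall fun q => ?_)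
    · refine Continuous.aestronglyMeasurable (Continuous.rpow_const (by fun_prop) fun q => Or.inl ?_)
      have := hcos A hA q
      positivity
    · have := hcos A hA q
      rw [norm_of_nonneg (by positivity)]
      exact rpow_le_rpow_of_nonpos hδ (by linarith) (by linarith)
  rw [nuP, integral_prod _ hintegr]
  calc _ ≤ ∫ x, C1 * (δ + B) ^ (-(b + 1 / 2)) * (δ + A * (1 - cos x)) ^ (-(p - b - 1 / 2)) ∂(nu a) := by
        refine integral_mono hintegr.integral_prod_left (hint2.const_mul _) fun x => ?_
        have hx := hcos A hA x
        refine (H1 (δ + A * (1 - cos x)) B (by linarith) hB).trans ?_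
        have hm : (δ + A * (1 - cos x) + B) ^ (-(b + 1 / 2)) ≤ (δ + B) ^ (-(b + 1 / 2)) :=
          rpow_le_rpow_of_nonpos (by positivity) (by linarith) (by linarith)
        have hX : 0 ≤ C1 * (δ + A * (1 - cos x)) ^ (-(p - b - 1 / 2)) := by positivity
        have := mul_le_mul_of_nonneg_left hm hX
        linarith
    _ ≤ C1 * (δ + B) ^ (-(b + 1 / 2)) * (C2 * (δ ^ (-(p - b - 1 / 2 - a - 1 / 2)) * (δ + A) ^ (-(a + 1 / 2)))) := by
        rw [integral_const_mul]
        gcongr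
        exact H2 δ A hδ hA
    _ = _ := by
        rw [show p - b - 1 / 2 - a - 1 / 2 = p - a - b - 1 by ring]; ring

end JK

namespace JK

/-- The argument of the kernel. -/
def WW (θ ψ : ℝ) (p : ℝ × ℝ) : ℝ := Wf (sin (θ / 2) * sin (ψ / 2)) (cos (θ / 2) * cos (ψ / 2)) p
/-- The integrated derivative kernel. -/
def Jk (a b t θ ψ : ℝ) : ℝ := ∫ p, dF (a + b + 2) t (WW θ ψ p) ∂(nuP a b)
/-- The distance function. -/
def d0 (θ ψ : ℝ) : ℝ := 1 - cos ((θ - ψ) / 2)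
/-- The volume factor. -/
def VV (a b θ ψ : ℝ) : ℝ :=
  (1 - cos (θ / 2) * cos (ψ / 2)) ^ (-(a + 1 / 2)) * (1 - sin (θ / 2) * sin (ψ / 2)) ^ (-(b + 1 / 2))

lemma WW_mem {θ ψ : ℝ} (hθ : θ ∈ Icc (0 : ℝ) π) (hψ : ψ ∈ Icc (0 : ℝ) π) (p : ℝ × ℝ) :
    WW θ ψ p ∈ Icc (-1 : ℝ) 1 := by
  obtain ⟨h1, h2, h3⟩ := AB_facts hθ hψ
  exact abs_le.1 (Wf_le h1 h2 (by rw [h3]; exact cos_le_one _) p)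

lemma one_sub_cos_lower {x : ℝ} (hx : |x| ≤ π) : x ^ 2 / 5 ≤ 1 - cos x := by
  have hcos := cos_le_one_sub_mul_cos_sq hx
  have hpi := pi_lt_d2
  have hpi0 := pi_pos
  have : x ^ 2 / 5 ≤ 2 / π ^ 2 * x ^ 2 := by
    rw [div_eq_mul_inv, mul_comm]; gcongr
    rw [le_div_iff₀ (by positivity)]; nlinarith
  linarith

lemma d0_lower {θ ψ : ℝ} (hθ : θ ∈ Icc (0 : ℝ) π) (hψ : ψ ∈ Icc (0 : ℝ) π) : (θ - ψ) ^ 2 / 20 ≤ d0 θ ψ := by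
  have h := one_sub_cos_lower (x := (θ - ψ) / 2) (by
    rw [abs_le]; constructor <;> linarith [hθ.1, hθ.2, hψ.1, hψ.2, pi_pos])
  rw [d0]
  linarith

lemma d0_pos {θ ψ : ℝ} (hθ : θ ∈ Icc (0 : ℝ) π) (hψ : ψ ∈ Icc (0 : ℝ) π) (h : θ ≠ ψ) : 0 < d0 θ ψ := by
  have := d0_lower hθ hψ
  have : 0 < (θ - ψ) ^ 2 := by have := sub_ne_zero.2 h; positivity
  linarith

lemma WW_q {θ ψ : ℝ} (p : ℝ × ℝ) : 1 - WW θ ψ p = d0 θ ψ +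
    sin (θ / 2) * sin (ψ / 2) * (1 - cos p.1) + cos (θ / 2) * cos (ψ / 2) * (1 - cos p.2) := by
  rw [WW, Wf, d0, sub_div, cos_sub]; ring

lemma d0_le_q {θ ψ : ℝ} (hθ : θ ∈ Icc (0 : ℝ) π) (hψ : ψ ∈ Icc (0 : ℝ) π) (p : ℝ × ℝ) :
    d0 θ ψ ≤ 1 - WW θ ψ p := by
  obtain ⟨h1, h2, h3⟩ := AB_facts hθ hψ
  rw [WW_q]
  have := mul_nonneg h1 (sub_nonneg.2 (cos_le_one p.1))
  have := mul_nonneg h2 (sub_nonneg.2 (cos_le_one p.2))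
  linarith

lemma int_WW {a b : ℝ} [Fact (0 < a)] [Fact (0 < b)] {θ ψ : ℝ} (hθ : θ ∈ Icc (0 : ℝ) π)
    (hψ : ψ ∈ Icc (0 : ℝ) π) {f : ℝ → ℝ} (hf : ContinuousOn f (Icc (-1) 1)) :
    Integrable (fun p => f (WW θ ψ p)) (nuP a b) := by
  obtain ⟨C, hC⟩ := isCompact_Icc.exists_bound_of_continuousOn hf
  refine Integrable.mono' (integrable_const C) ?_ (Filter.Eventually.of_forall fun p => hC _ (WW_mem hθ hψ p))
  exact (hf.comp_continuous (Wf_cont _ _) (WW_mem hθ hψ)).aestronglyMeasurable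

lemma cont_q {p : ℝ} {c : ℝ} (hc : 0 < c) : ContinuousOn (fun w : ℝ => (c + (1 - w)) ^ (-p)) (Icc (-1) 1) := by
  refine ContinuousOn.rpow_const (by fun_prop) fun w hw => Or.inl ?_
  have := hw.2
  have : 0 < c + (1 - w) := by linarith
  exact this.ne'

lemma cont_dF {s t : ℝ} (ht : 0 < t) : ContinuousOn (fun w : ℝ => dF s t w) (Icc (-1) 1) :=
  fun w hw => (dF_deriv s ht hw.2).continuousAt.continuousWithinAt

lemma AB_pos {θ ψ : ℝ} (hθ : θ ∈ Icc (0 : ℝ) π) (hψ : ψ ∈ Icc (0 : ℝ) π) (h : θ ≠ ψ) :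
    0 < 1 - cos (θ / 2) * cos (ψ / 2) ∧ 0 < 1 - sin (θ / 2) * sin (ψ / 2) ∧
    d0 θ ψ + sin (θ / 2) * sin (ψ / 2) = 1 - cos (θ / 2) * cos (ψ / 2) ∧
    d0 θ ψ + cos (θ / 2) * cos (ψ / 2) = 1 - sin (θ / 2) * sin (ψ / 2) := by
  obtain ⟨h1, h2, h3⟩ := AB_facts hθ hψ
  have h4 := d0_pos hθ hψ h
  rw [d0, ← h3] at *
  refine ⟨by linarith, by linarith, by ring, by ring⟩

lemma VV_pos {a b θ ψ : ℝ} (hθ : θ ∈ Icc (0 : ℝ) π) (hψ : ψ ∈ Icc (0 : ℝ) π) (h : θ ≠ ψ) :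
    0 < VV a b θ ψ := by
  obtain ⟨h1, h2, _, _⟩ := AB_pos hθ hψ h
  unfold VV; positivity

lemma quad_int {a b p : ℝ} [Fact (0 < a)] [Fact (0 < b)] (hp : a + b + 2 ≤ p) :
    ∃ C : ℝ, 0 ≤ C ∧ ∀ θ ∈ Icc (0 : ℝ) π, ∀ ψ ∈ Icc (0 : ℝ) π, θ ≠ ψ → ∀ t : ℝ, 0 < t →
    ∫ q, (t ^ 2 + (1 - WW θ ψ q)) ^ (-p) ∂(nuP a b) ≤
      C * ((t ^ 2 + d0 θ ψ) ^ (-(p - a - b - 1)) * VV a b θ ψ) := by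
  have ha : 0 < a := Fact.out
  have hb : 0 < b := Fact.out
  obtain ⟨C, hC, H⟩ := two_dim (a := a) (b := b) hp
  refine ⟨C, hC, fun θ hθ ψ hψ hne t ht => ?_⟩
  obtain ⟨h1, h2, h3⟩ := AB_facts hθ hψ
  obtain ⟨g1, g2, g3, g4⟩ := AB_pos hθ hψ hne
  have hd := d0_pos hθ hψ hne
  have hH := H (t ^ 2 + d0 θ ψ) _ _ (by positivity) h1 h2
  simp_rw [WW_q]
  refine le_trans (le_of_eq ?_) (hH.trans ?_)
  · congr 1; ext q; congr 1; ring
  · rw [mul_assoc, VV]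
    have e1 : (t ^ 2 + d0 θ ψ + sin (θ / 2) * sin (ψ / 2)) ^ (-(a + 1 / 2)) ≤
      (1 - cos (θ / 2) * cos (ψ / 2)) ^ (-(a + 1 / 2)) :=
      rpow_le_rpow_of_nonpos g1 (by nlinarith) (by linarith)
    have e2 : (t ^ 2 + d0 θ ψ + cos (θ / 2) * cos (ψ / 2)) ^ (-(b + 1 / 2)) ≤
      (1 - sin (θ / 2) * sin (ψ / 2)) ^ (-(b + 1 / 2)) :=
      rpow_le_rpow_of_nonpos g2 (by nlinarith) (by linarith)
    gcongr

lemma J_le (a b : ℝ) [Fact (0 < a)] [Fact (0 < b)] :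
    ∃ C : ℝ, 0 ≤ C ∧ ∀ θ ∈ Icc (0 : ℝ) π, ∀ ψ ∈ Icc (0 : ℝ) π, θ ≠ ψ → ∀ t : ℝ, 0 < t →
    |Jk a b t θ ψ| ≤ C * ((t ^ 2 + d0 θ ψ)⁻¹ * VV a b θ ψ) := by
  have ha : 0 < a := Fact.out
  have hb : 0 < b := Fact.out
  obtain ⟨C, hC, H⟩ := quad_int (a := a) (b := b) le_rfl
  refine ⟨(1 / 2 + (a + b + 2)) * 34 ^ (a + b + 2) * C, by positivity, fun θ hθ ψ hψ hne t ht => ?_⟩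
  have h := H θ hθ ψ hψ hne t ht
  rw [show a + b + 2 - a - b - 1 = 1 by ring, rpow_neg_one] at h
  have ht2 : 0 < t ^ 2 := by positivity
  rw [← norm_eq_abs]
  calc _ ≤ ∫ q, ((1 / 2 + (a + b + 2)) * 34 ^ (a + b + 2)) * (t ^ 2 + (1 - WW θ ψ q)) ^ (-(a + b + 2)) ∂(nuP a b) := by
        refine norm_integral_le_of_norm_le ((int_WW hθ hψ (cont_q ht2)).const_mul _)
          (Filter.Eventually.of_forall fun q => ?_)
        have hw := WW_mem hθ hψ q
        refine (dF_le (by linarith) ht hw.2).trans ?_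
        rw [mul_assoc]
        exact mul_le_mul_of_nonneg_left (cosh_bound (by linarith) ht hw.2 hw.1) (by positivity)
    _ ≤ _ := by
        rw [integral_const_mul, mul_assoc _ C]
        gcongr

lemma WW_lip {θ θ' ψ : ℝ} (hθ : θ ∈ Icc (0 : ℝ) π) (hψ : ψ ∈ Icc (0 : ℝ) π)
    (h : |θ' - θ| ≤ |θ - ψ| / 20) (p : ℝ × ℝ) :
    |WW θ' ψ p - WW θ ψ p| ≤ |θ' - θ| * √(1 - WW θ ψ p) ∧ |WW θ' ψ p - WW θ ψ p| ≤ (1 - WW θ ψ p) / 2 := by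
  have hq := (d0_lower hθ hψ).trans (d0_le_q hθ hψ p)
  have hw := WW_mem hθ hψ p
  have hq0 : 0 ≤ 1 - WW θ ψ p := by linarith [hw.2]
  set S := √(1 - WW θ ψ p) with hS
  have hS0 : 0 ≤ S := sqrt_nonneg _
  have hS2 : S ^ 2 = 1 - WW θ ψ p := sq_sqrt hq0
  obtain ⟨η, hη⟩ : ∃ η, θ' = θ + 2 * η := ⟨(θ' - θ) / 2, by ring⟩
  set v := cos (θ / 2) * (sin (ψ / 2) * cos p.1) - sin (θ / 2) * (cos (ψ / 2) * cos p.2) with hv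
  have e1 : WW θ' ψ p = WW θ ψ p * cos η + v * sin η := by
    rw [WW, WW, Wf, Wf, hη, show (θ + 2 * η) / 2 = θ / 2 + η by ring, sin_add, cos_add, hv]; ring
  have e2 : v ^ 2 + WW θ ψ p ^ 2 ≤ 1 := by
    have : v ^ 2 + WW θ ψ p ^ 2 = (sin (ψ / 2) * cos p.1) ^ 2 + (cos (ψ / 2) * cos p.2) ^ 2 := by
      rw [WW, Wf, hv]
      linear_combination ((sin (ψ / 2) * cos p.1) ^ 2 + (cos (ψ / 2) * cos p.2) ^ 2) * (sin_sq_add_cos_sq (θ / 2))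
    rw [this, mul_pow, mul_pow]
    nlinarith [sin_sq_add_cos_sq (ψ / 2), cos_sq_le_one p.1, cos_sq_le_one p.2, sq_nonneg (sin (ψ / 2)), sq_nonneg (cos (ψ / 2))]
  have hη2 : |η| ≤ S / 8 := by
    refine abs_le_of_sq_le_sq ?_ (by positivity)
    rw [div_pow, hS2]
    have : (θ' - θ) ^ 2 ≤ (|θ - ψ| / 20) ^ 2 := by rw [← sq_abs]; gcongr
    rw [div_pow, sq_abs, hη] at this
    nlinarith
  have hv2 : |v| ≤ 3 / 2 * S := by
    refine abs_le_of_sq_le_sq ?_ (by positivity)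
    nlinarith [hw.1, hw.2]
  have hmain : |WW θ' ψ p - WW θ ψ p| ≤ |η| * (25 / 16 * S) := by
    have : WW θ' ψ p - WW θ ψ p = -(WW θ ψ p * (1 - cos η)) + v * sin η := by rw [e1]; ring
    rw [this]
    calc _ ≤ |-(WW θ ψ p * (1 - cos η))| + |v * sin η| := abs_add_le _ _
      _ ≤ 1 * (|η| ^ 2 / 2) + (3 / 2 * S) * |η| := by
        rw [abs_neg, abs_mul, abs_mul, abs_of_nonneg (sub_nonneg.2 (cos_le_one η))]
        refine add_le_add (mul_le_mul (abs_le.2 hw) ?_ (sub_nonneg.2 (cos_le_one η)) zero_le_one)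
          (mul_le_mul hv2 abs_sin_le_abs (abs_nonneg _) (by positivity))
        rw [sq_abs]; linarith [one_sub_sq_div_two_le_cos (x := η)]
      _ ≤ _ := by nlinarith [abs_nonneg η]
  have e3 : |θ' - θ| = 2 * |η| := by rw [hη, add_sub_cancel_left, abs_mul]; norm_num
  constructor
  · rw [e3]; nlinarith [abs_nonneg η, mul_nonneg (abs_nonneg η) hS0]
  · rw [← hS2]; nlinarith [abs_nonneg η, mul_nonneg (abs_nonneg η) hS0]

lemma dF_lip {s : ℝ} (hs : 2 ≤ s) {t w w' h : ℝ} (ht : 0 < t) (hw : w ∈ Icc (-1 : ℝ) 1)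
    (hw2 : w' ∈ Icc (-1 : ℝ) 1) (h1 : |w' - w| ≤ |h| * √(1 - w)) (h2 : |w' - w| ≤ (1 - w) / 2) :
    |dF s t w' - dF s t w| ≤ (s / 2 + s * (s + 1)) * 68 ^ (s + 1) * |h| * (t ^ 2 + (1 - w)) ^ (-(s + 1 / 2)) := by
  have hq0 : 0 ≤ 1 - w := by linarith [hw.2]
  have hQ : 0 < t ^ 2 + (1 - w) := by positivity
  have hm := (convex_uIcc w w').norm_image_sub_le_of_norm_hasDerivWithin_le (f := fun w => dF s t w)
    (f' := fun w => dFw s t w) (C := (s / 2 + s * (s + 1)) * (68 ^ (s + 1) * (t ^ 2 + (1 - w)) ^ (-(s + 1))))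
    (fun ξ hξ => (dF_deriv s ht ((uIcc_subset_Icc hw hw2 hξ).2)).hasDerivWithinAt) (fun ξ hξ => ?_)
    left_mem_uIcc right_mem_uIcc
  · simp only [norm_eq_abs] at hm
    refine hm.trans ?_
    have e : (t ^ 2 + (1 - w)) ^ (-(s + 1 / 2)) = (t ^ 2 + (1 - w)) ^ (-(s + 1)) * √(t ^ 2 + (1 - w)) := by
      rw [sqrt_eq_rpow, ← rpow_add hQ]; ring_nf
    have e2 : √(1 - w) ≤ √(t ^ 2 + (1 - w)) := sqrt_le_sqrt (by nlinarith)
    rw [e]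
    calc _ ≤ (s / 2 + s * (s + 1)) * (68 ^ (s + 1) * (t ^ 2 + (1 - w)) ^ (-(s + 1))) * (|h| * √(t ^ 2 + (1 - w))) := by
          gcongr
          exact h1.trans (by gcongr)
      _ = _ := by ring
  · have hξ1 := uIcc_subset_Icc hw hw2 hξ
    have hξ2 : (1 - w) / 2 ≤ 1 - ξ := by
      have : |ξ - w| ≤ |w' - w| := abs_sub_left_of_mem_uIcc hξ
      have := (abs_le.1 (this.trans h2)).2
      linarith
    rw [norm_eq_abs]
    refine (dFw_le (by linarith) ht hξ1.2).trans ?_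
    refine mul_le_mul_of_nonneg_left ?_ (by positivity)
    refine (cosh_bound (by linarith) ht hξ1.2 hξ1.1).trans ?_
    have e1 : (t ^ 2 + (1 - ξ)) ^ (-(s + 1)) ≤ ((t ^ 2 + (1 - w)) / 2) ^ (-(s + 1)) :=
      rpow_le_rpow_of_nonpos (by positivity) (by nlinarith) (by linarith)
    calc _ ≤ 34 ^ (s + 1) * ((t ^ 2 + (1 - w)) / 2) ^ (-(s + 1)) := by gcongr
      _ = _ := by
        rw [div_rpow hQ.le (by norm_num), rpow_neg (x := 2) (by norm_num),
          show (68 : ℝ) = 34 * 2 by norm_num, mul_rpow (by norm_num) (by norm_num)]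
        field_simp

lemma J_lip (a b : ℝ) [Fact (0 < a)] [Fact (0 < b)] :
    ∃ C : ℝ, 0 ≤ C ∧ ∀ θ ∈ Icc (0 : ℝ) π, ∀ θ' ∈ Icc (0 : ℝ) π, ∀ ψ ∈ Icc (0 : ℝ) π, θ ≠ ψ →
      |θ' - θ| ≤ |θ - ψ| / 20 → ∀ t : ℝ, 0 < t →
    |Jk a b t θ' ψ - Jk a b t θ ψ| ≤ C * |θ' - θ| * (√(d0 θ ψ))⁻¹ * ((t ^ 2 + d0 θ ψ)⁻¹ * VV a b θ ψ) := by
  have ha : 0 < a := Fact.out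
  have hb : 0 < b := Fact.out
  obtain ⟨C, hC, H⟩ := quad_int (a := a) (b := b) (p := a + b + 2 + 1 / 2) (by linarith)
  set K := ((a + b + 2) / 2 + (a + b + 2) * (a + b + 2 + 1)) * 68 ^ (a + b + 2 + 1) with hK
  have hK0 : 0 ≤ K := by positivity
  refine ⟨K * C, by positivity, fun θ hθ θ' hθ2 ψ hψ hne hh t ht => ?_⟩
  have h := H θ hθ ψ hψ hne t ht
  have hd := d0_pos hθ hψ hne
  have hV := VV_pos (a := a) (b := b) hθ hψ hne
  have ht2 : 0 < t ^ 2 := by positivity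
  have e : (t ^ 2 + d0 θ ψ) ^ (-(a + b + 2 + 1 / 2 - a - b - 1)) ≤ (√(d0 θ ψ))⁻¹ * (t ^ 2 + d0 θ ψ)⁻¹ := by
    rw [show -(a + b + 2 + 1 / 2 - a - b - 1) = -(1 / 2) + -1 by ring, rpow_add (by positivity), rpow_neg_one,
      rpow_neg (by positivity), ← sqrt_eq_rpow]
    gcongr
    linarith
  rw [Jk, Jk, ← integral_sub (int_WW hθ2 hψ (cont_dF ht)) (int_WW hθ hψ (cont_dF ht)), ← norm_eq_abs]
  calc _ ≤ ∫ q, (K * |θ' - θ|) * (t ^ 2 + (1 - WW θ ψ q)) ^ (-(a + b + 2 + 1 / 2)) ∂(nuP a b) := by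
        refine norm_integral_le_of_norm_le ((int_WW hθ hψ (cont_q ht2)).const_mul _)
          (Filter.Eventually.of_forall fun q => ?_)
        obtain ⟨l1, l2⟩ := WW_lip (θ' := θ') hθ hψ hh q
        exact dF_lip (by linarith) ht (WW_mem hθ hψ q) (WW_mem hθ2 hψ q) l1 l2
    _ ≤ K * |θ' - θ| * (C * ((√(d0 θ ψ))⁻¹ * (t ^ 2 + d0 θ ψ)⁻¹ * VV a b θ ψ)) := by
        rw [integral_const_mul]
        gcongr
        exact h.trans (by gcongr)
    _ = _ := by ring

end JK

namespace JK

lemma dF_bd {s t w : ℝ} (hs : 2 ≤ s) (ht : 0 < t) (hw : w ∈ Icc (-1 : ℝ) 1) :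
    |dF s t w| ≤ (1 / 2 + s) * (34 ^ s * (t ^ 2 + (1 - w)) ^ (-s)) := by
  refine (dF_le (by linarith) ht hw.2).trans ?_
  exact mul_le_mul_of_nonneg_left (cosh_bound hs ht hw.2 hw.1) (by positivity)

lemma Ik_deriv {a b : ℝ} [Fact (0 < a)] [Fact (0 < b)] {θ ψ : ℝ} (hθ : θ ∈ Icc (0 : ℝ) π)
    (hψ : ψ ∈ Icc (0 : ℝ) π) {t : ℝ} (ht : 0 < t) :
    HasDerivAt (fun t => ∫ p, Fk (a + b + 2) t (WW θ ψ p) ∂(nuP a b)) (Jk a b t θ ψ) t := by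
  have ha : 0 < a := Fact.out
  have hb : 0 < b := Fact.out
  have hcF : ∀ x : ℝ, 0 < x → ContinuousOn (fun w : ℝ => Fk (a + b + 2) x w) (Icc (-1) 1) := by
    intro x hx
    unfold Fk
    refine ContinuousOn.mul continuousOn_const (ContinuousOn.rpow_const (by fun_prop) fun w hw => Or.inl ?_)
    exact (D_pos hx hw.2).ne'
  refine (hasDerivAt_integral_of_dominated_loc_of_deriv_le (s := Ioi (t / 2))
    (F := fun t p => Fk (a + b + 2) t (WW θ ψ p)) (F' := fun t p => dF (a + b + 2) t (WW θ ψ p))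
    (bound := fun _ => (1 / 2 + (a + b + 2)) * (34 ^ (a + b + 2) * ((t / 2) ^ 2) ^ (-(a + b + 2))))
    (Ioi_mem_nhds (by linarith)) ?_ (int_WW hθ hψ (hcF t ht)) (int_WW hθ hψ (cont_dF ht)).aestronglyMeasurable
    (Filter.Eventually.of_forall fun p x hx => ?_) (integrable_const _)
    (Filter.Eventually.of_forall fun p x hx => ?_)).2
  · filter_upwards [Ioi_mem_nhds ht] with x hx
    exact (int_WW hθ hψ (hcF x hx)).aestronglyMeasurable
  · have hx0 : 0 < x := lt_trans (by positivity) hx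
    have hw := WW_mem hθ hψ p
    rw [norm_eq_abs]
    refine (dF_bd (by linarith) hx0 hw).trans ?_
    have e : (x ^ 2 + (1 - WW θ ψ p)) ^ (-(a + b + 2)) ≤ ((t / 2) ^ 2) ^ (-(a + b + 2)) := by
      refine rpow_le_rpow_of_nonpos (by positivity) ?_ (by linarith)
      have : (t / 2) ^ 2 ≤ x ^ 2 := pow_le_pow_left₀ (by positivity) (le_of_lt hx) 2
      linarith [hw.2]
    exact mul_le_mul_of_nonneg_left (mul_le_mul_of_nonneg_left e (by positivity)) (by positivity)
  · exact Fk_deriv _ (lt_trans (by positivity) hx) (WW_mem hθ hψ p).2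

/-- The Poisson sum. -/
def GG (a b t θ ψ : ℝ) : ℝ := ∑' n : ℕ, exp (-t * (n + (a + b + 1) / 2)) * trigP a b n θ * trigP a b n ψ

lemma GG_symm (a b t θ ψ : ℝ) : GG a b t θ ψ = GG a b t ψ θ := by
  unfold GG; congr 1; ext n; ring

lemma GG_deriv {a b : ℝ} [Fact (0 < a)] [Fact (0 < b)] {θ ψ : ℝ} (hθ : θ ∈ Icc (0 : ℝ) π)
    (hψ : ψ ∈ Icc (0 : ℝ) π) {t : ℝ} (ht : 0 < t) :
    deriv (fun t => GG a b t θ ψ) t = C0 a b * Jk a b t θ ψ := by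
  refine HasDerivAt.deriv ?_
  refine ((Ik_deriv hθ hψ ht).const_mul (C0 a b)).congr_of_eventuallyEq ?_
  filter_upwards [Ioi_mem_nhds ht] with x hx
  exact poisson_rep hθ hψ hx

lemma GG_analytic {a b : ℝ} [Fact (0 < a)] [Fact (0 < b)] (θ ψ : ℝ) :
    AnalyticOnNhd ℝ (deriv fun t => GG a b t θ ψ) (Ioi 0) := by
  have ha : 0 < a := Fact.out
  have hb : 0 < b := Fact.out
  refine AnalyticOnNhd.deriv fun t ht => ?_
  have e : (fun t => GG a b t θ ψ) = fun t => exp (-t * ((a + b + 1) / 2)) *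
      ∑' n : ℕ, (trigP a b n θ * trigP a b n ψ) * (exp (-t)) ^ n := by
    ext t
    rw [GG, ← tsum_mul_left]
    congr 1; ext n
    rw [mul_add, exp_add, show -t * (n : ℝ) = n * (-t) by ring, exp_nat_mul]
    ring
  rw [e]
  have h1 : AnalyticAt ℝ (fun x : ℝ => ∑' n : ℕ, (trigP a b n θ * trigP a b n ψ) * x ^ n) (exp (-t)) := by
    refine analytic_tsum _ 1 (fun r hr hr1 => trigP_summable ha hb θ ψ hr hr1) ?_
    rw [abs_of_pos (exp_pos _)]
    exact exp_lt_one_iff.2 (by simpa using ht)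
  have h2 : AnalyticAt ℝ (fun t : ℝ => exp (-t)) t := by fun_prop
  have h3 : AnalyticAt ℝ (fun t : ℝ => exp (-t * ((a + b + 1) / 2))) t := by fun_prop
  exact h3.fun_mul (AnalyticAt.fun_comp (f := fun t : ℝ => exp (-t)) h1 h2)

lemma jHtil_eq {α β : ℝ} (hα : -1 < α) (hβ : -1 < β) (t θ ψ : ℝ) :
    jHtil α β t θ ψ = (1 / 8 * sin θ * sin ψ) * GG (α + 1) (β + 1) t θ ψ := by
  rw [jHtil, GG]
  congr 2; ext n
  congr 3
  rw [jLam, sqrt_sq]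
  · push_cast; ring
  · push_cast
    have : (0 : ℝ) ≤ n := by positivity
    linarith

/-- The integral part of the kernel. -/
def LI (a b : ℝ) (φ : ℝ → ℝ) (θ ψ : ℝ) : ℝ := ∫ t in Ioi (0 : ℝ), deriv (fun t => GG a b t θ ψ) t * φ t

lemma lapKer_eq {α β : ℝ} (hα : -1 < α) (hβ : -1 < β) (φ : ℝ → ℝ) (θ ψ : ℝ) :
    lapKer α β φ θ ψ = -(1 / 8 * sin θ * sin ψ * LI (α + 1) (β + 1) φ θ ψ) := by
  rw [lapKer, LI, ← integral_const_mul]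
  congr 2; ext t
  simp_rw [jHtil_eq hα hβ]
  rw [deriv_const_mul_field]
  ring

lemma lapKer_symm {α β : ℝ} (hα : -1 < α) (hβ : -1 < β) (φ : ℝ → ℝ) (θ ψ : ℝ) :
    lapKer α β φ θ ψ = lapKer α β φ ψ θ := by
  rw [lapKer_eq hα hβ, lapKer_eq hα hβ, LI, LI]
  simp_rw [GG_symm _ _ _ θ ψ]
  ring

lemma LI_nonmeas {a b : ℝ} [Fact (0 < a)] [Fact (0 < b)] {φ : ℝ → ℝ}
    (hφ : ¬ AEStronglyMeasurable φ (volume.restrict (Ioi (0 : ℝ)))) (θ ψ : ℝ) : LI a b φ θ ψ = 0 := by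
  rw [LI]
  rcases (GG_analytic (a := a) (b := b) θ ψ).eqOn_zero_or_eventually_ne_zero_of_preconnected
    isPreconnected_Ioi with h | h
  · rw [setIntegral_congr_fun (g := fun _ => (0 : ℝ)) measurableSet_Ioi]
    · simp
    · intro t ht
      have := h ht
      simp only [Pi.zero_apply] at this
      simp only [this, zero_mul]
  · have h2 := ae_restrict_le_codiscreteWithin (μ := volume) (measurableSet_Ioi (a := (0 : ℝ))) h
    refine integral_undef fun hi => hφ ?_
    have hm : AEStronglyMeasurable (deriv fun t => GG a b t θ ψ) (volume.restrict (Ioi (0 : ℝ))) :=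
      (measurable_deriv _).aestronglyMeasurable
    have := (hi.aestronglyMeasurable.aemeasurable.div hm.aemeasurable).aestronglyMeasurable
    refine this.congr ?_
    filter_upwards [h2] with t ht
    have ht : deriv (fun t => GG a b t θ ψ) t ≠ 0 := ht
    simp only [Pi.div_apply]
    field_simp

lemma inv_int {d : ℝ} (hd : 0 < d) : IntegrableOn (fun t : ℝ => (t ^ 2 + d)⁻¹) (Ioi 0) ∧
    ∫ t in Ioi (0 : ℝ), (t ^ 2 + d)⁻¹ = π / 2 * (√d)⁻¹ := by
  have hS : 0 < √d := sqrt_pos.2 hd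
  have e : ∀ t : ℝ, (t ^ 2 + d)⁻¹ = d⁻¹ * (1 + ((√d)⁻¹ * t) ^ 2)⁻¹ := by
    intro t
    rw [← mul_inv, mul_pow, inv_pow, sq_sqrt hd.le]
    congr 1; field_simp
    ring
  simp_rw [e]
  constructor
  · refine Integrable.const_mul ?_ _
    refine (integrableOn_Ioi_comp_mul_left_iff (fun x : ℝ => (1 + x ^ 2)⁻¹) 0 (inv_pos.2 hS)).2 ?_
    exact integrable_inv_one_add_sq.integrableOn
  · rw [integral_const_mul, integral_comp_mul_left_Ioi (fun x : ℝ => (1 + x ^ 2)⁻¹) 0 (inv_pos.2 hS)]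
    simp only [mul_zero, integral_Ioi_inv_one_add_sq, arctan_zero, sub_zero, inv_inv, smul_eq_mul]
    have : d = √d * √d := (mul_self_sqrt hd.le).symm
    rw [show d⁻¹ = (√d * √d)⁻¹ by rw [← this]]
    field_simp

lemma LI_le (a b : ℝ) [Fact (0 < a)] [Fact (0 < b)] : ∃ C : ℝ, 0 ≤ C ∧ ∀ (φ : ℝ → ℝ) (M : ℝ),
    (∀ t : ℝ, 0 < t → |φ t| ≤ M) → ∀ θ ∈ Icc (0 : ℝ) π, ∀ ψ ∈ Icc (0 : ℝ) π, θ ≠ ψ →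
    (AEStronglyMeasurable φ (volume.restrict (Ioi (0 : ℝ))) →
      IntegrableOn (fun t => deriv (fun t => GG a b t θ ψ) t * φ t) (Ioi 0)) ∧
    |LI a b φ θ ψ| ≤ C * M * ((√(d0 θ ψ))⁻¹ * VV a b θ ψ) := by
  obtain ⟨C, hC, H⟩ := J_le a b
  refine ⟨|C0 a b| * C * (π / 2), by positivity, fun φ M hφ θ hθ ψ hψ hne => ?_⟩
  have hM : 0 ≤ M := (abs_nonneg _).trans (hφ 1 one_pos)
  have hd := d0_pos hθ hψ hne
  obtain ⟨i1, i2⟩ := inv_int hd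
  have hb : ∀ᵐ t ∂(volume.restrict (Ioi (0 : ℝ))), ‖deriv (fun t => GG a b t θ ψ) t * φ t‖ ≤
      (|C0 a b| * C * M * VV a b θ ψ) * (t ^ 2 + d0 θ ψ)⁻¹ := by
    filter_upwards [ae_restrict_mem measurableSet_Ioi] with t ht
    rw [norm_eq_abs, abs_mul, GG_deriv hθ hψ ht, abs_mul]
    calc _ ≤ |C0 a b| * (C * ((t ^ 2 + d0 θ ψ)⁻¹ * VV a b θ ψ)) * M :=
          mul_le_mul (mul_le_mul_of_nonneg_left (H θ hθ ψ hψ hne t ht) (abs_nonneg _)) (hφ t ht) (abs_nonneg _)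
            (mul_nonneg (abs_nonneg _) ((abs_nonneg _).trans (H θ hθ ψ hψ hne t ht)))
      _ = _ := by ring
  refine ⟨fun hm => (i1.const_mul _).mono' ((measurable_deriv _).aestronglyMeasurable.mul hm) hb, ?_⟩
  rw [LI, ← norm_eq_abs]
  refine (norm_integral_le_of_norm_le (i1.const_mul _) hb).trans (le_of_eq ?_)
  rw [integral_const_mul, i2]
  ring

lemma LI_lip (a b : ℝ) [Fact (0 < a)] [Fact (0 < b)] : ∃ C : ℝ, 0 ≤ C ∧ ∀ (φ : ℝ → ℝ) (M : ℝ),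
    (∀ t : ℝ, 0 < t → |φ t| ≤ M) → ∀ θ ∈ Icc (0 : ℝ) π, ∀ θ' ∈ Icc (0 : ℝ) π, ∀ ψ ∈ Icc (0 : ℝ) π, θ ≠ ψ →
      |θ' - θ| ≤ |θ - ψ| / 20 →
    |LI a b φ θ' ψ - LI a b φ θ ψ| ≤ C * M * |θ' - θ| * ((d0 θ ψ)⁻¹ * VV a b θ ψ) := by
  obtain ⟨C, hC, H⟩ := J_lip a b
  obtain ⟨C1, hC1, H1⟩ := LI_le a b
  refine ⟨|C0 a b| * C * (π / 2), by positivity, fun φ M hφ θ hθ θ' hθ2 ψ hψ hne hh => ?_⟩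
  have hM : 0 ≤ M := (abs_nonneg _).trans (hφ 1 one_pos)
  have hd := d0_pos hθ hψ hne
  have hV := VV_pos (a := a) (b := b) hθ hψ hne
  obtain ⟨i1, i2⟩ := inv_int hd
  by_cases hm : AEStronglyMeasurable φ (volume.restrict (Ioi (0 : ℝ)))
  swap
  · rw [LI_nonmeas hm, LI_nonmeas hm, sub_zero, abs_zero]; positivity
  have hne2 : θ' ≠ ψ := by
    rintro rfl
    rw [abs_sub_comm] at hh
    have : 0 < |θ - θ'| := abs_pos.2 (sub_ne_zero.2 hne)
    linarith
  have hb : ∀ᵐ t ∂(volume.restrict (Ioi (0 : ℝ))), ‖deriv (fun t => GG a b t θ' ψ) t * φ t - deriv (fun t => GG a b t θ ψ) t * φ t‖ ≤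
      (|C0 a b| * C * M * |θ' - θ| * (√(d0 θ ψ))⁻¹ * VV a b θ ψ) * (t ^ 2 + d0 θ ψ)⁻¹ := by
    filter_upwards [ae_restrict_mem measurableSet_Ioi] with t ht
    have h := H θ hθ θ' hθ2 ψ hψ hne hh t ht
    rw [← sub_mul, norm_eq_abs, abs_mul, GG_deriv hθ hψ ht, GG_deriv hθ2 hψ ht, ← mul_sub, abs_mul]
    calc _ ≤ |C0 a b| * (C * |θ' - θ| * (√(d0 θ ψ))⁻¹ * ((t ^ 2 + d0 θ ψ)⁻¹ * VV a b θ ψ)) * M :=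
          mul_le_mul (mul_le_mul_of_nonneg_left h (abs_nonneg _)) (hφ t ht) (abs_nonneg _)
            (mul_nonneg (abs_nonneg _) ((abs_nonneg _).trans h))
      _ = _ := by ring
  rw [LI, LI, ← integral_sub ((H1 φ M hφ θ' hθ2 ψ hψ hne2).1 hm) ((H1 φ M hφ θ hθ ψ hψ hne).1 hm), ← norm_eq_abs]
  refine (norm_integral_le_of_norm_le (i1.const_mul _) hb).trans (le_of_eq ?_)
  rw [integral_const_mul, i2]
  have : d0 θ ψ = √(d0 θ ψ) * √(d0 θ ψ) := (mul_self_sqrt hd.le).symm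
  rw [show (d0 θ ψ)⁻¹ = (√(d0 θ ψ) * √(d0 θ ψ))⁻¹ by rw [← this], mul_inv]
  ring

lemma lap_le {α β : ℝ} (hα : -1 < α) (hβ : -1 < β) : ∃ C : ℝ, 0 ≤ C ∧ ∀ (φ : ℝ → ℝ) (M : ℝ),
    (∀ t : ℝ, 0 < t → |φ t| ≤ M) → ∀ θ ∈ Ioo (0 : ℝ) π, ∀ ψ ∈ Ioo (0 : ℝ) π, θ ≠ ψ →
    |lapKer α β φ θ ψ| ≤ C * M * (sin θ * sin ψ * (√(d0 θ ψ))⁻¹ * VV (α + 1) (β + 1) θ ψ) ∧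
    |deriv (fun θ' => lapKer α β φ θ' ψ) θ| ≤ C * M * (sin ψ * (√(d0 θ ψ))⁻¹ * VV (α + 1) (β + 1) θ ψ
      + sin θ * sin ψ * (d0 θ ψ)⁻¹ * VV (α + 1) (β + 1) θ ψ) := by
  have : Fact (0 < α + 1) := ⟨by linarith⟩
  have : Fact (0 < β + 1) := ⟨by linarith⟩
  obtain ⟨C1, hC1, H1⟩ := LI_le (α + 1) (β + 1)
  obtain ⟨C2, hC2, H2⟩ := LI_lip (α + 1) (β + 1)
  refine ⟨C1 + C2, by positivity, fun φ M hφ θ hθ ψ hψ hne => ?_⟩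
  have hM : 0 ≤ M := (abs_nonneg _).trans (hφ 1 one_pos)
  have hθI := Ioo_subset_Icc_self hθ
  have hψI := Ioo_subset_Icc_self hψ
  have hd := d0_pos hθI hψI hne
  have hd2 := d0_lower hθI hψI
  have hV := VV_pos (a := α + 1) (b := β + 1) hθI hψI hne
  have hsθ : 0 < sin θ := sin_pos_of_mem_Ioo hθ
  have hsψ : 0 < sin ψ := sin_pos_of_mem_Ioo hψ
  have hL := (H1 φ M hφ θ hθI ψ hψI hne).2
  set V := VV (α + 1) (β + 1) θ ψ with hVdef
  set S := √(d0 θ ψ) with hS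
  have hS0 : 0 < S := sqrt_pos.2 hd
  have hSS : d0 θ ψ = S * S := (mul_self_sqrt hd.le).symm
  constructor
  · rw [lapKer_eq hα hβ, abs_neg, abs_mul, abs_of_pos (by positivity : 0 < 1 / 8 * sin θ * sin ψ)]
    calc _ ≤ 1 / 8 * sin θ * sin ψ * (C1 * M * (S⁻¹ * V)) := mul_le_mul_of_nonneg_left hL (by positivity)
      _ = (1 / 8 * C1) * (M * (sin θ * sin ψ * S⁻¹ * V)) := by ring
      _ ≤ (C1 + C2) * (M * (sin θ * sin ψ * S⁻¹ * V)) := mul_le_mul_of_nonneg_right (by linarith) (by positivity)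
      _ = _ := by ring
  · rw [← norm_eq_abs]
    refine norm_deriv_le_of_lip' (by positivity) ?_
    have hr : 0 < |θ - ψ| / 20 := by have := abs_pos.2 (sub_ne_zero.2 hne); positivity
    filter_upwards [isOpen_Ioo.mem_nhds hθ, Metric.ball_mem_nhds θ hr] with θ' hθ2 hb
    rw [Metric.mem_ball, dist_eq] at hb
    have hD := H2 φ M hφ θ hθI θ' (Ioo_subset_Icc_self hθ2) ψ hψI hne hb.le
    have hhS : |θ' - θ| ≤ S := by
      refine abs_le_of_sq_le_sq ?_ hS0.le
      have : (θ' - θ) ^ 2 ≤ (|θ - ψ| / 20) ^ 2 := by rw [← sq_abs]; gcongr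
      rw [div_pow, sq_abs] at this
      nlinarith
    have hsin : |sin θ' - sin θ| ≤ |θ' - θ| := by
      have := abs_sin_sub_sin_le θ' θ
      exact this
    have hsin2 : |sin θ'| ≤ sin θ + |θ' - θ| := by
      rw [abs_le] at hsin
      rw [abs_le]; constructor <;> linarith
    rw [lapKer_eq hα hβ, lapKer_eq hα hβ, norm_eq_abs, norm_eq_abs]
    have e : -(1 / 8 * sin θ' * sin ψ * LI (α + 1) (β + 1) φ θ' ψ) - -(1 / 8 * sin θ * sin ψ * LI (α + 1) (β + 1) φ θ ψ)
      = -(1 / 8 * sin ψ) * ((sin θ' - sin θ) * LI (α + 1) (β + 1) φ θ ψ + sin θ' * (LI (α + 1) (β + 1) φ θ' ψ - LI (α + 1) (β + 1) φ θ ψ)) := by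
      ring
    rw [e, abs_mul, abs_neg, abs_of_pos (by positivity : 0 < 1 / 8 * sin ψ)]
    set h := |θ' - θ| with hh
    have hh0 : 0 ≤ h := abs_nonneg _
    have f1 : h * (d0 θ ψ)⁻¹ ≤ S⁻¹ := by
      rw [hSS, mul_inv, ← mul_assoc]
      calc _ ≤ S * S⁻¹ * S⁻¹ := mul_le_mul_of_nonneg_right (mul_le_mul_of_nonneg_right hhS (by positivity)) (by positivity)
        _ = _ := by field_simp
    have f2 : |(sin θ' - sin θ) * LI (α + 1) (β + 1) φ θ ψ + sin θ' * (LI (α + 1) (β + 1) φ θ' ψ - LI (α + 1) (β + 1) φ θ ψ)|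
        ≤ h * (C1 * M * (S⁻¹ * V)) + (sin θ + h) * (C2 * M * h * ((d0 θ ψ)⁻¹ * V)) := by
      refine (abs_add_le _ _).trans ?_
      rw [abs_mul, abs_mul]
      exact add_le_add (mul_le_mul hsin hL (abs_nonneg _) hh0) (mul_le_mul hsin2 hD (abs_nonneg _) (by positivity))
    calc _ ≤ 1 / 8 * sin ψ * (h * (C1 * M * (S⁻¹ * V)) + (sin θ + h) * (C2 * M * h * ((d0 θ ψ)⁻¹ * V))) :=
          mul_le_mul_of_nonneg_left f2 (by positivity)
      _ = sin ψ * M * h * V / 8 * (C1 * S⁻¹ + C2 * sin θ * (d0 θ ψ)⁻¹ + C2 * (h * (d0 θ ψ)⁻¹)) := by ring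
      _ ≤ sin ψ * M * h * V / 8 * (8 * ((C1 + C2) * (S⁻¹ + sin θ * (d0 θ ψ)⁻¹))) := by
          refine mul_le_mul_of_nonneg_left ?_ (by positivity)
          have g1 : 0 ≤ C1 * S⁻¹ := by positivity
          have g2 : 0 ≤ C2 * S⁻¹ := by positivity
          have g3 : 0 ≤ C1 * (sin θ * (d0 θ ψ)⁻¹) := by positivity
          have g4 : 0 ≤ C2 * (sin θ * (d0 θ ψ)⁻¹) := by positivity
          have g5 := mul_le_mul_of_nonneg_left f1 hC2
          nlinarith
      _ = _ := by ring

end JK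

namespace JK

lemma rpow_between {u s v : ℝ} (e : ℝ) (hu : 0 < u) (h1 : u ≤ s) (h2 : s ≤ v) : s ^ e ≤ u ^ e + v ^ e := by
  have hs : 0 < s := hu.trans_le h1
  have hv : 0 < v := hs.trans_le h2
  have p1 : 0 < u ^ e := rpow_pos_of_pos hu _
  have p2 : 0 < v ^ e := rpow_pos_of_pos hv _
  rcases le_total 0 e with h | h
  · linarith [rpow_le_rpow hs.le h2 h]
  · linarith [rpow_le_rpow_of_nonpos hu h1 h]

lemma rpow_comp {c d : ℝ} (e : ℝ) (hc : 0 < c) (hd : 0 < d) {s v : ℝ} (hv : 0 < v) (h1 : c * v ≤ s) (h2 : s ≤ d * v) :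
    s ^ e ≤ (c ^ e + d ^ e) * v ^ e := by
  have := rpow_between e (by positivity) h1 h2
  rwa [mul_rpow hc.le hv.le, mul_rpow hd.le hv.le, ← add_mul] at this

lemma ball_one {e : ℝ} (he : -1 < e) : ∃ C : ℝ, 0 < C ∧ ∀ θ r : ℝ, 0 < θ → 0 < r →
    ∫⁻ x in Ioo (θ - r) (θ + r) ∩ Ioi 0, ENNReal.ofReal (x ^ e) ≤ ENNReal.ofReal (C * r * (θ + r) ^ e) := by
  have he1 : 0 < e + 1 := by linarith
  refine ⟨2 * ((1 / 3) ^ e + 1 ^ e) + 3 / (e + 1), by positivity, fun θ r hθ hr => ?_⟩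
  have hm : 0 < θ + r := by linarith
  have hme : 0 < (θ + r) ^ e := rpow_pos_of_pos hm _
  rcases le_total (2 * r) θ with h | h
  · calc _ ≤ ∫⁻ x in Ioo (θ - r) (θ + r), ENNReal.ofReal (((1 / 3) ^ e + 1 ^ e) * (θ + r) ^ e) := by
          refine (lintegral_mono_set inter_subset_left).trans (setLIntegral_mono' measurableSet_Ioo fun x hx => ?_)
          refine ENNReal.ofReal_le_ofReal (rpow_comp e (by norm_num) one_pos hm ?_ ?_)
          · linarith [hx.1]
          · linarith [hx.2]
      _ = ENNReal.ofReal (((1 / 3) ^ e + 1 ^ e) * (θ + r) ^ e * (2 * r)) := by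
          rw [setLIntegral_const, Real.volume_Ioo, ← ENNReal.ofReal_mul (by positivity)]
          congr 2; ring
      _ ≤ _ := by
          refine ENNReal.ofReal_le_ofReal ?_
          have : 0 ≤ 3 / (e + 1) * r * (θ + r) ^ e := by positivity
          nlinarith
  · have hi : IntervalIntegrable (fun x : ℝ => x ^ e) volume 0 (θ + r) := intervalIntegral.intervalIntegrable_rpow' he
    calc _ ≤ ∫⁻ x in Ioc 0 (θ + r), ENNReal.ofReal (x ^ e) :=
          lintegral_mono_set fun x hx => ⟨hx.2, hx.1.2.le⟩
      _ = ENNReal.ofReal (∫ x in Ioc 0 (θ + r), x ^ e) := by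
          rw [ofReal_integral_eq_lintegral_ofReal ((intervalIntegrable_iff_integrableOn_Ioc_of_le hm.le).1 hi)]
          filter_upwards [ae_restrict_mem measurableSet_Ioc] with x hx
          exact rpow_nonneg hx.1.le _
      _ = ENNReal.ofReal ((θ + r) ^ e * (θ + r) / (e + 1)) := by
          rw [← intervalIntegral.integral_of_le hm.le, integral_rpow (Or.inl he), zero_rpow he1.ne', sub_zero,
            rpow_add_one hm.ne']
      _ ≤ _ := by
          refine ENNReal.ofReal_le_ofReal ?_
          have h1 : (θ + r) ^ e * (θ + r) / (e + 1) ≤ (θ + r) ^ e * (3 * r) / (e + 1) := by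
            refine div_le_div_of_nonneg_right (mul_le_mul_of_nonneg_left (by linarith) hme.le) he1.le
          have h2 : 0 ≤ 2 * ((1 / 3) ^ e + 1 ^ e) * r * (θ + r) ^ e := by positivity
          calc _ ≤ _ := h1
            _ = 3 / (e + 1) * r * (θ + r) ^ e := by ring
            _ ≤ _ := by rw [add_mul, add_mul]; linarith

lemma wt_le {α β x : ℝ} (hx : x ∈ Ioo (0 : ℝ) π) : wt α β x ≤
    ((1 / 4) ^ (2 * α + 1) + 1 ^ (2 * α + 1)) * ((1 / 4) ^ (2 * β + 1) + 1 ^ (2 * β + 1)) *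
      (x ^ (2 * α + 1) * (π - x) ^ (2 * β + 1)) := by
  have hsb : ∀ y : ℝ, y ∈ Ioo 0 π → 1 / 4 * y ≤ sin (y / 2) ∧ sin (y / 2) ≤ 1 * y := by
    intro y hy
    have h0 := hy.1
    constructor
    · have h := mul_le_sin (x := y / 2) (by linarith) (by linarith [hy.2])
      refine le_trans ?_ h
      have : 1 / 4 ≤ 1 / π := one_div_le_one_div_of_le pi_pos pi_le_four
      calc 1 / 4 * y ≤ 1 / π * y := mul_le_mul_of_nonneg_right this h0.le
        _ = _ := by ring
    · linarith [sin_le (x := y / 2) (by linarith)]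
  have hx2 : π - x ∈ Ioo 0 π := ⟨by linarith [hx.2], by linarith [hx.1]⟩
  have hc : cos (x / 2) = sin ((π - x) / 2) := by rw [← cos_pi_div_two_sub]; congr 1; ring
  obtain ⟨a1, a2⟩ := hsb x hx
  obtain ⟨b1, b2⟩ := hsb _ hx2
  have p1 := rpow_comp (2 * α + 1) (by norm_num) one_pos hx.1 a1 a2
  have p2 := rpow_comp (2 * β + 1) (by norm_num) one_pos hx2.1 b1 b2
  rw [wt, hc]
  refine (mul_le_mul p1 p2 (rpow_nonneg (sin_half_nonneg (Ioo_subset_Icc_self hx2)) _) ?_).trans (le_of_eq (by ring))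
  have := rpow_pos_of_pos hx.1 (2 * α + 1)
  positivity

lemma geo_mk {θ r : ℝ} (hθ : θ ∈ Ioo (0 : ℝ) π) (hr : r < π) (hr0 : 0 < r) (e f : ℝ) {x : ℝ}
    (hx : x ∈ Ioo (0 : ℝ) π) (hb : x ∈ Ioo (θ - r) (θ + r)) :
    x ^ e * (π - x) ^ f ≤ (((1 / 4) ^ e + 2 ^ e) + ((1 / 4) ^ f + 2 ^ f)) *
      ((π - θ + r) ^ f * x ^ e + (θ + r) ^ e * (π - x) ^ f) := by
  have hm : 0 < θ + r := by linarith [hθ.1]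
  have hk : 0 < π - θ + r := by linarith [hθ.2]
  have hx1 := hx.1
  have hx2 : 0 < π - x := by linarith [hx.2]
  have e1 := rpow_pos_of_pos hx1 e
  have e2 := rpow_pos_of_pos hx2 f
  have e3 := rpow_pos_of_pos hm e
  have e4 := rpow_pos_of_pos hk f
  have c1 : 0 < (1 / 4 : ℝ) ^ e + 2 ^ e := by positivity
  have c2 : 0 < (1 / 4 : ℝ) ^ f + 2 ^ f := by positivity
  set P := (1 / 4 : ℝ) ^ e + 2 ^ e
  set Q := (1 / 4 : ℝ) ^ f + 2 ^ f
  rcases le_total x (π / 2) with h | h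
  · have := rpow_comp (c := 1 / 4) (d := 2) f (by norm_num) (by norm_num) hk (s := π - x)
      (by linarith [hθ.1]) (by linarith [hb.1])
    calc _ ≤ x ^ e * (Q * (π - θ + r) ^ f) := mul_le_mul_of_nonneg_left this e1.le
      _ = Q * ((π - θ + r) ^ f * x ^ e) := by ring
      _ ≤ (P + Q) * ((π - θ + r) ^ f * x ^ e + (θ + r) ^ e * (π - x) ^ f) := by
          refine mul_le_mul (by linarith) ?_ (by positivity) (by positivity)
          have : 0 < (θ + r) ^ e * (π - x) ^ f := by positivity
          linarith
  · have := rpow_comp (c := 1 / 4) (d := 2) e (by norm_num) (by norm_num) hm (s := x)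
      (by linarith [hθ.2]) (by linarith [hb.2])
    calc _ ≤ (P * (θ + r) ^ e) * (π - x) ^ f := mul_le_mul_of_nonneg_right this e2.le
      _ = P * ((θ + r) ^ e * (π - x) ^ f) := by ring
      _ ≤ (P + Q) * ((π - θ + r) ^ f * x ^ e + (θ + r) ^ e * (π - x) ^ f) := by
          refine mul_le_mul (by linarith) ?_ (by positivity) (by positivity)
          have : 0 < (π - θ + r) ^ f * x ^ e := by positivity
          linarith

lemma ball_eq (α β θ r : ℝ) : ballMeasure α β θ r =
    ∫⁻ x in Ioo (θ - r) (θ + r) ∩ Ioo 0 π, ENNReal.ofReal (wt α β x) := by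
  rw [ballMeasure, measurePlus_eq, withDensity_apply _ measurableSet_Ioo, Measure.restrict_restrict measurableSet_Ioo]
  refine setLIntegral_congr_fun (measurableSet_Ioo.inter measurableSet_Ioo) fun x hx => ?_
  simp only [jPsi_sq _ _ hx.2]

lemma ball_le {α β : ℝ} (hα : -1 < α) (hβ : -1 < β) : ∃ C : ℝ, 0 < C ∧ ∀ θ r : ℝ, θ ∈ Ioo (0 : ℝ) π → 0 < r → r < π →
    ballMeasure α β θ r ≤ ENNReal.ofReal (C * (r * ((θ + r) ^ (2 * α + 1) * (π - θ + r) ^ (2 * β + 1)))) := by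
  obtain ⟨C1, hC1, H1⟩ := ball_one (e := 2 * α + 1) (by linarith)
  obtain ⟨C2, hC2, H2⟩ := ball_one (e := 2 * β + 1) (by linarith)
  set K : ℝ := ((1 / 4) ^ (2 * α + 1) + 1 ^ (2 * α + 1)) * ((1 / 4) ^ (2 * β + 1) + 1 ^ (2 * β + 1)) with hK
  set L : ℝ := ((1 / 4) ^ (2 * α + 1) + 2 ^ (2 * α + 1)) + ((1 / 4) ^ (2 * β + 1) + 2 ^ (2 * β + 1)) with hL
  have hK0 : 0 < K := by positivity
  have hL0 : 0 < L := by positivity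
  refine ⟨K * L * (C1 + C2), by positivity, fun θ r hθ hr hr2 => ?_⟩
  have hm : 0 < θ + r := by linarith [hθ.1]
  have hk : 0 < π - θ + r := by linarith [hθ.2]
  have e3 := rpow_pos_of_pos hm (2 * α + 1)
  have e4 := rpow_pos_of_pos hk (2 * β + 1)
  set X := (θ + r) ^ (2 * α + 1) with hX
  set Y := (π - θ + r) ^ (2 * β + 1) with hY
  have hms : MeasurableSet (Ioo (θ - r) (θ + r) ∩ Ioo 0 π) := measurableSet_Ioo.inter measurableSet_Ioo
  have i1 : ∫⁻ x in Ioo (θ - r) (θ + r) ∩ Ioo 0 π, ENNReal.ofReal (x ^ (2 * α + 1)) ≤ ENNReal.ofReal (C1 * r * X) :=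
    (lintegral_mono_set (inter_subset_inter_right _ Ioo_subset_Ioi_self)).trans (H1 θ r hθ.1 hr)
  have i2 : ∫⁻ x in Ioo (θ - r) (θ + r) ∩ Ioo 0 π, ENNReal.ofReal ((π - x) ^ (2 * β + 1)) ≤ ENNReal.ofReal (C2 * r * Y) := by
    refine le_trans ?_ (H2 (π - θ) r (by linarith [hθ.2]) hr)
    have hp := (Measure.measurePreserving_sub_left volume π).setLIntegral_comp_preimage
      (s := Ioo (π - θ - r) (π - θ + r) ∩ Ioi 0) (measurableSet_Ioo.inter measurableSet_Ioi)
      (f := fun y => ENNReal.ofReal (y ^ (2 * β + 1))) (by fun_prop)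
    rw [← hp]
    refine lintegral_mono_set fun x hx => ?_
    obtain ⟨⟨h1, h2⟩, h3, h4⟩ := hx
    exact ⟨⟨by linarith, by linarith⟩, by simpa using h4⟩
  rw [ball_eq]
  calc _ ≤ ∫⁻ x in Ioo (θ - r) (θ + r) ∩ Ioo 0 π, (ENNReal.ofReal (K * L * Y) * ENNReal.ofReal (x ^ (2 * α + 1)) +
        ENNReal.ofReal (K * L * X) * ENNReal.ofReal ((π - x) ^ (2 * β + 1))) := by
        refine setLIntegral_mono' hms fun x hx => ?_
        have p1 := rpow_nonneg hx.2.1.le (2 * α + 1)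
        have p2 := rpow_nonneg (sub_pos.2 hx.2.2).le (2 * β + 1)
        rw [← ENNReal.ofReal_mul (by positivity), ← ENNReal.ofReal_mul (by positivity), ← ENNReal.ofReal_add (by positivity) (by positivity)]
        refine ENNReal.ofReal_le_ofReal ((wt_le hx.2).trans ?_)
        refine (mul_le_mul_of_nonneg_left (geo_mk hθ hr2 hr _ _ hx.2 hx.1) hK0.le).trans (le_of_eq ?_)
        ring
    _ = ENNReal.ofReal (K * L * Y) * (∫⁻ x in Ioo (θ - r) (θ + r) ∩ Ioo 0 π, ENNReal.ofReal (x ^ (2 * α + 1))) +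
        ENNReal.ofReal (K * L * X) * ∫⁻ x in Ioo (θ - r) (θ + r) ∩ Ioo 0 π, ENNReal.ofReal ((π - x) ^ (2 * β + 1)) := by
        rw [lintegral_add_left (by fun_prop), lintegral_const_mul _ (by fun_prop), lintegral_const_mul _ (by fun_prop)]
    _ ≤ ENNReal.ofReal (K * L * Y) * ENNReal.ofReal (C1 * r * X) + ENNReal.ofReal (K * L * X) * ENNReal.ofReal (C2 * r * Y) :=
        add_le_add (mul_le_mul_right i1 _) (mul_le_mul_right i2 _)
    _ = _ := by
        rw [← ENNReal.ofReal_mul (by positivity), ← ENNReal.ofReal_mul (by positivity), ← ENNReal.ofReal_add (by positivity) (by positivity)]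
        congr 1; ring

lemma ball_pos {α β θ r : ℝ} (hθ : θ ∈ Ioo (0 : ℝ) π) (hr : 0 < r) : ballMeasure α β θ r ≠ 0 := by
  rw [ball_eq]
  have hop : IsOpen (Ioo (θ - r) (θ + r) ∩ Ioo 0 π) := isOpen_Ioo.inter isOpen_Ioo
  have hvol : 0 < volume (Ioo (θ - r) (θ + r) ∩ Ioo 0 π) :=
    hop.measure_pos volume ⟨θ, ⟨by linarith, by linarith⟩, hθ⟩
  have hmeas : Measurable fun x => ENNReal.ofReal (wt α β x) := by unfold wt; fun_prop
  refine ((setLIntegral_pos_iff hmeas).2 (hvol.trans_le (measure_mono fun x hx => ⟨?_, hx⟩))).ne'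
  have h1 := sin_half_pos hx.2
  have h2 := cos_half_pos hx.2
  have : 0 < wt α β x := by unfold wt; positivity
  simpa [Function.mem_support] using this

lemma VV_le {a b : ℝ} (ha : 0 < a) (hb : 0 < b) {θ ψ : ℝ} (hθ : θ ∈ Ioo (0 : ℝ) π) (hψ : ψ ∈ Ioo (0 : ℝ) π) :
    VV a b θ ψ ≤ 80 ^ (a + 1 / 2) * 80 ^ (b + 1 / 2) *
      ((θ + |θ - ψ|) ^ (2 * (a + 1 / 2)) * (π - θ + |θ - ψ|) ^ (2 * (b + 1 / 2)))⁻¹ := by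
  have key : ∀ x y : ℝ, x ∈ Ioo (0 : ℝ) π → y ∈ Ioo (0 : ℝ) π → ∀ p : ℝ, 0 < p →
      (1 - cos (x / 2) * cos (y / 2)) ^ (-p) ≤ 80 ^ p * ((x + |x - y|) ^ (2 * p))⁻¹ := by
    intro x y hx hy p hp
    have hx1 := hx.1
    have hx2 := hx.2
    have hy1 := hy.1
    have hy2 := hy.2
    have hpi := pi_pos
    have hcx := cos_half_nonneg (Ioo_subset_Icc_self hx)
    have hcy := cos_half_nonneg (Ioo_subset_Icc_self hy)
    have lx := one_sub_cos_lower (x := x / 2) (by rw [abs_le]; constructor <;> linarith)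
    have ly := one_sub_cos_lower (x := y / 2) (by rw [abs_le]; constructor <;> linarith)
    have l : (x + |x - y|) ^ 2 / 80 ≤ 1 - cos (x / 2) * cos (y / 2) := by
      rcases le_total x y with h | h
      · rw [abs_of_nonpos (by linarith)]
        have : cos (x / 2) * cos (y / 2) ≤ cos (y / 2) := mul_le_of_le_one_left hcy (cos_le_one _)
        nlinarith
      · rw [abs_of_nonneg (by linarith)]
        have : cos (x / 2) * cos (y / 2) ≤ cos (x / 2) := mul_le_of_le_one_right hcx (cos_le_one _)
        nlinarith
    have hm : 0 < x + |x - y| := by have := abs_nonneg (x - y); linarith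
    refine (rpow_le_rpow_of_nonpos (by positivity) l (by linarith)).trans (le_of_eq ?_)
    rw [rpow_neg (by positivity), div_rpow (by positivity) (by norm_num), ← rpow_two, ← rpow_mul hm.le, inv_div,
      div_eq_mul_inv]
  have k1 := key θ ψ hθ hψ (a + 1 / 2) (by linarith)
  have hrx : ∀ x : ℝ, sin (x / 2) = cos ((π - x) / 2) := fun x => by
    rw [← cos_pi_div_two_sub]; congr 1; ring
  have k2 := key (π - θ) (π - ψ) ⟨by linarith [hθ.2], by linarith [hθ.1]⟩ ⟨by linarith [hψ.2], by linarith [hψ.1]⟩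
    (b + 1 / 2) (by linarith)
  rw [← hrx, ← hrx, show π - θ - (π - ψ) = -(θ - ψ) by ring, abs_neg] at k2
  have hA : 0 ≤ 1 - sin (θ / 2) * sin (ψ / 2) := by
    nlinarith [sin_sq_add_cos_sq (θ / 2), sin_sq_add_cos_sq (ψ / 2), sq_nonneg (sin (θ / 2) - sin (ψ / 2)),
      sq_nonneg (cos (θ / 2)), sq_nonneg (cos (ψ / 2))]
  have hm : 0 < θ + |θ - ψ| := by linarith [abs_nonneg (θ - ψ), hθ.1]
  rw [VV]
  refine (mul_le_mul k1 k2 (rpow_nonneg hA _) (by positivity)).trans (le_of_eq ?_)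
  rw [mul_inv]; ring

lemma sin_le_mk {x m k : ℝ} (hx : x ∈ Ioo (0 : ℝ) π) (h1 : x ≤ m) (h2 : π - x ≤ k) : sin x ≤ m * k := by
  have hx1 := hx.1
  have hx2 := hx.2
  have hpi := pi_gt_three
  rcases le_total x (π / 2) with h | h
  · have := sin_le hx1.le
    nlinarith
  · have := sin_le (x := π - x) (by linarith)
    rw [sin_pi_sub] at this
    nlinarith

lemma d0_symm (θ ψ : ℝ) : d0 θ ψ = d0 ψ θ := by
  rw [d0, d0, ← cos_neg]; congr 2; ring

lemma VV_symm (a b θ ψ : ℝ) : VV a b θ ψ = VV a b ψ θ := by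
  rw [VV, VV, mul_comm (cos (θ / 2)), mul_comm (sin (θ / 2))]

lemma alg1 {r E X Y C q : ℝ} (hr : 0 < r) (hX : 0 < X) (hY : 0 < Y) (hq : 0 < q) :
    q ^ 2 * (5 * r⁻¹) * (E * (X * Y * q ^ 2)⁻¹) * (C * (r * (X * Y))) = 5 * E * C := by
  field_simp

lemma alg2 {r E X Y C q : ℝ} (hr : 0 < r) (hX : 0 < X) (hY : 0 < Y) (hq : 0 < q) :
    q * (5 * r⁻¹) * (E * (X * Y * q ^ 2)⁻¹) * (q * (C * (r * (X * Y)))) = 5 * E * C := by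
  field_simp

lemma alg3 {r E X Y C q : ℝ} (hr : 0 < r) (hX : 0 < X) (hY : 0 < Y) (hq : 0 < q) :
    q ^ 2 * (20 * (r⁻¹) ^ 2) * (E * (X * Y * q ^ 2)⁻¹) * (r * (C * (r * (X * Y)))) = 20 * E * C := by
  field_simp

set_option maxHeartbeats 1000000 in
lemma final_bound {α β : ℝ} (hα : -1 < α) (hβ : -1 < β) : ∃ C : ℝ, 0 < C ∧ ∀ θ ∈ Ioo (0 : ℝ) π, ∀ ψ ∈ Ioo (0 : ℝ) π, θ ≠ ψ →
    ∀ σ₁ σ₂ : ℝ, 0 < σ₁ → 0 < σ₂ → σ₁ ≤ (θ + |θ - ψ|) * (π - θ + |θ - ψ|) → σ₂ ≤ (θ + |θ - ψ|) * (π - θ + |θ - ψ|) →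
    σ₁ * σ₂ * (√(d0 θ ψ))⁻¹ * VV (α + 1) (β + 1) θ ψ ≤ C / (ballMeasure α β θ |θ - ψ|).toReal ∧
    σ₂ * (√(d0 θ ψ))⁻¹ * VV (α + 1) (β + 1) θ ψ + σ₁ * σ₂ * (d0 θ ψ)⁻¹ * VV (α + 1) (β + 1) θ ψ ≤
      C / (|θ - ψ| * (ballMeasure α β θ |θ - ψ|).toReal) := by
  obtain ⟨C1, hC1, H1⟩ := ball_le hα hβ
  set E : ℝ := 80 ^ (α + 1 + 1 / 2) * 80 ^ (β + 1 + 1 / 2) with hE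
  have hE0 : 0 < E := by positivity
  refine ⟨25 * E * C1, by positivity, fun θ hθ ψ hψ hne σ₁ σ₂ h1 h2 h3 h4 => ?_⟩
  have hθI := Ioo_subset_Icc_self hθ
  have hψI := Ioo_subset_Icc_self hψ
  have hd := d0_pos hθI hψI hne
  have hd2 := d0_lower hθI hψI
  have hVp := VV_pos (a := α + 1) (b := β + 1) hθI hψI hne
  have hr0 : 0 < |θ - ψ| := abs_pos.2 (sub_ne_zero.2 hne)
  have hrpi : |θ - ψ| < π := by rw [abs_lt]; constructor <;> linarith [hθ.1, hθ.2, hψ.1, hψ.2]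
  have hV := VV_le (a := α + 1) (b := β + 1) (by linarith) (by linarith) hθ hψ
  have hB := H1 θ |θ - ψ| hθ hr0 hrpi
  have hBp := ball_pos (α := α) (β := β) hθ hr0
  rw [← sq_abs] at hd2
  set r := |θ - ψ| with hr
  set V := VV (α + 1) (β + 1) θ ψ with hVdef
  set m := θ + r with hm
  set k := π - θ + r with hk
  have hm0 : 0 < m := by linarith [hθ.1]
  have hk0 : 0 < k := by linarith [hθ.2]
  have em : m ^ (2 * (α + 1 + 1 / 2)) = m ^ (2 * α + 1) * m ^ 2 := by
    rw [← rpow_two, ← rpow_add hm0]; congr 1; ring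
  have ek : k ^ (2 * (β + 1 + 1 / 2)) = k ^ (2 * β + 1) * k ^ 2 := by
    rw [← rpow_two, ← rpow_add hk0]; congr 1; ring
  rw [em, ek] at hV
  have pX := rpow_pos_of_pos hm0 (2 * α + 1)
  have pY := rpow_pos_of_pos hk0 (2 * β + 1)
  set X := m ^ (2 * α + 1)
  set Y := k ^ (2 * β + 1)
  have hmu : (ballMeasure α β θ r).toReal ≤ C1 * (r * (X * Y)) := ENNReal.toReal_le_of_le_ofReal (by positivity) hB
  have hmu0 : 0 < (ballMeasure α β θ r).toReal :=
    ENNReal.toReal_pos hBp (hB.trans_lt ENNReal.ofReal_lt_top).ne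
  set μ := (ballMeasure α β θ r).toReal
  have hV2 : V ≤ E * (X * Y * (m * k) ^ 2)⁻¹ := hV.trans (le_of_eq (by congr 2; ring))
  have hmk : 0 < m * k := by positivity
  have hrm : r ≤ m * k := by
    have := pi_gt_three
    rcases le_total θ (π / 2) with h | h
    · nlinarith [hθ.1]
    · nlinarith [hθ.2]
  have hS : (√(d0 θ ψ))⁻¹ ≤ 5 * r⁻¹ := by
    have : r / 5 ≤ √(d0 θ ψ) := le_sqrt_of_sq_le (by nlinarith)
    calc _ ≤ (r / 5)⁻¹ := inv_anti₀ (by positivity) this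
      _ = _ := by rw [inv_div]; ring
  have hD : (d0 θ ψ)⁻¹ ≤ 20 * (r⁻¹) ^ 2 := by
    calc _ ≤ (r ^ 2 / 20)⁻¹ := inv_anti₀ (by positivity) hd2
      _ = _ := by rw [inv_div]; ring
  have hS0 : 0 ≤ (√(d0 θ ψ))⁻¹ := by positivity
  have hD0 : 0 ≤ (d0 θ ψ)⁻¹ := by positivity
  have hσ : σ₁ * σ₂ ≤ (m * k) ^ 2 := by rw [sq]; exact mul_le_mul h3 h4 h2.le hmk.le
  constructor
  · rw [le_div_iff₀ hmu0]
    calc σ₁ * σ₂ * (√(d0 θ ψ))⁻¹ * V * μ ≤ (m * k) ^ 2 * (5 * r⁻¹) * (E * (X * Y * (m * k) ^ 2)⁻¹) * (C1 * (r * (X * Y))) := by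
          refine mul_le_mul (mul_le_mul (mul_le_mul hσ hS hS0 (by positivity)) hV2 hVp.le (by positivity)) hmu hmu0.le (by positivity)
      _ = 5 * E * C1 := alg1 hr0 pX pY hmk
      _ ≤ _ := by nlinarith [mul_pos hE0 hC1]
  · rw [le_div_iff₀ (by positivity)]
    have t1 : σ₂ * (√(d0 θ ψ))⁻¹ * V * (r * μ) ≤ 5 * E * C1 := by
      calc _ ≤ (m * k) * (5 * r⁻¹) * (E * (X * Y * (m * k) ^ 2)⁻¹) * (m * k * (C1 * (r * (X * Y)))) := by
            refine mul_le_mul (mul_le_mul (mul_le_mul h4 hS hS0 (by positivity)) hV2 hVp.le (by positivity)) 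
              (mul_le_mul hrm hmu hmu0.le (by positivity)) (by positivity) (by positivity)
        _ = 5 * E * C1 := alg2 hr0 pX pY hmk
    have t2 : σ₁ * σ₂ * (d0 θ ψ)⁻¹ * V * (r * μ) ≤ 20 * E * C1 := by
      calc _ ≤ (m * k) ^ 2 * (20 * (r⁻¹) ^ 2) * (E * (X * Y * (m * k) ^ 2)⁻¹) * (r * (C1 * (r * (X * Y)))) := by
            refine mul_le_mul (mul_le_mul (mul_le_mul hσ hD hD0 (by positivity)) hV2 hVp.le (by positivity)) 
              (mul_le_mul le_rfl hmu hmu0.le (by positivity)) (by positivity) (by positivity)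
        _ = 20 * E * C1 := alg3 hr0 pX pY hmk
    rw [add_mul]
    linarith

end JK

theorem lapKer_standard_estimates (α β : ℝ) (hα : -1 < α) (hβ : -1 < β) :
    ∃ C : ℝ, 0 < C ∧ ∀ φfun : ℝ → ℝ, ∀ Cφ : ℝ, (∀ t : ℝ, 0 < t → |φfun t| ≤ Cφ) →
      ∀ θ ∈ Ioo (0 : ℝ) π, ∀ ψ ∈ Ioo (0 : ℝ) π, θ ≠ ψ →
        |lapKer α β φfun θ ψ| ≤ C * Cφ / (ballMeasure α β θ |θ - ψ|).toReal ∧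
        |deriv (fun θ' => lapKer α β φfun θ' ψ) θ| +
            |deriv (fun ψ' => lapKer α β φfun θ ψ') ψ| ≤
          C * Cφ / (|θ - ψ| * (ballMeasure α β θ |θ - ψ|).toReal) := by
  obtain ⟨C1, hC1, H1⟩ := JK.lap_le hα hβ
  obtain ⟨C2, hC2, H2⟩ := JK.final_bound hα hβ
  refine ⟨2 * (C1 + 1) * C2, by positivity, fun φ M hφ θ hθ ψ hψ hne => ?_⟩
  have hM : 0 ≤ M := (abs_nonneg _).trans (hφ 1 one_pos)
  have hsθ : 0 < sin θ := sin_pos_of_mem_Ioo hθ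
  have hsψ : 0 < sin ψ := sin_pos_of_mem_Ioo hψ
  have hr1 := le_abs_self (θ - ψ)
  have hr2 := neg_abs_le (θ - ψ)
  have s1 : sin θ ≤ (θ + |θ - ψ|) * (π - θ + |θ - ψ|) :=
    JK.sin_le_mk hθ (by linarith [abs_nonneg (θ - ψ)]) (by linarith [abs_nonneg (θ - ψ)])
  have s2 : sin ψ ≤ (θ + |θ - ψ|) * (π - θ + |θ - ψ|) :=
    JK.sin_le_mk hψ (by linarith) (by linarith)
  obtain ⟨a1, a2⟩ := H1 φ M hφ θ hθ ψ hψ hne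
  obtain ⟨b1, b2⟩ := H1 φ M hφ ψ hψ θ hθ hne.symm
  obtain ⟨c1, c2⟩ := H2 θ hθ ψ hψ hne (sin θ) (sin ψ) hsθ hsψ s1 s2
  obtain ⟨d1, d2⟩ := H2 θ hθ ψ hψ hne (sin ψ) (sin θ) hsψ hsθ s2 s1
  rw [JK.d0_symm ψ θ, JK.VV_symm _ _ ψ θ] at b2
  have esym : (fun ψ' => lapKer α β φ θ ψ') = fun ψ' => lapKer α β φ ψ' θ := by
    ext ψ'; exact JK.lapKer_symm hα hβ φ θ ψ'
  have hCM : 0 ≤ C1 * M := by positivity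
  constructor
  · have e := a1.trans (mul_le_mul_of_nonneg_left c1 hCM)
    refine e.trans ?_
    rw [← mul_div_assoc]
    refine div_le_div_of_nonneg_right ?_ ENNReal.toReal_nonneg
    nlinarith [mul_nonneg hM hC2.le, mul_nonneg hCM hC2.le]
  · rw [esym]
    have e1 := a2.trans (mul_le_mul_of_nonneg_left c2 hCM)
    have e2 := b2.trans (mul_le_mul_of_nonneg_left d2 hCM)
    refine (add_le_add e1 e2).trans ?_
    rw [← mul_div_assoc, ← add_div]
    refine div_le_div_of_nonneg_right ?_ (mul_nonneg (abs_nonneg _) ENNReal.toReal_nonneg)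
    nlinarith [mul_nonneg hM hC2.le, mul_nonneg hCM hC2.le]

end
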